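/- There exist a constant c > 0 and a threshold d₀ ∈ ℕ such that for every dimension d ≥ d₀, every M ≥ 1, and every M-bit memory-constrained deterministic first-order algorithm that, using T queries, is guaranteed to minimize 1-Lipschitz convex functions over the unit ball of ℝ^d with accuracy ε = 1/d⁴, one has T ≥ c · d^{5/3} / ((M + log d)^{1/3} · (log d)^{5/3}). -/

import Mathlib

open scoped RealInnerProductSpace

/-- An `M`-bit memory-constrained deterministic algorithm interacting with an oracle
with query space `S` and response space `R`: a query function and an update function. -/
structure MemAlg (M : ℕ) (S R : Type) where
  query : (Fin M → Bool) → S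
  update : (Fin M → Bool) → S → R → (Fin M → Bool)

namespace MemAlg

variable {M : ℕ} {S R : Type}

/-- The memory state after `t` iterations, interacting with the oracle `O`;
the initial memory state is `0^M`. -/
def mem (alg : MemAlg M S R) (O : S → R) : ℕ → (Fin M → Bool)
  | 0 => fun _ => false
  | t + 1 =>
      alg.update (alg.mem O t) (alg.query (alg.mem O t)) (O (alg.query (alg.mem O t)))

/-- The output of the algorithm after `T` queries: its last query
`q_T = ψ_query (Memory_{T-1})`. -/
def output (alg : MemAlg M S R) (O : S → R) (T : ℕ) : S :=
  alg.query (alg.mem O (T - 1))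

end MemAlg

/-- `O` is a first-order oracle for `f`: it returns the value of `f` together with a
subgradient of `f` at the query point. -/
def IsFirstOrderOracle {d : ℕ} (f : EuclideanSpace ℝ (Fin d) → ℝ)
    (O : EuclideanSpace ℝ (Fin d) → ℝ × EuclideanSpace ℝ (Fin d)) : Prop :=
  ∀ x, (O x).1 = f x ∧ ∀ y, f x + ⟪(O x).2, y - x⟫ ≤ f y

/-- The algorithm `alg`, using `T` queries, is guaranteed to minimize `1`-Lipschitz convex
functions over the unit ball of `ℝ^d` with accuracy `ε`: for every convex `1`-Lipschitz
`f` and every first-order oracle for `f`, the output lies in the unit ball and is an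
`ε`-approximate minimizer of `f` over the unit ball. -/
def MinimizesConvex {M : ℕ} (d : ℕ)
    (alg : MemAlg M (EuclideanSpace ℝ (Fin d)) (ℝ × EuclideanSpace ℝ (Fin d)))
    (T : ℕ) (ε : ℝ) : Prop :=
  ∀ f : EuclideanSpace ℝ (Fin d) → ℝ,
    ConvexOn ℝ Set.univ f → LipschitzWith 1 f →
      ∀ O : EuclideanSpace ℝ (Fin d) → ℝ × EuclideanSpace ℝ (Fin d),
        IsFirstOrderOracle f O →
          alg.output O T ∈ Metric.closedBall (0 : EuclideanSpace ℝ (Fin d)) 1 ∧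
          ∀ x ∈ Metric.closedBall (0 : EuclideanSpace ℝ (Fin d)) 1,
            f (alg.output O T) ≤ f x + ε

/-!
The hard functions, after Blanchard, Zhang and Jaillet, are maxima of `‖x‖ - 1`, of walls
`|⟪a, x⟫| - η` over `d / 16` hidden rows `a`, and of pieces `η * (⟪v j, x⟫ - offset j)`, where `j`
runs through `P` periods of `k` pieces each. The direction `v j` is almost orthogonal to the earlier
queries, so that the piece is invisible until the algorithm makes an exploratory query: a point
which is almost orthogonal to all the rows and robustly independent of the exploratory queries of
the same period. A successful algorithm must discover every piece.

If it does so within `P * (d / 32)` queries, some period takes at most `d / 32` of them. The memory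
at the start of this period, together with the responses given during it, then determines `k`
robustly independent vectors almost orthogonal to all the rows, although at least half of the rows
do not appear in these responses. By anticoncentration, a random row is almost orthogonal to all `k`
vectors with probability at most `exp (-k)`, so this happens for too few choices of the rows as soon
as `k * d` exceeds a multiple of `M * log d`. Hence `T` is at least of order `P * d`, where `P` is
limited only by `P ^ 3 * k * log d ≲ d`, which is what the existence of the directions `v j`
requires.

An algorithm being an arbitrary function, the sets of rows and directions which lead to a given
behaviour need not be measurable. Rows and directions therefore range over finite sets, a grid and
the normalised differences of sign vectors, and probabilities are replaced by counting.
-/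

/-- A first-order oracle answers a query by a function value and a vector. -/
abbrev FirstOrderOracle (E : Type*) := E → ℝ × E

section Max

variable {E : Type*}

open Classical in
/-- The pointwise maximum of two oracles; ties are resolved in favour of the first one, so that
a later piece stays invisible until it strictly exceeds the earlier ones. -/
noncomputable def oracleMax (O₁ O₂ : FirstOrderOracle E) : FirstOrderOracle E :=
  fun x => if (O₂ x).1 ≤ (O₁ x).1 then O₁ x else O₂ x

/-- The pointwise maximum of the oracle `B` and a list of oracles, with ties resolved in favour
of the earliest piece. -/
noncomputable def oracleListMax (B : FirstOrderOracle E) (l : List (FirstOrderOracle E)) :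
    FirstOrderOracle E :=
  l.foldl oracleMax B

lemma oracleMax_fst (O₁ O₂ : FirstOrderOracle E) (x : E) :
    (oracleMax O₁ O₂ x).1 = max (O₁ x).1 (O₂ x).1 := by
  unfold oracleMax
  split_ifs with h
  · exact (max_eq_left h).symm
  · exact (max_eq_right (not_le.1 h).le).symm

lemma oracleMax_eq_left {O₁ O₂ : FirstOrderOracle E} {x : E} (h : (O₂ x).1 ≤ (O₁ x).1) :
    oracleMax O₁ O₂ x = O₁ x :=
  if_pos h

lemma oracleMax_eq_or (O₁ O₂ : FirstOrderOracle E) (x : E) :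
    oracleMax O₁ O₂ x = O₁ x ∨ oracleMax O₁ O₂ x = O₂ x :=
  ite_eq_or_eq _ _ _

variable {B : FirstOrderOracle E} {l l' : List (FirstOrderOracle E)} {x : E}

lemma oracleListMax_fst_le_iff {b : ℝ} :
    (oracleListMax B l x).1 ≤ b ↔ (B x).1 ≤ b ∧ ∀ O ∈ l, (O x).1 ≤ b := by
  induction l generalizing B with
  | nil => simp [oracleListMax]
  | cons O l ih =>
    rw [oracleListMax, List.foldl_cons, ← oracleListMax, ih, oracleMax_fst, max_le_iff,
      List.forall_mem_cons, and_assoc]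

lemma fst_le_oracleListMax {O : FirstOrderOracle E} (hO : O ∈ l) :
    (O x).1 ≤ (oracleListMax B l x).1 :=
  (oracleListMax_fst_le_iff.1 le_rfl).2 O hO

lemma oracleListMax_append :
    oracleListMax B (l ++ l') = oracleListMax (oracleListMax B l) l' :=
  List.foldl_append

lemma oracleListMax_eq_base (h : ∀ O ∈ l, (O x).1 ≤ (B x).1) : oracleListMax B l x = B x := by
  induction l using List.reverseRecOn with
  | nil => rfl
  | append_singleton l O ih =>
    have hl := ih fun O' hO' => h O' (List.mem_append_left _ hO')
    rw [oracleListMax_append, ← hl]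
    exact oracleMax_eq_left (hl ▸ h O (by simp))

lemma oracleListMax_append_eq_left (h : ∀ O ∈ l', (O x).1 ≤ (oracleListMax B l x).1) :
    oracleListMax B (l ++ l') x = oracleListMax B l x := by
  rw [oracleListMax_append]
  exact oracleListMax_eq_base h

lemma oracleListMax_eq_base_or_mem (B : FirstOrderOracle E) (l : List (FirstOrderOracle E))
    (x : E) : oracleListMax B l x = B x ∨ ∃ O ∈ l, oracleListMax B l x = O x := by
  induction l using List.reverseRecOn with
  | nil => exact .inl rfl
  | append_singleton l O ih =>
    rw [oracleListMax_append]
    rcases oracleMax_eq_or (oracleListMax B l) O x with h | h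
    · rcases ih with hB | ⟨O', hO', h'⟩
      · exact .inl (h.trans hB)
      · exact .inr ⟨O', by simp [hO'], h.trans h'⟩
    · exact .inr ⟨O, by simp, h⟩

end Max

section Subgradients

variable {E : Type*} [NormedAddCommGroup E] [InnerProductSpace ℝ E]

/-- The oracle `O` answers with subgradients, of norm at most one, of its own value function;
this value function is then convex and `1`-Lipschitz. -/
def IsUnitSubgradientOracle (O : FirstOrderOracle E) : Prop :=
  ∀ x, ‖(O x).2‖ ≤ 1 ∧ ∀ y, (O x).1 + ⟪(O x).2, y - x⟫ ≤ (O y).1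

/-- The oracle of the affine function `x ↦ ⟪w, x⟫ - c`. -/
def affineOracle (w : E) (c : ℝ) : FirstOrderOracle E :=
  fun x => (⟪w, x⟫ - c, w)

/-- The oracle of `x ↦ ‖x - c‖ - r`; at the kink `c` it returns the subgradient `0`. -/
noncomputable def distOracle (c : E) (r : ℝ) : FirstOrderOracle E :=
  fun x => (‖x - c‖ - r, ‖x - c‖⁻¹ • (x - c))

/-- The oracle of `x ↦ |⟪a, x⟫| - η`. -/
noncomputable def absOracle (η : ℝ) (a : E) : FirstOrderOracle E :=
  oracleMax (affineOracle a η) (affineOracle (-a) η)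

lemma absOracle_fst (η : ℝ) (a x : E) : (absOracle η a x).1 = |⟪a, x⟫| - η := by
  rw [absOracle, oracleMax_fst]
  simp only [affineOracle, inner_neg_left]
  rw [max_sub_sub_right, abs]

namespace IsUnitSubgradientOracle

variable {O O₁ O₂ : FirstOrderOracle E}

lemma max (h₁ : IsUnitSubgradientOracle O₁) (h₂ : IsUnitSubgradientOracle O₂) :
    IsUnitSubgradientOracle (oracleMax O₁ O₂) := by
  intro x
  simp only [oracleMax_fst O₁ O₂]
  rcases oracleMax_eq_or O₁ O₂ x with h | h <;> rw [← oracleMax_fst O₁ O₂ x, h]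
  · exact ⟨(h₁ x).1, fun y => le_max_of_le_left ((h₁ x).2 y)⟩
  · exact ⟨(h₂ x).1, fun y => le_max_of_le_right ((h₂ x).2 y)⟩

lemma listMax {B : FirstOrderOracle E} {l : List (FirstOrderOracle E)}
    (hB : IsUnitSubgradientOracle B) (hl : ∀ O ∈ l, IsUnitSubgradientOracle O) :
    IsUnitSubgradientOracle (oracleListMax B l) := by
  induction l generalizing B with
  | nil => exact hB
  | cons O l ih =>
    rw [List.forall_mem_cons] at hl
    exact ih (hB.max hl.1) hl.2

lemma affine {w : E} (hw : ‖w‖ ≤ 1) (c : ℝ) : IsUnitSubgradientOracle (affineOracle w c) := by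
  refine fun x => ⟨hw, fun y => le_of_eq ?_⟩
  simp only [affineOracle, inner_sub_right]
  ring

lemma dist (c : E) (r : ℝ) : IsUnitSubgradientOracle (distOracle c r) := by
  refine fun x => ⟨?_, fun y => ?_⟩
  · rw [distOracle, norm_smul, norm_inv, norm_norm]
    exact inv_mul_le_one
  · simp only [distOracle]
    have hsub : y - x = (y - c) - (x - c) := by abel
    rw [hsub, real_inner_smul_left, inner_sub_right, real_inner_self_eq_norm_sq]
    rcases eq_or_ne (x - c) 0 with hx | hx
    · simp [hx]
    have hpos : 0 < ‖x - c‖ := norm_pos_iff.2 hx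
    have hcs : ‖x - c‖⁻¹ * ⟪x - c, y - c⟫ ≤ ‖y - c‖ := by
      rw [inv_mul_le_iff₀ hpos]
      exact real_inner_le_norm _ _
    have hself : ‖x - c‖⁻¹ * ‖x - c‖ ^ 2 = ‖x - c‖ := by field_simp
    linarith

lemma abs {a : E} (ha : ‖a‖ ≤ 1) (η : ℝ) : IsUnitSubgradientOracle (absOracle η a) :=
  (affine ha η).max (affine ((norm_neg a).trans_le ha) η)

lemma convexOn (h : IsUnitSubgradientOracle O) : ConvexOn ℝ Set.univ fun x => (O x).1 := by
  refine ⟨convex_univ, fun x _ y _ a b ha hb hab => ?_⟩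
  simp only [smul_eq_mul]
  set z := a • x + b • y with hz
  have hcomb : a • (x - z) + b • (y - z) = 0 := by
    rw [smul_sub, smul_sub, sub_add_sub_comm, ← add_smul, hab, one_smul, hz, sub_self]
  have hinner : a * ⟪(O z).2, x - z⟫ + b * ⟪(O z).2, y - z⟫ = 0 := by
    rw [← real_inner_smul_right, ← real_inner_smul_right, ← inner_add_right, hcomb,
      inner_zero_right]
  calc (O z).1 = (a + b) * (O z).1 + (a * ⟪(O z).2, x - z⟫ + b * ⟪(O z).2, y - z⟫) := by
        rw [hab, hinner, one_mul, add_zero]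
    _ = a * ((O z).1 + ⟪(O z).2, x - z⟫) + b * ((O z).1 + ⟪(O z).2, y - z⟫) := by ring
    _ ≤ a * (O x).1 + b * (O y).1 := by gcongr <;> exact (h z).2 _

lemma lipschitzWith_one (h : IsUnitSubgradientOracle O) : LipschitzWith 1 fun x => (O x).1 := by
  refine LipschitzWith.of_le_add fun x y => ?_
  have hcs : |⟪(O x).2, y - x⟫| ≤ 1 * ‖y - x‖ :=
    (abs_real_inner_le_norm _ _).trans (by gcongr; exact (h x).1)
  rw [dist_comm, dist_eq_norm]
  linarith [(h x).2 y, neg_abs_le ⟪(O x).2, y - x⟫]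

end IsUnitSubgradientOracle

end Subgradients

lemma MinimizesConvex.output_value_le {d M T : ℕ} {ε : ℝ}
    {alg : MemAlg M (EuclideanSpace ℝ (Fin d)) (ℝ × EuclideanSpace ℝ (Fin d))}
    (h : MinimizesConvex d alg T ε) {O : FirstOrderOracle (EuclideanSpace ℝ (Fin d))}
    (hO : IsUnitSubgradientOracle O) {x : EuclideanSpace ℝ (Fin d)} (hx : ‖x‖ ≤ 1) :
    (O (alg.output O T)).1 ≤ (O x).1 + ε :=
  (h _ hO.convexOn hO.lipschitzWith_one O fun x => ⟨rfl, (hO x).2⟩).2 x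
    (mem_closedBall_zero_iff.2 hx)

lemma MemAlg.mem_eq_of_forall_query_eq {M : ℕ} {S R : Type} {alg : MemAlg M S R} {O O' : S → R}
    {t : ℕ} (h : ∀ s < t, O' (alg.query (alg.mem O s)) = O (alg.query (alg.mem O s))) :
    ∀ s ≤ t, alg.mem O' s = alg.mem O s := by
  intro s hs
  induction s with
  | zero => rfl
  | succ s ih => rw [MemAlg.mem, MemAlg.mem, ih (by omega), h s (by omega)]

section Resisting

lemma exists_norm_eq_one_forall_inner_eq_zero {E : Type*} [NormedAddCommGroup E]
    [InnerProductSpace ℝ E] [FiniteDimensional ℝ E] (S : Finset E)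
    (hS : S.card < Module.finrank ℝ E) : ∃ w : E, ‖w‖ = 1 ∧ ∀ x ∈ S, ⟪w, x⟫ = 0 := by
  have hspan : Module.finrank ℝ (Submodule.span ℝ (S : Set E)) ≤ S.card :=
    finrank_span_finset_le_card S
  have hadd := Submodule.finrank_add_finrank_orthogonal (Submodule.span ℝ (S : Set E))
  have hne : (Submodule.span ℝ (S : Set E))ᗮ ≠ ⊥ := by
    intro h
    rw [h, finrank_bot] at hadd
    omega
  obtain ⟨w, hw, hw0⟩ := Submodule.exists_mem_ne_zero_of_ne_bot hne
  refine ⟨‖w‖⁻¹ • w, ?_, fun x hx => ?_⟩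
  · rw [norm_smul, norm_inv, norm_norm, inv_mul_cancel₀ (norm_ne_zero_iff.2 hw0)]
  · rw [real_inner_smul_left, Submodule.inner_left_of_mem_orthogonal
      (Submodule.subset_span hx) hw, mul_zero]

variable {E : Type} [NormedAddCommGroup E] [InnerProductSpace ℝ E]

/-- The resisting oracle of the function `max (‖x‖ - 1) (max_{i < t} ⟪w i, x⟫)`. -/
noncomputable def resistingOracle (w : ℕ → E) (t : ℕ) : FirstOrderOracle E :=
  oracleListMax (distOracle 0 1) ((List.range t).map fun i => affineOracle (w i) 0)

variable {M : ℕ} {alg : MemAlg M E (ℝ × E)} {w : ℕ → E} {t : ℕ}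

variable (alg w t) in
/-- The orthonormal vectors `w 0, …, w (t - 1)` resist the algorithm `alg`: `w i` is orthogonal to
the first `i + 1` queries made to the oracle that they define. -/
structure IsResisting : Prop where
  norm_eq_one : ∀ i < t, ‖w i‖ = 1
  inner_eq_zero : ∀ i < t, ∀ j < i, ⟪w i, w j⟫ = 0
  inner_query_eq_zero : ∀ i < t, ∀ s ≤ i,
    ⟪w i, alg.query (alg.mem (resistingOracle w t) s)⟫ = 0

lemma resistingOracle_succ (w : ℕ → E) (t : ℕ) :
    resistingOracle w (t + 1) = oracleMax (resistingOracle w t) (affineOracle (w t) 0) := by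
  rw [resistingOracle, List.range_succ, List.map_append, oracleListMax_append]
  rfl

lemma resistingOracle_congr {w' : ℕ → E} (h : ∀ i < t, w' i = w i) :
    resistingOracle w' t = resistingOracle w t := by
  refine congrArg _ (List.map_congr_left fun i hi => ?_)
  rw [h i (List.mem_range.1 hi)]

lemma inner_le_resistingOracle {i : ℕ} (hi : i < t) (x : E) :
    ⟪w i, x⟫ ≤ (resistingOracle w t x).1 := by
  calc ⟪w i, x⟫ = (affineOracle (w i) 0 x).1 := (sub_zero _).symm
    _ ≤ (resistingOracle w t x).1 := fst_le_oracleListMax <|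
      List.mem_map_of_mem (f := fun i => affineOracle (w i) 0) (List.mem_range.2 hi)

lemma IsResisting.update {u : E} (hw : IsResisting alg w t) (hu : ‖u‖ = 1)
    (huw : ∀ i < t, ⟪u, w i⟫ = 0)
    (huq : ∀ s ≤ t, ⟪u, alg.query (alg.mem (resistingOracle w t) s)⟫ = 0) :
    IsResisting alg (Function.update w t u) (t + 1) := by
  have hlt : ∀ i < t, Function.update w t u i = w i :=
    fun i hi => Function.update_of_ne hi.ne _ _
  have heq : Function.update w t u t = u := Function.update_self _ _ _
  have hO : resistingOracle (Function.update w t u) (t + 1) =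
      oracleMax (resistingOracle w t) (affineOracle u 0) := by
    rw [resistingOracle_succ, heq, resistingOracle_congr hlt]
  -- The piece `w s` already vanishes at query `s`, where the new piece `u` is therefore invisible.
  have hmem := MemAlg.mem_eq_of_forall_query_eq (alg := alg) (t := t) (O := resistingOracle w t)
    (O' := resistingOracle (Function.update w t u) (t + 1)) (fun s hs => by
      rw [hO]
      refine oracleMax_eq_left ?_
      have hle := inner_le_resistingOracle (w := w) hs (alg.query (alg.mem (resistingOracle w t) s))
      rw [hw.inner_query_eq_zero s hs s le_rfl] at hle
      simpa only [affineOracle, huq s hs.le, sub_zero] using hle)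
  constructor
  · intro i hi
    rcases Nat.lt_succ_iff_lt_or_eq.1 hi with h | rfl
    · rw [hlt i h, hw.norm_eq_one i h]
    · rw [heq, hu]
  · intro i hi j hj
    rw [hlt j (by omega)]
    rcases Nat.lt_succ_iff_lt_or_eq.1 hi with h | rfl
    · rw [hlt i h, hw.inner_eq_zero i h j hj]
    · rw [heq, huw j hj]
  · intro i hi s hs
    rw [hmem s (by omega)]
    rcases Nat.lt_succ_iff_lt_or_eq.1 hi with h | rfl
    · rw [hlt i h, hw.inner_query_eq_zero i h s hs]
    · rw [heq, huq s hs]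

lemma exists_isResisting [FiniteDimensional ℝ E] (alg : MemAlg M E (ℝ × E))
    (ht : 2 * t ≤ Module.finrank ℝ E) : ∃ w, IsResisting alg w t := by
  classical
  induction t with
  | zero => exact ⟨fun _ => 0, ⟨by simp, by simp, by simp⟩⟩
  | succ t ih =>
    obtain ⟨w, hw⟩ := ih (by omega)
    let queries := (Finset.range (t + 1)).image fun s => alg.query (alg.mem (resistingOracle w t) s)
    let directions := (Finset.range t).image w
    have hcard : (queries ∪ directions).card < Module.finrank ℝ E := by
      have hq : queries.card ≤ t + 1 := Finset.card_image_le.trans_eq (Finset.card_range _)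
      have hd : directions.card ≤ t := Finset.card_image_le.trans_eq (Finset.card_range _)
      have := Finset.card_union_le queries directions
      omega
    obtain ⟨u, hu, hux⟩ := exists_norm_eq_one_forall_inner_eq_zero _ hcard
    refine ⟨_, hw.update hu (fun i hi => hux _ ?_) (fun s hs => hux _ ?_)⟩
    · exact Finset.mem_union_right _ (Finset.mem_image_of_mem _ (Finset.mem_range.2 hi))
    · exact Finset.mem_union_left _
        (Finset.mem_image_of_mem _ (Finset.mem_range.2 (Nat.lt_succ_of_le hs)))

lemma IsResisting.orthonormal (hw : IsResisting alg w t) :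
    Orthonormal ℝ fun i : Fin t => w i := by
  refine ⟨fun i => hw.norm_eq_one i i.2, fun i j hij => ?_⟩
  rcases lt_or_gt_of_ne (Fin.val_ne_of_ne hij) with h | h
  · rw [real_inner_comm, hw.inner_eq_zero j j.2 i h]
  · exact hw.inner_eq_zero i i.2 j h

lemma isUnitSubgradientOracle_resistingOracle (hw : IsResisting alg w t) :
    IsUnitSubgradientOracle (resistingOracle w t) := by
  refine (IsUnitSubgradientOracle.dist 0 1).listMax fun O hO => ?_
  obtain ⟨i, hi, rfl⟩ := List.mem_map.1 hO
  exact .affine (hw.norm_eq_one i (List.mem_range.1 hi)).le 0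

lemma IsResisting.exists_value_le (hw : IsResisting alg w t) (ht : 1 ≤ t) :
    ∃ x : E, ‖x‖ ≤ 1 ∧ (resistingOracle w t x).1 ≤ -(1 / (2 * √t)) := by
  have hr : 1 ≤ √(t : ℝ) := Real.one_le_sqrt.2 (by exact_mod_cast ht)
  set z : E := ∑ i : Fin t, w i with hz
  have hwz : ∀ i < t, ⟪w i, z⟫ = 1 := fun i hi => by
    simpa [hz] using hw.orthonormal.inner_right_fintype (fun _ => (1 : ℝ)) ⟨i, hi⟩
  have hznorm : ‖z‖ = √t := by
    rw [norm_eq_sqrt_real_inner, hz, sum_inner, ← hz,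
      Finset.sum_congr rfl fun (i : Fin t) _ => hwz i i.2]
    simp
  have hxnorm : ‖-(1 / (2 * √(t : ℝ))) • z‖ = 1 / 2 := by
    rw [norm_smul, hznorm, norm_neg, Real.norm_of_nonneg (by positivity)]
    field_simp
  refine ⟨-(1 / (2 * √(t : ℝ))) • z, by rw [hxnorm]; norm_num,
    oracleListMax_fst_le_iff.2 ⟨?_, fun O hO => ?_⟩⟩
  · have : 1 / (2 * √(t : ℝ)) ≤ 1 / 2 := one_div_le_one_div_of_le two_pos (by linarith)
    simp only [distOracle, sub_zero, hxnorm]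
    linarith
  · obtain ⟨i, hi, rfl⟩ := List.mem_map.1 hO
    simp only [affineOracle, real_inner_smul_right, hwz i (List.mem_range.1 hi)]
    linarith

lemma MinimizesConvex.dim_lt_two_mul {d M T : ℕ} {ε : ℝ}
    {alg : MemAlg M (EuclideanSpace ℝ (Fin d)) (ℝ × EuclideanSpace ℝ (Fin d))} (hd : 2 ≤ d)
    (hε : ε < 1 / (2 * √d)) (h : MinimizesConvex d alg T ε) : d < 2 * T := by
  by_contra! hT
  obtain ⟨S, hS⟩ : ∃ S, T - 1 = S := ⟨_, rfl⟩
  obtain ⟨w, hw⟩ := exists_isResisting (t := S + 1) alg (by simp; omega)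
  obtain ⟨x, hx, hval⟩ := hw.exists_value_le (by omega)
  have hout := inner_le_resistingOracle (w := w) (Nat.lt_succ_self S)
    (alg.output (resistingOracle w (S + 1)) T)
  rw [MemAlg.output, hS, hw.inner_query_eq_zero S (Nat.lt_succ_self S) S le_rfl] at hout
  have hmin := h.output_value_le (isUnitSubgradientOracle_resistingOracle hw) hx
  rw [MemAlg.output, hS] at hmin
  have hsqrt : 1 / (2 * √(d : ℝ)) ≤ 1 / (2 * √((S + 1 : ℕ) : ℝ)) := by
    have : 0 < √((S + 1 : ℕ) : ℝ) := Real.sqrt_pos.2 (by positivity)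
    gcongr
    omega
  linarith

end Resisting

section SignVectors

open scoped Finset

variable {d : ℕ}

/-- The vector with entries `±1` encoded by `g`. -/
noncomputable def signVec (g : Fin d → Bool) : EuclideanSpace ℝ (Fin d) :=
  WithLp.toLp 2 fun i => if g i then (1 : ℝ) else -1

lemma signVec_apply (g : Fin d → Bool) (i : Fin d) : signVec g i = if g i then 1 else -1 := rfl

lemma norm_signVec (g : Fin d → Bool) : ‖signVec g‖ = √d := by
  have hsq : ∀ i, ‖signVec g i‖ ^ 2 = 1 := fun i => by
    rw [signVec_apply]
    split_ifs <;> simp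
  rw [EuclideanSpace.norm_eq, Finset.sum_congr rfl fun i _ => hsq i]
  simp

lemma two_le_norm_signVec_sub {g g' : Fin d → Bool} (h : g ≠ g') :
    2 ≤ ‖signVec g - signVec g'‖ := by
  obtain ⟨i, hi⟩ := Function.ne_iff.1 h
  have hcoord := PiLp.norm_apply_le (signVec g - signVec g') i
  refine le_trans ?_ hcoord
  rw [PiLp.sub_apply, signVec_apply, signVec_apply]
  cases hg : g i <;> cases hg' : g' i <;> simp_all <;> norm_num

lemma MinimizesConvex.dim_le_memory {M T : ℕ} {ε : ℝ}
    {alg : MemAlg M (EuclideanSpace ℝ (Fin d)) (ℝ × EuclideanSpace ℝ (Fin d))}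
    (hε : ε < 1 / √d) (h : MinimizesConvex d alg T ε) : d ≤ M := by
  by_contra! hM
  have hd : 0 < √(d : ℝ) := Real.sqrt_pos.2 (by exact_mod_cast (Nat.zero_le M).trans_lt hM)
  let c : (Fin d → Bool) → EuclideanSpace ℝ (Fin d) := fun g => (√d)⁻¹ • signVec g
  have hc : ∀ g, ‖c g‖ = 1 := fun g => by
    rw [norm_smul, norm_signVec, norm_inv, Real.norm_of_nonneg hd.le, inv_mul_cancel₀ hd.ne']
  -- Two centres that lead to the same final memory state receive the same output.
  obtain ⟨g, g', hne, heq⟩ := Fintype.exists_ne_map_eq_of_card_lt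
    (fun g : Fin d → Bool => alg.mem (distOracle (c g) 0) (T - 1))
    (by simpa using Nat.pow_lt_pow_right one_lt_two hM)
  have hg := h.output_value_le (IsUnitSubgradientOracle.dist (c g) 0) (hc g).le
  have hg' := h.output_value_le (IsUnitSubgradientOracle.dist (c g') 0) (hc g').le
  simp only [MemAlg.output] at hg hg' heq
  rw [← heq] at hg'
  simp only [distOracle, sub_self, norm_zero, sub_zero, zero_add] at hg hg'
  set y := alg.query (alg.mem (distOracle (c g) 0) (T - 1))
  have hfar : 2 / √d ≤ ‖c g - c g'‖ := by
    rw [← smul_sub, norm_smul, norm_inv, Real.norm_of_nonneg hd.le, div_eq_inv_mul]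
    gcongr
    exact two_le_norm_signVec_sub hne
  have hclose : ‖c g - c g'‖ ≤ 2 * ε := by
    rw [← sub_sub_sub_cancel_left (c g') (c g) y]
    exact (norm_sub_le _ _).trans (by linarith)
  rw [← mul_one_div] at hfar
  linarith

lemma sum_exp_inner_signVec_le (x : EuclideanSpace ℝ (Fin d)) (c : ℝ) :
    ∑ g : Fin d → Bool, Real.exp (c * ⟪signVec g, x⟫) ≤
      2 ^ d * Real.exp (c ^ 2 * ‖x‖ ^ 2 / 2) := by
  have hprod : ∀ g : Fin d → Bool, Real.exp (c * ⟪signVec g, x⟫) =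
      ∏ i, Real.exp (c * x i * if g i then 1 else -1) := fun g => by
    rw [← Real.exp_sum, PiLp.inner_apply, Finset.mul_sum]
    refine congrArg _ (Finset.sum_congr rfl fun i _ => ?_)
    simp only [signVec_apply, RCLike.inner_apply, conj_trivial]
    ring
  have hcoord : ∀ i, ∑ b : Bool, Real.exp (c * x i * if b then 1 else -1) ≤
      2 * Real.exp (c ^ 2 * x i ^ 2 / 2) := fun i => by
    have hcosh := Real.cosh_le_exp_half_sq (c * x i)
    rw [Real.cosh_eq, mul_pow] at hcosh
    simp only [Fintype.sum_bool, if_true, mul_one, Bool.false_eq_true, if_false, mul_neg]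
    linarith
  calc ∑ g : Fin d → Bool, Real.exp (c * ⟪signVec g, x⟫)
      = ∏ i, ∑ b : Bool, Real.exp (c * x i * if b then 1 else -1) := by
        rw [Finset.sum_congr rfl fun g _ => hprod g, Finset.prod_univ_sum,
          Fintype.piFinset_univ]
    _ ≤ ∏ i, 2 * Real.exp (c ^ 2 * x i ^ 2 / 2) :=
        Finset.prod_le_prod (fun i _ => by positivity) fun i _ => hcoord i
    _ = 2 ^ d * Real.exp (c ^ 2 * ‖x‖ ^ 2 / 2) := by
        rw [Finset.prod_mul_distrib, ← Real.exp_sum, EuclideanSpace.norm_sq_eq, Finset.mul_sum,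
          Finset.sum_div]
        simp

lemma card_le_inner_signVec_le (x : EuclideanSpace ℝ (Fin d)) {t : ℝ} (ht : 0 ≤ t) :
    (#{g : Fin d → Bool | t ≤ ⟪signVec g, x⟫} : ℝ) ≤
      2 ^ d * Real.exp (-(t ^ 2 / (2 * ‖x‖ ^ 2))) := by
  rcases eq_or_ne x 0 with rfl | hx
  · have hall : #{g : Fin d → Bool | t ≤ ⟪signVec g, (0 : EuclideanSpace ℝ (Fin d))⟫} ≤ 2 ^ d :=
      (Finset.card_le_univ _).trans_eq (by simp)
    simpa using (by exact_mod_cast hall :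
      (#{g : Fin d → Bool | t ≤ ⟪signVec g, (0 : EuclideanSpace ℝ (Fin d))⟫} : ℝ) ≤ 2 ^ d)
  have : 0 < ‖x‖ := norm_pos_iff.2 hx
  set c := t / ‖x‖ ^ 2 with hc
  have hmarkov : (#{g : Fin d → Bool | t ≤ ⟪signVec g, x⟫} : ℝ) * Real.exp (c * t) ≤
      ∑ g : Fin d → Bool, Real.exp (c * ⟪signVec g, x⟫) := by
    rw [← nsmul_eq_mul]
    refine (Finset.card_nsmul_le_sum _ (fun g => Real.exp (c * ⟪signVec g, x⟫)) _
      fun g hg => ?_).trans (Finset.sum_le_sum_of_subset_of_nonneg (Finset.filter_subset _ _)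
        fun _ _ _ => (Real.exp_pos _).le)
    have := (Finset.mem_filter.1 hg).2
    gcongr
  have hchernoff := hmarkov.trans (sum_exp_inner_signVec_le x c)
  rw [← le_div_iff₀ (Real.exp_pos _), mul_div_assoc, ← Real.exp_sub] at hchernoff
  refine hchernoff.trans_eq ?_
  congr 2
  rw [hc]
  field_simp
  ring

lemma card_lt_abs_inner_signVec_le (x : EuclideanSpace ℝ (Fin d)) {t : ℝ} (ht : 0 ≤ t) :
    (#{g : Fin d → Bool | t < |⟪signVec g, x⟫|} : ℝ) ≤
      2 * (2 ^ d * Real.exp (-(t ^ 2 / (2 * ‖x‖ ^ 2)))) := by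
  have hsub : ({g | t < |⟪signVec g, x⟫|} : Finset (Fin d → Bool)) ⊆
      Finset.univ.filter (fun g => t ≤ ⟪signVec g, x⟫) ∪
        Finset.univ.filter (fun g => t ≤ ⟪signVec g, -x⟫) := fun g hg => by
    simp only [Finset.mem_filter, Finset.mem_union, Finset.mem_univ, true_and,
      inner_neg_right] at hg ⊢
    exact (lt_abs.1 hg).imp le_of_lt le_of_lt
  have hcard : (#{g : Fin d → Bool | t < |⟪signVec g, x⟫|} : ℝ) ≤
      #{g : Fin d → Bool | t ≤ ⟪signVec g, x⟫} + #{g : Fin d → Bool | t ≤ ⟪signVec g, -x⟫} := by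
    exact_mod_cast (Finset.card_le_card hsub).trans (Finset.card_union_le _ _)
  have hpos := card_le_inner_signVec_le x ht
  have hneg := card_le_inner_signVec_le (-x) ht
  rw [norm_neg] at hneg
  linarith

lemma card_norm_signVec_sub_sq_le (hd : 1 ≤ d) (u : EuclideanSpace ℝ (Fin d)) :
    (#{g : Fin d → Bool | ‖signVec g - u‖ ^ 2 ≤ d / 2} : ℝ) ≤ 2 ^ d * Real.exp (-(d / 4)) := by
  have hd' : (1 : ℝ) ≤ d := by exact_mod_cast hd
  have hexpand : ∀ g : Fin d → Bool, ‖signVec g - u‖ ^ 2 = d - 2 * ⟪signVec g, u⟫ + ‖u‖ ^ 2 :=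
    fun g => by rw [norm_sub_sq_real, norm_signVec, Real.sq_sqrt (by positivity)]
  rcases eq_or_ne u 0 with rfl | hu
  · have hempty : ({g | ‖signVec g - 0‖ ^ 2 ≤ (d : ℝ) / 2} : Finset (Fin d → Bool)) = ∅ := by
      refine Finset.filter_eq_empty_iff.2 fun g _ h => ?_
      rw [hexpand, inner_zero_right, norm_zero] at h
      linarith
    rw [hempty]
    simp only [Finset.card_empty, Nat.cast_zero]
    positivity
  have : 0 < ‖u‖ := norm_pos_iff.2 hu
  set t := ((d : ℝ) / 2 + ‖u‖ ^ 2) / 2 with ht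
  calc (#{g : Fin d → Bool | ‖signVec g - u‖ ^ 2 ≤ d / 2} : ℝ)
      ≤ #{g : Fin d → Bool | t ≤ ⟪signVec g, u⟫} := by
        refine Nat.cast_le.2 (Finset.card_le_card (Finset.monotone_filter_right _ fun g _ h => ?_))
        simp only [hexpand] at h
        linarith
    _ ≤ 2 ^ d * Real.exp (-(t ^ 2 / (2 * ‖u‖ ^ 2))) :=
        card_le_inner_signVec_le u (by positivity)
    _ ≤ 2 ^ d * Real.exp (-(d / 4)) := by
        refine mul_le_mul_of_nonneg_left (Real.exp_le_exp.2 (neg_le_neg ?_)) (by positivity)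
        rw [le_div_iff₀ (by positivity), ht]
        nlinarith only [sq_nonneg ((d : ℝ) / 2 - ‖u‖ ^ 2)]

lemma half_le_card_forall_abs_inner_signVec_le (hd : 1 ≤ d)
    (X : Finset (EuclideanSpace ℝ (Fin d))) {κ : ℝ} (hκ : 0 ≤ κ)
    (hX : 4 * (#X : ℝ) ≤ Real.exp (κ ^ 2 * d / 2)) :
    (2 : ℝ) ^ d / 2 ≤ #{g : Fin d → Bool | ∀ x ∈ X, |⟪signVec g, x⟫| ≤ κ * √d * ‖x‖} := by
  have : (1 : ℝ) ≤ d := by exact_mod_cast hd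
  set e := Real.exp (-(κ ^ 2 * d / 2)) with he
  have hatypical : ∀ x ∈ X, (#{g : Fin d → Bool | κ * √d * ‖x‖ < |⟪signVec g, x⟫|} : ℝ) ≤
      2 * (2 ^ d * e) := fun x _ => by
    rcases eq_or_ne x 0 with rfl | hx
    · simp only [norm_zero, mul_zero, inner_zero_right, abs_zero, lt_irrefl, Finset.filter_false,
        Finset.card_empty, Nat.cast_zero]
      positivity
    have : 0 < ‖x‖ := norm_pos_iff.2 hx
    refine (card_lt_abs_inner_signVec_le x (by positivity)).trans_eq ?_
    rw [he, mul_pow, mul_pow, Real.sq_sqrt (by positivity)]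
    congr 4
    field_simp
  have hunion : (#{g : Fin d → Bool | ¬∀ x ∈ X, |⟪signVec g, x⟫| ≤ κ * √d * ‖x‖} : ℝ) ≤
      #X * (2 * (2 ^ d * e)) := by
    have hsub : ({g | ¬∀ x ∈ X, |⟪signVec g, x⟫| ≤ κ * √d * ‖x‖} : Finset (Fin d → Bool)) ⊆
        X.biUnion fun x => {g | κ * √d * ‖x‖ < |⟪signVec g, x⟫|} := fun g hg => by
      simpa only [Finset.mem_biUnion, Finset.mem_filter, Finset.mem_univ, true_and, not_forall,
        not_le, exists_prop] using hg
    refine (Nat.cast_le.2 ((Finset.card_le_card hsub).trans Finset.card_biUnion_le)).trans ?_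
    rw [Nat.cast_sum, ← nsmul_eq_mul]
    exact Finset.sum_le_card_nsmul _ _ _ hatypical
  have hXe : (#X : ℝ) * e ≤ 1 / 4 := by
    rw [he, Real.exp_neg, ← div_eq_mul_inv, div_le_iff₀ (Real.exp_pos _)]
    linarith
  have hsplit : (#{g : Fin d → Bool | ∀ x ∈ X, |⟪signVec g, x⟫| ≤ κ * √d * ‖x‖} : ℝ) +
      #{g : Fin d → Bool | ¬∀ x ∈ X, |⟪signVec g, x⟫| ≤ κ * √d * ‖x‖} = 2 ^ d := by
    exact_mod_cast (Finset.card_filter_add_card_filter_not _).trans (by simp)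
  nlinarith only [hunion, hXe, hsplit, show (0 : ℝ) < 2 ^ d by positivity]

end SignVectors

section Separation

open scoped Finset

open Classical in
lemma exists_separated_cover {α : Type*} {r : α → α → Prop} (hrefl : ∀ a, r a a)
    (hsymm : ∀ a b, r a b → r b a) (G : Finset α) :
    ∃ S ⊆ G, (S : Set α).Pairwise (fun a b => ¬r a b) ∧ ∀ a ∈ G, ∃ b ∈ S, r a b := by
  obtain ⟨S, hS⟩ := Finset.exists_maximal
    (s := G.powerset.filter fun S : Finset α => (S : Set α).Pairwise fun a b => ¬r a b) ⟨∅, by simp⟩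
  obtain ⟨hSG, hsep⟩ := by simpa only [Finset.mem_filter, Finset.mem_powerset] using hS.prop
  refine ⟨S, hSG, hsep, fun a ha => ?_⟩
  by_contra! hfar
  have haS : a ∈ S := by
    refine hS.le_of_ge (y := insert a S) ?_ (Finset.subset_insert a S) (Finset.mem_insert_self a S)
    rw [Finset.mem_filter, Finset.mem_powerset, Finset.coe_insert]
    exact ⟨Finset.insert_subset ha hSG, hsep.insert fun b hb _ =>
      ⟨hfar b hb, fun h => hfar b hb (hsymm _ _ h)⟩⟩
  exact hfar a haS (hrefl a)

open Classical in
lemma card_le_five_pow_of_separated_of_near {E : Type*} [NormedAddCommGroup E]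
    [InnerProductSpace ℝ E] (K : Submodule ℝ E) [FiniteDimensional ℝ K] {r : ℝ} (hr : 0 < r)
    (u : E) (S : Finset E) (hnorm : ∀ x ∈ S, ‖x‖ ≤ r)
    (hnear : ∀ x ∈ S, ‖Kᗮ.starProjection (x - u)‖ < r / 4)
    (hsep : (S : Set E).Pairwise fun x y => r ^ 2 / 2 < ‖x - y‖ ^ 2) :
    #S ≤ 5 ^ Module.finrank ℝ K := by
  let φ : E → K := fun x => (2 / r) • K.orthogonalProjectionOnto x
  have hφsep : ∀ x ∈ S, ∀ y ∈ S, x ≠ y → 1 ≤ ‖φ x - φ y‖ := fun x hx y hy hxy => by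
    have hperp : ‖Kᗮ.starProjection (x - y)‖ ≤ r / 2 := by
      rw [← sub_sub_sub_cancel_right x y u, map_sub]
      exact (norm_sub_le _ _).trans (by linarith [hnear x hx, hnear y hy])
    have hpyth := K.norm_sq_eq_add_norm_sq_starProjection (x - y)
    have hproj : r / 2 ≤ ‖K.starProjection (x - y)‖ := by
      refine le_of_sq_le_sq ?_ (norm_nonneg _)
      nlinarith [hsep hx hy hxy, pow_le_pow_left₀ (norm_nonneg _) hperp 2]
    calc (1 : ℝ) = 2 / r * (r / 2) := by field_simp
      _ ≤ 2 / r * ‖K.starProjection (x - y)‖ := by gcongr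
      _ = ‖φ x - φ y‖ := by
        rw [← smul_sub, ← map_sub, norm_smul, Real.norm_of_nonneg (by positivity)]
        rfl
  have hinj : Set.InjOn φ S := fun x hx y hy h => by
    by_contra hxy
    have := hφsep x hx y hy hxy
    rw [h, sub_self, norm_zero] at this
    linarith
  rw [← Finset.card_image_of_injOn hinj]
  refine Besicovitch.card_le_of_separated (S.image φ) ?_ ?_
  · refine Finset.forall_mem_image.2 fun x hx => ?_
    calc ‖φ x‖ = 2 / r * ‖K.starProjection x‖ := by
          rw [norm_smul, Real.norm_of_nonneg (by positivity)]
          rfl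
      _ ≤ 2 / r * r := by
          gcongr
          exact (K.norm_starProjection_apply_le x).trans (hnorm x hx)
      _ = 2 := by field_simp
  · refine Finset.forall_mem_image.2 fun x hx => Finset.forall_mem_image.2 fun y hy hne => ?_
    exact hφsep x hx y hy fun h => hne (congrArg φ h)

lemma card_signVec_near_subspace_le {d n : ℕ} (hd : 1 ≤ d)
    (K : Submodule ℝ (EuclideanSpace ℝ (Fin d))) (hK : Module.finrank ℝ K ≤ n)
    (u : EuclideanSpace ℝ (Fin d)) :
    (#{g : Fin d → Bool | ‖Kᗮ.starProjection (signVec g - u)‖ < √d / 4} : ℝ) ≤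
      5 ^ n * (2 ^ d * Real.exp (-(d / 4))) := by
  have hr : 0 < √(d : ℝ) := Real.sqrt_pos.2 (by exact_mod_cast hd)
  obtain ⟨S, hSG, hsep, hcover⟩ := exists_separated_cover
    (r := fun g h : Fin d → Bool => ‖signVec g - signVec h‖ ^ 2 ≤ d / 2)
    (fun a => by simpa using div_nonneg (Nat.cast_nonneg d) zero_le_two)
    (fun a b h => by rwa [norm_sub_rev])
    {g | ‖Kᗮ.starProjection (signVec g - u)‖ < √d / 4}
  have hinj : Set.InjOn signVec (S : Set (Fin d → Bool)) := fun g _ h _ hgh => by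
    by_contra hne
    have := two_le_norm_signVec_sub hne
    rw [hgh, sub_self, norm_zero] at this
    linarith
  have hS : #S ≤ 5 ^ n := by
    rw [← Finset.card_image_of_injOn hinj]
    refine (card_le_five_pow_of_separated_of_near K hr u _ ?_ ?_ ?_).trans
      (Nat.pow_le_pow_right (by norm_num) hK)
    · exact Finset.forall_mem_image.2 fun g _ => (norm_signVec g).le
    · exact Finset.forall_mem_image.2 fun g hg => (Finset.mem_filter.1 (hSG hg)).2
    · rw [Finset.coe_image, hinj.pairwise_image]
      exact hsep.mono' fun g h hgh => by
        simpa only [Function.onFun, Real.sq_sqrt (Nat.cast_nonneg d), not_le] using hgh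
  have hsub : ({g | ‖Kᗮ.starProjection (signVec g - u)‖ < √d / 4} : Finset (Fin d → Bool)) ⊆
      S.biUnion fun h => {g | ‖signVec g - signVec h‖ ^ 2 ≤ d / 2} := fun g hg => by
    obtain ⟨h, hh, hgh⟩ := hcover g hg
    exact Finset.mem_biUnion.2 ⟨h, hh, by simpa using hgh⟩
  calc (#{g : Fin d → Bool | ‖Kᗮ.starProjection (signVec g - u)‖ < √d / 4} : ℝ)
      ≤ ∑ h ∈ S, (#{g : Fin d → Bool | ‖signVec g - signVec h‖ ^ 2 ≤ d / 2} : ℝ) := by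
        exact_mod_cast (Finset.card_le_card hsub).trans Finset.card_biUnion_le
    _ ≤ #S • (2 ^ d * Real.exp (-(d / 4))) :=
        Finset.sum_le_card_nsmul _ _ _ fun h _ => card_norm_signVec_sub_sq_le hd (signVec h)
    _ ≤ 5 ^ n * (2 ^ d * Real.exp (-(d / 4))) := by
        rw [nsmul_eq_mul]
        gcongr
        exact_mod_cast hS

end Separation

section GoodDirections

open scoped Finset

lemma abs_inner_le_of_forall_abs_inner_basis_le {E ι : Type*} [NormedAddCommGroup E]
    [InnerProductSpace ℝ E] [Fintype ι] {W : Submodule ℝ E} [FiniteDimensional ℝ W]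
    (b : OrthonormalBasis ι ℝ W) {s : ℝ} (hs : 0 ≤ s) {w : E} (hw : ∀ i, |⟪(b i : E), w⟫| ≤ s)
    {u : E} (hu : u ∈ W) : |⟪w, u⟫| ≤ s * √(Fintype.card ι) * ‖u‖ := by
  have hcoord : ∀ i, ⟪b i, W.orthogonalProjectionOnto w⟫ = ⟪(b i : E), w⟫ := fun i => by
    rw [real_inner_comm, Submodule.inner_orthogonalProjectionOnto_eq_of_mem_right, real_inner_comm]
  have hproj : ‖W.orthogonalProjectionOnto w‖ ≤ s * √(Fintype.card ι) := by
    refine le_of_sq_le_sq ?_ (by positivity)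
    rw [← b.sum_sq_norm_inner_right, mul_pow, Real.sq_sqrt (Nat.cast_nonneg _), mul_comm,
      ← nsmul_eq_mul]
    refine Finset.sum_le_card_nsmul _ _ _ fun i _ => ?_
    rw [hcoord, Real.norm_eq_abs]
    exact pow_le_pow_left₀ (abs_nonneg _) (hw i) 2
  calc |⟪w, u⟫| = |⟪W.orthogonalProjectionOnto w, (⟨u, hu⟩ : W)⟫| := by
        rw [Submodule.inner_orthogonalProjectionOnto_eq_of_mem_right]
    _ ≤ ‖W.orthogonalProjectionOnto w‖ * ‖u‖ := abs_real_inner_le_norm _ _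
    _ ≤ s * √(Fintype.card ι) * ‖u‖ := by gcongr

-- Pigeonhole on the coordinates along `W`, rounded to multiples of `s`.
lemma exists_large_subset_abs_inner_sub_le {E α : Type*} [NormedAddCommGroup E]
    [InnerProductSpace ℝ E] (W : Submodule ℝ E) [FiniteDimensional ℝ W] (G : Finset α) (φ : α → E)
    {s : ℝ} (hs : 0 < s) {B : ℕ} (hφ : ∀ g ∈ G, ‖φ g‖ ≤ s * B) :
    ∃ F ⊆ G, #G ≤ (2 * B + 1) ^ Module.finrank ℝ W * #F ∧
      ∀ g ∈ F, ∀ h ∈ F, ∀ u ∈ W, |⟪φ g - φ h, u⟫| ≤ s * √(Module.finrank ℝ W) * ‖u‖ := by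
  let b := stdOrthonormalBasis ℝ W
  let cell : α → Fin (Module.finrank ℝ W) → ℤ := fun g i => ⌊⟪(b i : E), φ g⟫ / s⌋
  let cells : Finset (Fin (Module.finrank ℝ W) → ℤ) :=
    Fintype.piFinset fun _ => Finset.Icc (-(B : ℤ)) B
  have hcells : #cells = (2 * B + 1) ^ Module.finrank ℝ W := by
    simp only [cells, Fintype.card_piFinset, Int.card_Icc, Finset.prod_const, Finset.card_univ,
      Fintype.card_fin]
    congr 1
    omega
  have hmaps : ∀ g ∈ G, cell g ∈ cells := fun g hg => by
    refine Fintype.mem_piFinset.2 fun i => Finset.mem_Icc.2 ?_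
    have hcoord : |⟪(b i : E), φ g⟫ / s| ≤ B := by
      rw [abs_div, abs_of_pos hs, div_le_iff₀ hs, mul_comm]
      have hCS := abs_real_inner_le_norm (b i : E) (φ g)
      rw [show ‖(b i : E)‖ = 1 from b.norm_eq_one i, one_mul] at hCS
      exact hCS.trans (hφ g hg)
    obtain ⟨hlo, hhi⟩ := abs_le.1 hcoord
    refine ⟨Int.le_floor.2 (by exact_mod_cast hlo), ?_⟩
    exact_mod_cast (Int.floor_le _).trans hhi
  have hpos : 0 < #cells := by
    rw [hcells]
    positivity
  obtain ⟨c, -, hc⟩ := Finset.exists_le_card_fiber_of_nsmul_le_card_of_maps_to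
    (b := (#G : ℚ) / #cells) hmaps (Finset.card_pos.1 hpos) (by
      rw [nsmul_eq_mul, mul_div_cancel₀]
      exact_mod_cast hpos.ne')
  refine ⟨{g ∈ G | cell g = c}, Finset.filter_subset _ _, ?_, fun g hg h hh u hu => ?_⟩
  · rw [div_le_iff₀' (by exact_mod_cast hpos)] at hc
    rw [← hcells]
    exact_mod_cast hc
  · have hgh : cell g = cell h := (Finset.mem_filter.1 hg).2.trans (Finset.mem_filter.1 hh).2.symm
    simpa using abs_inner_le_of_forall_abs_inner_basis_le b hs.le (w := φ g - φ h) (fun i => by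
      have hlt := Int.abs_sub_lt_one_of_floor_eq_floor (congrFun hgh i)
      rw [← sub_div, ← inner_sub_right, abs_div, abs_of_pos hs, div_lt_one hs] at hlt
      exact hlt.le) hu

variable {d : ℕ}

/-- The candidate directions of the hard instance are indexed by pairs of sign vectors: the
normalised difference of the two, a vector of the unit ball. -/
noncomputable def signDiff (p : (Fin d → Bool) × (Fin d → Bool)) : EuclideanSpace ℝ (Fin d) :=
  (2 * √d)⁻¹ • (signVec p.1 - signVec p.2)

/-- A direction almost orthogonal to the subspace `W` and to the finitely many vectors `X`,
with a substantial component orthogonal to `A`. -/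
def IsGoodDirection {E : Type*} [NormedAddCommGroup E] [InnerProductSpace ℝ E]
    [FiniteDimensional ℝ E] (A W : Submodule ℝ E) (X : Finset E) (δ κ : ℝ) (v : E) : Prop :=
  (∀ u ∈ W, |⟪v, u⟫| ≤ δ * ‖u‖) ∧ (∀ x ∈ X, |⟪v, x⟫| ≤ κ * ‖x‖) ∧ 1 / 8 ≤ ‖Aᗮ.starProjection v‖

lemma norm_signDiff_le (hd : 1 ≤ d) (p : (Fin d → Bool) × (Fin d → Bool)) : ‖signDiff p‖ ≤ 1 := by
  have : 0 < √(d : ℝ) := Real.sqrt_pos.2 (by exact_mod_cast hd)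
  rw [signDiff, norm_smul, norm_inv, Real.norm_of_nonneg (by positivity),
    inv_mul_le_iff₀ (by positivity)]
  refine (norm_sub_le _ _).trans ?_
  rw [norm_signVec, norm_signVec]
  linarith

lemma abs_inner_signDiff_le_iff (hd : 1 ≤ d) (p : (Fin d → Bool) × (Fin d → Bool))
    (x : EuclideanSpace ℝ (Fin d)) (b : ℝ) :
    |⟪signDiff p, x⟫| ≤ b ↔ |⟪signVec p.1 - signVec p.2, x⟫| ≤ 2 * √d * b := by
  have : 0 < √(d : ℝ) := Real.sqrt_pos.2 (by exact_mod_cast hd)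
  rw [signDiff, real_inner_smul_left, abs_mul, abs_of_pos (by positivity),
    inv_mul_le_iff₀ (by positivity)]

lemma isGoodDirection_signDiff (hd : 1 ≤ d) {A W : Submodule ℝ (EuclideanSpace ℝ (Fin d))}
    {X : Finset (EuclideanSpace ℝ (Fin d))} {δ κ : ℝ} (hδ : 0 ≤ δ)
    {p : (Fin d → Bool) × (Fin d → Bool)}
    (hW : ∀ u ∈ W, |⟪signVec p.1 - signVec p.2, u⟫| ≤ 2 * δ * √(Module.finrank ℝ W) * ‖u‖)
    (hX₁ : ∀ x ∈ X, |⟪signVec p.1, x⟫| ≤ κ * √d * ‖x‖)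
    (hX₂ : ∀ x ∈ X, |⟪signVec p.2, x⟫| ≤ κ * √d * ‖x‖)
    (hA : √d / 4 ≤ ‖Aᗮ.starProjection (signVec p.1 - signVec p.2)‖) :
    IsGoodDirection A W X δ κ (signDiff p) := by
  have : 0 < √(d : ℝ) := Real.sqrt_pos.2 (by exact_mod_cast hd)
  refine ⟨fun u hu => (abs_inner_signDiff_le_iff hd p u _).2 ?_,
    fun x hx => (abs_inner_signDiff_le_iff hd p x _).2 ?_, ?_⟩
  · have hdim : √(Module.finrank ℝ W : ℝ) ≤ √d := Real.sqrt_le_sqrt <| by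
      exact_mod_cast W.finrank_le.trans_eq finrank_euclideanSpace_fin
    calc |⟪signVec p.1 - signVec p.2, u⟫| ≤ 2 * δ * √(Module.finrank ℝ W) * ‖u‖ := hW u hu
      _ ≤ 2 * δ * √d * ‖u‖ := by gcongr
      _ = 2 * √d * (δ * ‖u‖) := by ring
  · rw [inner_sub_left]
    refine (abs_sub _ _).trans ?_
    linarith [hX₁ x hx, hX₂ x hx]
  · rw [signDiff, map_smul, norm_smul, norm_inv, Real.norm_of_nonneg (by positivity),
      le_inv_mul_iff₀ (by positivity)]
    linarith

lemma card_pairs_near_mod_subspace_le (hd : 1 ≤ d) {n : ℕ}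
    (A : Submodule ℝ (EuclideanSpace ℝ (Fin d))) (hA : Module.finrank ℝ A ≤ n) :
    (#{p : (Fin d → Bool) × (Fin d → Bool) |
        ‖Aᗮ.starProjection (signVec p.1 - signVec p.2)‖ < √d / 4} : ℝ) ≤
      2 ^ d * (5 ^ n * (2 ^ d * Real.exp (-(d / 4)))) := by
  have hfiber : ∀ h : Fin d → Bool,
      (#{p : (Fin d → Bool) × (Fin d → Bool) |
        ‖Aᗮ.starProjection (signVec p.1 - signVec p.2)‖ < √d / 4 ∧ p.2 = h} : ℝ) ≤
      5 ^ n * (2 ^ d * Real.exp (-(d / 4))) := fun h => by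
    refine le_trans (Nat.cast_le.2 (Finset.card_le_card_of_injOn Prod.fst ?_ ?_))
      (card_signVec_near_subspace_le hd A hA (signVec h))
    · rintro ⟨g, g'⟩ hp
      obtain ⟨hnear, rfl⟩ := by
        simpa only [Finset.coe_filter, Finset.mem_univ, true_and, Set.mem_ofPred_eq] using hp
      simpa using hnear
    · rintro ⟨g, _⟩ hp ⟨g', _⟩ hp' rfl
      simp only [Finset.coe_filter, Finset.mem_univ, true_and, Set.mem_ofPred_eq] at hp hp'
      rw [hp.2, hp'.2]
  rw [Finset.card_eq_sum_card_fiberwise (f := Prod.snd) (t := Finset.univ)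
    fun _ _ => Finset.mem_coe.2 (Finset.mem_univ _), Nat.cast_sum]
  refine (Finset.sum_le_card_nsmul _ _ (5 ^ n * (2 ^ d * Real.exp (-(d / 4))))
    fun h _ => ?_).trans_eq
    (by simp)
  simpa only [Finset.filter_filter] using hfiber h

lemma exists_large_signVec_family (hd : 1 ≤ d) (W : Submodule ℝ (EuclideanSpace ℝ (Fin d)))
    (X : Finset (EuclideanSpace ℝ (Fin d))) {D B : ℕ} {κ δ : ℝ} (hW : Module.finrank ℝ W ≤ D)
    (hκ : 0 ≤ κ) (hX : 4 * (#X : ℝ) ≤ Real.exp (κ ^ 2 * d / 2)) (hδ : 0 < δ)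
    (hB : √d ≤ 2 * δ * B) :
    ∃ F : Finset (Fin d → Bool), (2 : ℝ) ^ d / 2 / (2 * (B : ℝ) + 1) ^ D ≤ #F ∧
      (∀ g ∈ F, ∀ x ∈ X, |⟪signVec g, x⟫| ≤ κ * √d * ‖x‖) ∧
      ∀ g ∈ F, ∀ h ∈ F, ∀ u ∈ W,
        |⟪signVec g - signVec h, u⟫| ≤ 2 * δ * √(Module.finrank ℝ W) * ‖u‖ := by
  obtain ⟨F, hFG, hFcard, hFW⟩ := exists_large_subset_abs_inner_sub_le W
    {g : Fin d → Bool | ∀ x ∈ X, |⟪signVec g, x⟫| ≤ κ * √d * ‖x‖} signVec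
    (s := 2 * δ) (B := B) (by positivity) fun g _ => (norm_signVec g).trans_le hB
  refine ⟨F, ?_, fun g hg => (Finset.mem_filter.1 (hFG hg)).2, hFW⟩
  rw [div_le_iff₀' (by positivity)]
  refine (half_le_card_forall_abs_inner_signVec_le hd X hκ hX).trans
    ((Nat.cast_le.2 hFcard).trans ?_)
  push_cast
  exact mul_le_mul_of_nonneg_right
    (pow_le_pow_right₀ (by linarith [Nat.cast_nonneg (α := ℝ) B]) hW) (Nat.cast_nonneg _)

open Classical in
lemma card_isGoodDirection_signDiff_ge (hd : 1 ≤ d)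
    (A W : Submodule ℝ (EuclideanSpace ℝ (Fin d))) (X : Finset (EuclideanSpace ℝ (Fin d)))
    {n D B : ℕ} {κ δ : ℝ} (hA : Module.finrank ℝ A ≤ n) (hW : Module.finrank ℝ W ≤ D)
    (hκ : 0 ≤ κ) (hX : 4 * (#X : ℝ) ≤ Real.exp (κ ^ 2 * d / 2)) (hδ : 0 < δ)
    (hB : √d ≤ 2 * δ * B)
    (hbig : 8 * ((2 * (B : ℝ) + 1) ^ D) ^ 2 * 5 ^ n ≤ Real.exp (d / 4)) :
    (2 ^ d * 2 ^ d : ℝ) / (8 * ((2 * (B : ℝ) + 1) ^ D) ^ 2) ≤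
      #{p : (Fin d → Bool) × (Fin d → Bool) | IsGoodDirection A W X δ κ (signDiff p)} := by
  set Q : ℝ := (2 * (B : ℝ) + 1) ^ D with hQ
  have hQ0 : 0 < Q := by positivity
  obtain ⟨F, hF, hFX, hFW⟩ := exists_large_signVec_family hd W X hW hκ hX hδ hB
  set near : Finset ((Fin d → Bool) × (Fin d → Bool)) :=
    {p | ‖Aᗮ.starProjection (signVec p.1 - signVec p.2)‖ < √d / 4}
  have hnear : (#near : ℝ) ≤ 2 ^ d * 2 ^ d / (8 * Q ^ 2) := by
    refine (card_pairs_near_mod_subspace_le hd A hA).trans ?_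
    rw [Real.exp_neg, le_div_iff₀ (by positivity)]
    calc 2 ^ d * (5 ^ n * (2 ^ d * (Real.exp (d / 4))⁻¹)) * (8 * Q ^ 2)
        = 2 ^ d * 2 ^ d * ((8 * Q ^ 2 * 5 ^ n) * (Real.exp (d / 4))⁻¹) := by ring
      _ ≤ 2 ^ d * 2 ^ d * (Real.exp (d / 4) * (Real.exp (d / 4))⁻¹) := by gcongr
      _ = 2 ^ d * 2 ^ d := by rw [mul_inv_cancel₀ (Real.exp_ne_zero _), mul_one]
  have hgood : (F ×ˢ F) \ near ⊆
      Finset.univ.filter fun p => IsGoodDirection A W X δ κ (signDiff p) := fun p hp => by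
    obtain ⟨hpF, hpnear⟩ := Finset.mem_sdiff.1 hp
    obtain ⟨h₁, h₂⟩ := Finset.mem_product.1 hpF
    simp only [near, Finset.mem_filter, Finset.mem_univ, true_and, not_lt] at hpnear
    exact Finset.mem_filter.2 ⟨Finset.mem_univ _, isGoodDirection_signDiff hd hδ.le
      (hFW _ h₁ _ h₂) (hFX _ h₁) (hFX _ h₂) hpnear⟩
  have hcount : (#F : ℝ) * #F ≤
      #{p : (Fin d → Bool) × (Fin d → Bool) | IsGoodDirection A W X δ κ (signDiff p)} + #near := by
    have := (Finset.le_card_sdiff near (F ×ˢ F)).trans (Finset.card_le_card hgood)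
    rw [Finset.card_product] at this
    exact_mod_cast Nat.sub_le_iff_le_add.1 this
  have hFF : 2 * (2 ^ d * 2 ^ d / (8 * Q ^ 2)) ≤ (#F : ℝ) * #F := by
    calc 2 * (2 ^ d * 2 ^ d / (8 * Q ^ 2)) = (2 : ℝ) ^ d / 2 / Q * (2 ^ d / 2 / Q) := by
          field_simp
          norm_num
      _ ≤ #F * #F := by gcongr
  linarith

end GoodDirections

section RobustIndependence

variable {E : Type*} [NormedAddCommGroup E] [InnerProductSpace ℝ E] [FiniteDimensional ℝ E]

/-- Each vector of the list, read from its end, is at distance at least `β` from the span of the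
vectors read before it. -/
def RobustlyIndependent (β : ℝ) : List E → Prop
  | [] => True
  | x :: l => RobustlyIndependent β l ∧
      β ≤ ‖x - (Submodule.span ℝ {y | y ∈ l}).starProjection x‖

lemma exists_unit_orthogonal_le_inner {β : ℝ} (hβ : 0 < β) {x : E} {l : List E}
    (hx : β ≤ ‖x - (Submodule.span ℝ {y | y ∈ l}).starProjection x‖) :
    ∃ w : E, ‖w‖ = 1 ∧ (∀ y ∈ l, ⟪w, y⟫ = 0) ∧ β ≤ ⟪w, x⟫ := by
  set K := Submodule.span ℝ {y | y ∈ l}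
  set p := x - K.starProjection x with hp
  have hp0 : 0 < ‖p‖ := hβ.trans_le hx
  have hperp : ∀ u ∈ K, ⟪p, u⟫ = 0 := fun u hu => K.starProjection_inner_eq_zero x u hu
  have hpx : ⟪p, x⟫ = ‖p‖ ^ 2 := by
    rw [← real_inner_self_eq_norm_sq, ← sub_eq_zero, ← inner_sub_right, hp, sub_sub_cancel]
    exact hperp _ (K.starProjection_apply_mem x)
  refine ⟨‖p‖⁻¹ • p, ?_, fun y hy => ?_, ?_⟩
  · rw [norm_smul, norm_inv, norm_norm, inv_mul_cancel₀ hp0.ne']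
  · rw [real_inner_smul_left, hperp y (Submodule.subset_span hy), mul_zero]
  · rwa [real_inner_smul_left, hpx, pow_two, inv_mul_cancel_left₀ hp0.ne']

omit [FiniteDimensional ℝ E] in
lemma exists_mem_cons_le_abs_inner_shift_sub {β s : ℝ} (hβ : 0 < β) (hs : 0 < s) {l : List E}
    {x w : E} (hwl : ∀ y ∈ l, ⟪w, y⟫ = 0) (hwx : β ≤ ⟪w, x⟫) {z z' : E}
    (hsep : z ≠ z' → ∃ y ∈ l, s * β ≤ |⟪z - z', y⟫|) {c c' : ℕ} (hne : (z, c) ≠ (z', c')) :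
    ∃ y ∈ x :: l, s * β ≤ |⟪(z + ((c : ℝ) * s) • w) - (z' + ((c' : ℝ) * s) • w), y⟫| := by
  have hdiff : (z + ((c : ℝ) * s) • w) - (z' + ((c' : ℝ) * s) • w) =
      (z - z') + (((c : ℝ) - c') * s) • w := by module
  by_cases hz : z = z'
  · refine ⟨x, List.mem_cons_self, ?_⟩
    have hcc' : (1 : ℝ) ≤ |(c : ℝ) - c'| := by
      have hne' : (c : ℤ) - c' ≠ 0 := fun h => hne (by rw [hz, show c = c' by omega])
      exact_mod_cast Int.one_le_abs hne'
    rw [hdiff, hz, sub_self, zero_add, real_inner_smul_left, abs_mul, abs_mul, abs_of_pos hs]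
    calc s * β = 1 * s * β := by rw [one_mul]
      _ ≤ |(c : ℝ) - c'| * s * |⟪w, x⟫| := by
        gcongr
        exact hwx.trans (le_abs_self _)
  · obtain ⟨y, hy, h⟩ := hsep hz
    refine ⟨y, List.mem_cons_of_mem _ hy, ?_⟩
    rwa [hdiff, inner_add_left, real_inner_smul_left, hwl y hy, mul_zero, add_zero]

open Classical in
lemma RobustlyIndependent.exists_separated_points {β s : ℝ} (hβ : 0 < β) (hs : 0 < s) (m : ℕ)
    {l : List E} (hl : RobustlyIndependent β l) :
    ∃ Z : Finset E, Z.card = (m + 1) ^ l.length ∧ (∀ z ∈ Z, ‖z‖ ≤ m * s * l.length) ∧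
      ∀ z ∈ Z, ∀ z' ∈ Z, z ≠ z' → ∃ y ∈ l, s * β ≤ |⟪z - z', y⟫| := by
  induction l with
  | nil =>
    refine ⟨{0}, by simp, by simp, fun z hz z' hz' h => ?_⟩
    rw [Finset.mem_singleton] at hz hz'
    exact absurd (hz.trans hz'.symm) h
  | cons x l ih =>
    obtain ⟨hl, hx⟩ := hl
    obtain ⟨Z, hcard, hnorm, hsep⟩ := ih hl
    obtain ⟨w, hw, hwl, hwx⟩ := exists_unit_orthogonal_le_inner hβ hx
    let shift : E × ℕ → E := fun q => q.1 + ((q.2 : ℝ) * s) • w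
    have hshift : ∀ q ∈ Z ×ˢ Finset.range (m + 1), ∀ q' ∈ Z ×ˢ Finset.range (m + 1), q ≠ q' →
        ∃ y ∈ x :: l, s * β ≤ |⟪shift q - shift q', y⟫| := fun q hq q' hq' hne =>
      exists_mem_cons_le_abs_inner_shift_sub hβ hs hwl hwx
        (hsep _ (Finset.mem_product.1 hq).1 _ (Finset.mem_product.1 hq').1) hne
    refine ⟨(Z ×ˢ Finset.range (m + 1)).image shift, ?_, ?_, ?_⟩
    · rw [Finset.card_image_of_injOn, Finset.card_product, hcard, Finset.card_range,
        List.length_cons, pow_succ]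
      intro q hq q' hq' h
      by_contra hne
      obtain ⟨y, -, hy⟩ := hshift q hq q' hq' hne
      rw [h, sub_self, inner_zero_left, abs_zero] at hy
      exact (mul_pos hs hβ).not_ge hy
    · refine Finset.forall_mem_image.2 fun q hq => ?_
      obtain ⟨hz, hc⟩ := Finset.mem_product.1 hq
      have hcm : (q.2 : ℝ) ≤ m := by exact_mod_cast Finset.mem_range_succ_iff.1 hc
      calc ‖shift q‖ ≤ ‖q.1‖ + ‖((q.2 : ℝ) * s) • w‖ := norm_add_le _ _
        _ ≤ m * s * l.length + m * s := by
          rw [norm_smul, hw, mul_one, Real.norm_of_nonneg (by positivity)]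
          gcongr
          exact hnorm _ hz
        _ = m * s * (x :: l).length := by
          rw [List.length_cons]
          push_cast
          ring
    · exact Finset.forall_mem_image.2 fun q hq => Finset.forall_mem_image.2 fun q' hq' hne =>
        hshift q hq q' hq' fun h => hne (by rw [h])

end RobustIndependence

section GridVectors

open scoped Finset

variable {d : ℕ}

lemma norm_le_sqrt_mul_of_forall_abs_le {x : EuclideanSpace ℝ (Fin d)} {b : ℝ} (hb : 0 ≤ b)
    (hx : ∀ i, |x i| ≤ b) : ‖x‖ ≤ √d * b := by
  refine le_of_sq_le_sq ?_ (by positivity)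
  rw [EuclideanSpace.norm_sq_eq, mul_pow, Real.sq_sqrt (Nat.cast_nonneg d)]
  simpa using Finset.sum_le_card_nsmul Finset.univ (fun i => ‖x i‖ ^ 2) (b ^ 2)
    fun i _ => pow_le_pow_left₀ (norm_nonneg _) (hx i) 2

/-- The rows of the hard instance range over the grid of mesh `1 / (L √d)` in the cube
`[-1/√d, 1/√d] ^ d`, a finite stand-in for the uniform distribution on the cube. -/
noncomputable def gridVec (L : ℕ) (a : Fin d → Fin (2 * L + 1)) : EuclideanSpace ℝ (Fin d) :=
  WithLp.toLp 2 fun i => ((a i : ℝ) - L) * (L * √d)⁻¹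

lemma gridVec_apply {L : ℕ} (a : Fin d → Fin (2 * L + 1)) (i : Fin d) :
    gridVec L a i = ((a i : ℝ) - L) * (L * √d)⁻¹ := rfl

lemma norm_gridVec_le (L : ℕ) (a : Fin d → Fin (2 * L + 1)) : ‖gridVec L a‖ ≤ 1 := by
  have hcoord : ∀ i, |gridVec L a i| ≤ L * (L * √d)⁻¹ := fun i => by
    have hlt : ((a i : ℕ) : ℝ) ≤ 2 * L := by exact_mod_cast Nat.lt_succ_iff.1 (a i).2
    rw [gridVec_apply, abs_mul, abs_of_nonneg (by positivity : 0 ≤ ((L : ℝ) * √d)⁻¹)]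
    gcongr
    rw [abs_le]
    constructor <;> linarith [Nat.cast_nonneg (α := ℝ) (a i : ℕ)]
  refine (norm_le_sqrt_mul_of_forall_abs_le (by positivity) hcoord).trans ?_
  rw [← mul_assoc, mul_comm _ (L : ℝ)]
  exact mul_inv_le_one

/-- The grid point, in integer coordinates, nearest to the translate of the grid vector `a`
by `z`. -/
noncomputable def gridShift (L : ℕ) (a : Fin d → Fin (2 * L + 1)) (z : EuclideanSpace ℝ (Fin d)) :
    Fin d → ℤ :=
  fun i => (a i : ℕ) + round (z i * (L * √d))

lemma norm_sub_sub_le_of_gridShift_eq {L : ℕ} (hL : 1 ≤ L) {a a' : Fin d → Fin (2 * L + 1)}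
    {z z' : EuclideanSpace ℝ (Fin d)} (h : gridShift L a z = gridShift L a' z') :
    ‖(z - z') - (gridVec L a' - gridVec L a)‖ ≤ (L : ℝ)⁻¹ := by
  rcases Nat.eq_zero_or_pos d with rfl | hd
  · rw [Subsingleton.elim ((z - z') - (gridVec L a' - gridVec L a)) 0, norm_zero]
    positivity
  have : (0 : ℝ) < L := by exact_mod_cast hL
  have : 0 < √(d : ℝ) := Real.sqrt_pos.2 (by exact_mod_cast hd)
  refine (norm_le_sqrt_mul_of_forall_abs_le (b := (L * √d)⁻¹) (by positivity) fun i => ?_).trans_eq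
    (by field_simp)
  have hi : ((a i : ℕ) : ℝ) + round (z i * (L * √d)) = (a' i : ℕ) + round (z' i * (L * √d)) := by
    exact_mod_cast congrFun h i
  have hround : ((z - z') - (gridVec L a' - gridVec L a)) i = (L * √d)⁻¹ *
      ((z i * (L * √d) - round (z i * (L * √d))) -
        (z' i * (L * √d) - round (z' i * (L * √d)))) := by
    simp only [PiLp.sub_apply, gridVec_apply]
    rw [← sub_eq_iff_eq_add.2 hi.symm]
    field_simp
    ring
  rw [hround, abs_mul, abs_of_pos (by positivity)]
  refine mul_le_of_le_one_right (by positivity) ((abs_sub _ _).trans ?_)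
  linarith [abs_sub_round (z i * (L * √d)), abs_sub_round (z' i * (L * √d))]

lemma gridShift_mem_Icc {L m : ℕ} {b : ℝ} (hm : b * (L * √d) + 1 / 2 ≤ m)
    (a : Fin d → Fin (2 * L + 1)) {z : EuclideanSpace ℝ (Fin d)} (hz : ‖z‖ ≤ b) (i : Fin d) :
    gridShift L a z i ∈ Finset.Icc (-(m : ℤ)) (2 * L + m) := by
  have hscale : |z i * (L * √d)| ≤ b * (L * √d) := by
    rw [abs_mul, abs_of_nonneg (by positivity : 0 ≤ (L : ℝ) * √d)]
    gcongr
    exact (PiLp.norm_apply_le z i).trans hz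
  have hround : |(round (z i * (L * √d)) : ℝ)| ≤ m := by
    have := abs_sub_abs_le_abs_sub (round (z i * (L * √d)) : ℝ) (z i * (L * √d))
    rw [abs_sub_comm] at this
    linarith [abs_sub_round (z i * (L * √d))]
  have hround' : |round (z i * (L * √d))| ≤ (m : ℤ) := by exact_mod_cast hround
  have hlt := (a i).2
  obtain ⟨hlo, hhi⟩ := abs_le.1 hround'
  rw [gridShift, Finset.mem_Icc]
  omega

-- The translates of the set of grid vectors almost orthogonal to `l` by separated points are,
-- after rounding, disjoint subsets of a slightly larger grid.
lemma card_mul_card_le_of_separated {L m : ℕ} {η b : ℝ} (hL : 1 ≤ L) (hLη : 1 < η * L)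
    (hm : b * (L * √d) + 1 / 2 ≤ m) {l : List (EuclideanSpace ℝ (Fin d))}
    (hnorm : ∀ y ∈ l, ‖y‖ ≤ 1) {Z : Finset (EuclideanSpace ℝ (Fin d))} (hZ : ∀ z ∈ Z, ‖z‖ ≤ b)
    (hsep : ∀ z ∈ Z, ∀ z' ∈ Z, z ≠ z' → ∃ y ∈ l, 3 * η ≤ |⟪z - z', y⟫|) :
    #{a : Fin d → Fin (2 * L + 1) | ∀ y ∈ l, |⟪gridVec L a, y⟫| ≤ η} * #Z ≤
      (2 * L + 1 + 2 * m) ^ d := by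
  have hL' : (0 : ℝ) < L := by exact_mod_cast hL
  set S : Finset (Fin d → Fin (2 * L + 1)) := {a | ∀ y ∈ l, |⟪gridVec L a, y⟫| ≤ η}
  have hinj : Set.InjOn (fun q : _ × _ => gridShift L q.1 q.2) (SetLike.coe (S ×ˢ Z)) := by
    rintro ⟨a, z⟩ hq ⟨a', z'⟩ hq' h
    rw [SetLike.mem_coe, Finset.mem_product] at hq hq'
    obtain rfl : z = z' := by
      by_contra hne
      obtain ⟨y, hy, hfar⟩ := hsep z hq.2 z' hq'.2 hne
      have ha : |⟪gridVec L a, y⟫| ≤ η := (Finset.mem_filter.1 hq.1).2 y hy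
      have ha' : |⟪gridVec L a', y⟫| ≤ η := (Finset.mem_filter.1 hq'.1).2 y hy
      have herr : |⟪(z - z') - (gridVec L a' - gridVec L a), y⟫| ≤ (L : ℝ)⁻¹ :=
        (abs_real_inner_le_norm _ _).trans <| (mul_le_of_le_one_right (norm_nonneg _)
          (hnorm y hy)).trans (norm_sub_sub_le_of_gridShift_eq hL h)
      have hLinv : (L : ℝ)⁻¹ < η := by rwa [inv_lt_iff_one_lt_mul₀' hL', mul_comm]
      have hsplit : ⟪z - z', y⟫ = ⟪gridVec L a', y⟫ - ⟪gridVec L a, y⟫ +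
          ⟪(z - z') - (gridVec L a' - gridVec L a), y⟫ := by
        rw [inner_sub_left (z - z'), inner_sub_left (gridVec L a')]
        ring
      rw [hsplit] at hfar
      linarith [abs_add_le (⟪gridVec L a', y⟫ - ⟪gridVec L a, y⟫)
        ⟪(z - z') - (gridVec L a' - gridVec L a), y⟫, abs_sub ⟪gridVec L a', y⟫ ⟪gridVec L a, y⟫]
    refine Prod.ext (funext fun i => Fin.ext ?_) rfl
    simpa [gridShift] using congrFun h i
  calc #S * #Z = #(S ×ˢ Z) := (Finset.card_product _ _).symm
    _ ≤ #(Fintype.piFinset fun _ : Fin d => Finset.Icc (-(m : ℤ)) (2 * L + m)) :=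
      Finset.card_le_card_of_injOn _ (fun q hq => Finset.mem_coe.2 <| Fintype.mem_piFinset.2
        (gridShift_mem_Icc hm q.1 (hZ _ (Finset.mem_product.1 hq).2))) hinj
    _ = (2 * L + 1 + 2 * m) ^ d := by
      rw [Fintype.card_piFinset_const, Int.card_Icc]
      congr 1
      omega

lemma pow_le_pow_mul_exp_of_mul_le {L m d : ℕ} {k : ℝ} (h : (d * m : ℝ) ≤ k * L) (hL : 1 ≤ L) :
    (2 * L + 1 + 2 * m : ℝ) ^ d ≤ (2 * L + 1 : ℝ) ^ d * Real.exp k := by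
  have hL' : (0 : ℝ) < L := by exact_mod_cast hL
  have hbase : (2 * L + 1 + 2 * m : ℝ) ≤ (2 * L + 1) * Real.exp (m / L) := by
    calc (2 * L + 1 + 2 * m : ℝ) ≤ (2 * L + 1) * (m / L + 1) := by
          have hexpand : (2 * L + 1 : ℝ) * (m / L + 1) = 2 * L + 1 + 2 * m + m / L := by
            field_simp
            ring
          rw [hexpand]
          linarith [show (0 : ℝ) ≤ m / L by positivity]
      _ ≤ (2 * L + 1) * Real.exp (m / L) := by
          gcongr
          exact Real.add_one_le_exp _
  refine (pow_le_pow_left₀ (by positivity) hbase d).trans ?_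
  rw [mul_pow, ← Real.exp_nat_mul]
  gcongr
  rwa [mul_div_assoc', div_le_iff₀ hL']

lemma mul_ceil_add_one_le {L d : ℕ} {b k : ℝ} (hb : 0 ≤ b) (hk : 1 ≤ k)
    (hbk : b * (d * √d) ≤ k / 2) (hL : 4 * d ≤ L) :
    (d * (⌈b * (L * √d)⌉₊ + 1 : ℕ) : ℝ) ≤ k * L := by
  have hLd : (4 * d : ℝ) ≤ L := by exact_mod_cast hL
  have hceil : ((⌈b * (L * √d)⌉₊ + 1 : ℕ) : ℝ) ≤ b * (L * √d) + 2 := by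
    push_cast
    linarith [Nat.ceil_lt_add_one (show 0 ≤ b * (L * √d) by positivity)]
  calc (d * (⌈b * (L * √d)⌉₊ + 1 : ℕ) : ℝ) ≤ d * (b * (L * √d) + 2) := by gcongr
    _ = b * (d * √d) * L + 2 * d := by ring
    _ ≤ k / 2 * L + 2 * d := by gcongr
    _ ≤ k * L := by nlinarith

lemma exp_two_mul_le_eight_pow (k : ℕ) : Real.exp (k * 2) ≤ 8 ^ k := by
  have hexp : Real.exp 2 ≤ 8 := by
    rw [show (2 : ℝ) = 1 + 1 by norm_num, Real.exp_add]
    nlinarith [Real.exp_one_lt_d9, Real.exp_pos 1]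
  rw [Real.exp_nat_mul]
  gcongr

lemma RobustlyIndependent.card_gridVec_almost_orthogonal_le {L : ℕ} {η β : ℝ} (hη : 0 < η)
    (hβ : 0 < β) (hL : 4 * d ≤ L) (hLη : 1 < η * L) (hηβ : 42 * η * (d * √d) ≤ β)
    {l : List (EuclideanSpace ℝ (Fin d))} (hl : RobustlyIndependent β l)
    (hnorm : ∀ y ∈ l, ‖y‖ ≤ 1) (hne : l ≠ []) :
    (#{a : Fin d → Fin (2 * L + 1) | ∀ y ∈ l, |⟪gridVec L a, y⟫| ≤ η} : ℝ) ≤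
      Real.exp (-(l.length : ℝ)) * ((2 * L + 1 : ℕ) : ℝ) ^ d := by
  have hL1 : 1 ≤ L := by
    rcases Nat.eq_zero_or_pos L with rfl | h
    · norm_num at hLη
    · exact h
  have hk : (1 : ℝ) ≤ l.length := by exact_mod_cast List.length_pos_iff.2 hne
  set b : ℝ := (7 : ℕ) * (3 * η / β) * l.length with hb
  set m := ⌈b * (L * √d)⌉₊ + 1
  obtain ⟨Z, hcard, hZ, hsep⟩ := hl.exists_separated_points hβ (s := 3 * η / β) (by positivity) 7
  simp only [div_mul_cancel₀ _ hβ.ne'] at hsep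
  have hm : b * (L * √d) + 1 / 2 ≤ m := by
    push_cast [m]
    linarith [Nat.le_ceil (b * (L * √d))]
  have hbd : b * (d * √d) ≤ l.length / 2 := by
    calc b * (d * √d) = 42 * η * (d * √d) / β * (l.length / 2) := by
          rw [hb]
          push_cast
          ring
      _ ≤ 1 * (l.length / 2) := by
        gcongr
        exact (div_le_one hβ).2 hηβ
      _ = l.length / 2 := one_mul _
  have hm' : (d * m : ℝ) ≤ l.length * L := mul_ceil_add_one_le (by positivity) hk hbd hL
  have hcount := card_mul_card_le_of_separated hL1 hLη hm hnorm hZ hsep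
  rw [hcard] at hcount
  rw [Real.exp_neg, inv_mul_eq_div, le_div_iff₀ (Real.exp_pos _)]
  refine le_of_mul_le_mul_right ?_ (Real.exp_pos l.length)
  calc _ = (#{a : Fin d → Fin (2 * L + 1) | ∀ y ∈ l, |⟪gridVec L a, y⟫| ≤ η} : ℝ) *
        Real.exp (l.length * 2) := by rw [mul_two, Real.exp_add, mul_assoc]
    _ ≤ #{a : Fin d → Fin (2 * L + 1) | ∀ y ∈ l, |⟪gridVec L a, y⟫| ≤ η} * 8 ^ l.length := by
      gcongr
      exact exp_two_mul_le_eight_pow _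
    _ ≤ (2 * L + 1 + 2 * m : ℝ) ^ d := by exact_mod_cast hcount
    _ ≤ _ := by
      push_cast
      exact pow_le_pow_mul_exp_of_mul_le hm' hL1

end GridVectors

/-- The adaptive game against an algorithm. The hard function is the maximum of `‖x‖ - 1`, of
`|⟪a, x⟫| - η` over hidden rows `a`, and of pieces `η * (⟪v j, x⟫ - offset j)` which are revealed
one at a time, each time the algorithm makes an exploratory query, up to `k` per period. The gap
`γ₁` separates the pieces of consecutive periods, `γ₂` those of one period, and an exploratory
query lies at distance at least `β` from the span of the previous ones of its period. -/
structure AdaptiveGame (M : ℕ) (E : Type) where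
  alg : MemAlg M E (ℝ × E)
  η : ℝ
  γ₁ : ℝ
  γ₂ : ℝ
  β : ℝ
  k : ℕ

/-- A state of the game: the memory of the algorithm, the index `j` of the last revealed piece, and
the exploratory queries `ys` of the current period, latest first. -/
structure GameState (M : ℕ) (E : Type) where
  mem : Fin M → Bool
  j : ℕ
  ys : List E

/-- The state in which the game starts. -/
def GameState.init (M : ℕ) (E : Type) : GameState M E := ⟨fun _ => false, 0, []⟩

namespace AdaptiveGame

variable {M n : ℕ} {E : Type}

section Rules

variable (G : AdaptiveGame M E)

/-- The offset of the `j`-th piece, up to the factor `η`. -/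
noncomputable def offset : ℕ → ℝ
  | 0 => 0
  | j + 1 => ((j / G.k : ℕ) + 1) * G.γ₁ + (j + 1) * G.γ₂

/-- A query made while piece `j` is the last one is deep when its value is below `threshold j`. -/
noncomputable def threshold (j : ℕ) : ℝ := -(G.η * (((j / G.k : ℕ) + 1 / 2) * G.γ₁))

/-- The query that the algorithm makes in a given state. -/
def query (s : GameState M E) : E := G.alg.query s.mem

/-- The state after receiving the response `r` in state `s`; the flag `b` tells whether the query
was exploratory. -/
def next (s : GameState M E) (b : Bool) (r : ℝ × E) : GameState M E where
  mem := G.alg.update s.mem (G.query s) r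
  j := if b then s.j + 1 else s.j
  ys := if b then (if (s.j + 1) % G.k = 0 then [] else G.query s :: s.ys) else s.ys

variable [NormedAddCommGroup E] [InnerProductSpace ℝ E]

/-- The oracle of the `i`-th piece. -/
noncomputable def piece (v : ℕ → E) (i : ℕ) : FirstOrderOracle E :=
  affineOracle (G.η • v i) (G.η * G.offset i)

/-- The oracle of the hard function once the pieces `0, …, j` have been revealed. -/
noncomputable def oracle (A : Fin n → E) (v : ℕ → E) (j : ℕ) : FirstOrderOracle E :=
  oracleListMax (distOracle 0 1)
    (List.ofFn (fun i => absOracle G.η (A i)) ++ (List.range (j + 1)).map (G.piece v))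

/-- The query made in state `s` is deep. -/
def IsDeep (A : Fin n → E) (v : ℕ → E) (s : GameState M E) : Prop :=
  (G.oracle A v s.j (G.query s)).1 < G.threshold s.j

variable [FiniteDimensional ℝ E]

/-- The query made in state `s` is exploratory: it is deep and robustly independent of the
exploratory queries made so far in the current period. -/
def IsExploratory (A : Fin n → E) (v : ℕ → E) (s : GameState M E) : Prop :=
  G.IsDeep A v s ∧
    G.β ≤ ‖G.query s - (Submodule.span ℝ {y | y ∈ s.ys}).starProjection (G.query s)‖

open Classical in
/-- One iteration of the game. An exploratory query reveals the next piece before it is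
answered. -/
noncomputable def step (A : Fin n → E) (v : ℕ → E) (s : GameState M E) : GameState M E :=
  if G.IsExploratory A v s then G.next s true (G.oracle A v (s.j + 1) (G.query s))
  else G.next s false (G.oracle A v s.j (G.query s))

/-- The state reached after `t` iterations from the state `s`. -/
noncomputable def run (A : Fin n → E) (v : ℕ → E) (s : GameState M E) : ℕ → GameState M E
  | 0 => s
  | t + 1 => G.step A v (run A v s t)

/-- The state reached after `t` iterations of the game. -/
noncomputable def play (A : Fin n → E) (v : ℕ → E) (t : ℕ) : GameState M E :=
  G.run A v (GameState.init M E) t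

end Rules

variable {G : AdaptiveGame M E} [NormedAddCommGroup E] [InnerProductSpace ℝ E]
  {A : Fin n → E} {v v' : ℕ → E} {s : GameState M E} {i j t t' : ℕ}

lemma piece_fst (v : ℕ → E) (i : ℕ) (x : E) :
    (G.piece v i x).1 = G.η * (⟪v i, x⟫ - G.offset i) := by
  simp only [piece, affineOracle, real_inner_smul_left]
  ring

lemma oracle_congr (h : ∀ i ≤ j, v i = v' i) : G.oracle A v j = G.oracle A v' j := by
  rw [oracle, oracle, List.map_congr_left fun i hi => ?_]
  rw [piece, piece, h i (by simpa [Nat.lt_succ_iff] using hi)]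

lemma oracle_fst_le_iff {x : E} {b : ℝ} : (G.oracle A v j x).1 ≤ b ↔
    ‖x‖ - 1 ≤ b ∧ (∀ i, |⟪A i, x⟫| - G.η ≤ b) ∧
      ∀ i ≤ j, G.η * (⟪v i, x⟫ - G.offset i) ≤ b := by
  simp [oracle, oracleListMax_fst_le_iff, distOracle, absOracle_fst, piece_fst, or_imp,
    forall_and]

lemma norm_sub_one_le_oracle (j : ℕ) (x : E) : ‖x‖ - 1 ≤ (G.oracle A v j x).1 :=
  (oracle_fst_le_iff.1 le_rfl).1

lemma abs_inner_row_le_oracle (j : ℕ) (x : E) (i : Fin n) :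
    |⟪A i, x⟫| - G.η ≤ (G.oracle A v j x).1 :=
  (oracle_fst_le_iff.1 le_rfl).2.1 i

lemma piece_le_oracle (h : i ≤ j) (x : E) :
    G.η * (⟪v i, x⟫ - G.offset i) ≤ (G.oracle A v j x).1 :=
  (oracle_fst_le_iff.1 le_rfl).2.2 i h

lemma oracle_eq_of_forall_piece_le {x : E} (hij : i ≤ j)
    (h : ∀ l, i < l → l ≤ j → (G.piece v l x).1 ≤ (G.oracle A v i x).1) :
    G.oracle A v j x = G.oracle A v i x := by
  obtain ⟨m, rfl⟩ := Nat.exists_eq_add_of_le hij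
  rw [oracle, add_right_comm, List.range_add, List.map_append, ← List.append_assoc]
  refine oracleListMax_append_eq_left fun O hO => ?_
  obtain ⟨l, hl, rfl⟩ : ∃ l < m, G.piece v (i + 1 + l) = O := by simpa using hO
  exact h _ (by omega) (by omega)

lemma IsDeep.norm_query_le_and_abs_inner_row_le (hη : 0 ≤ G.η) (hγ : 0 ≤ G.γ₁)
    (h : G.IsDeep A v s) : ‖G.query s‖ ≤ 1 ∧ ∀ i, |⟪A i, G.query s⟫| ≤ G.η := by
  have hthr : G.threshold s.j ≤ 0 := by
    rw [threshold, neg_nonpos]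
    positivity
  have hdeep : (G.oracle A v s.j (G.query s)).1 < G.threshold s.j := h
  exact ⟨by linarith [norm_sub_one_le_oracle (G := G) (A := A) (v := v) s.j (G.query s)],
    fun i => by linarith [abs_inner_row_le_oracle (G := G) (A := A) (v := v) s.j (G.query s) i]⟩

variable [FiniteDimensional ℝ E]

lemma IsExploratory.step_eq (h : G.IsExploratory A v s) :
    G.step A v s = G.next s true (G.oracle A v (s.j + 1) (G.query s)) :=
  if_pos h

lemma step_eq_of_not_isExploratory (h : ¬ G.IsExploratory A v s) :
    G.step A v s = G.next s false (G.oracle A v s.j (G.query s)) :=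
  if_neg h

lemma IsExploratory.step_j (h : G.IsExploratory A v s) : (G.step A v s).j = s.j + 1 := by
  simp [h.step_eq, next]

lemma step_j_of_not_isExploratory (h : ¬ G.IsExploratory A v s) : (G.step A v s).j = s.j := by
  simp [step_eq_of_not_isExploratory h, next]

lemma IsExploratory.step_ys (h : G.IsExploratory A v s) :
    (G.step A v s).ys = if (s.j + 1) % G.k = 0 then [] else G.query s :: s.ys := by
  simp [h.step_eq, next]

lemma step_ys_of_not_isExploratory (h : ¬ G.IsExploratory A v s) :
    (G.step A v s).ys = s.ys := by
  simp [step_eq_of_not_isExploratory h, next]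

lemma step_mem (s : GameState M E) : (G.step A v s).mem =
    G.alg.update s.mem (G.query s) (G.oracle A v (G.step A v s).j (G.query s)) := by
  by_cases h : G.IsExploratory A v s
  · rw [h.step_j, h.step_eq, next]
  · rw [step_j_of_not_isExploratory h, step_eq_of_not_isExploratory h, next]

lemma j_le_step_j (s : GameState M E) : s.j ≤ (G.step A v s).j := by
  by_cases h : G.IsExploratory A v s
  · exact h.step_j ▸ Nat.le_succ _
  · exact (step_j_of_not_isExploratory h).ge

lemma step_j_le (s : GameState M E) : (G.step A v s).j ≤ s.j + 1 := by
  by_cases h : G.IsExploratory A v s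
  · exact h.step_j.le
  · exact (step_j_of_not_isExploratory h).trans_le (Nat.le_succ _)

lemma run_j_monotone (A : Fin n → E) (v : ℕ → E) (s : GameState M E) :
    Monotone fun t => (G.run A v s t).j :=
  monotone_nat_of_le_succ fun _ => j_le_step_j _

lemma run_add (s : GameState M E) (t t' : ℕ) :
    G.run A v s (t + t') = G.run A v (G.run A v s t) t' := by
  induction t' with
  | zero => rfl
  | succ t' ih => rw [← add_assoc, run, ih, run]

lemma isExploratory_congr (h : ∀ l ≤ s.j, v l = v' l) :
    G.IsExploratory A v' s ↔ G.IsExploratory A v s := by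
  simp only [IsExploratory, IsDeep, oracle_congr h]

lemma step_congr (h : ∀ l ≤ (G.step A v s).j, v l = v' l) : G.step A v' s = G.step A v s := by
  have hs : ∀ l ≤ s.j, v l = v' l := fun l hl => h l (hl.trans (j_le_step_j s))
  have hiff : G.IsExploratory A v' s ↔ G.IsExploratory A v s := isExploratory_congr hs
  by_cases hx : G.IsExploratory A v s
  · rw [hx.step_eq, (hiff.2 hx).step_eq, oracle_congr fun l hl => h l (hl.trans hx.step_j.ge)]
  · rw [step_eq_of_not_isExploratory hx, step_eq_of_not_isExploratory (hiff.not.2 hx),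
      oracle_congr hs]

lemma run_congr (ht : (G.run A v s t).j ≤ i) (h : ∀ l ≤ i, v l = v' l) :
    G.run A v' s t = G.run A v s t := by
  induction t with
  | zero => rfl
  | succ t ih =>
    rw [run, ih ((run_j_monotone A v s t.le_succ).trans ht)]
    exact step_congr fun l hl => h l (hl.trans ht)

variable (G A) in
/-- The invariant of the game: the recorded queries are those of the current period; they are
robustly independent vectors of the unit ball, almost orthogonal to all the rows. -/
def Invariant (s : GameState M E) : Prop :=
  s.ys.length = s.j % G.k ∧ RobustlyIndependent G.β s.ys ∧
    ∀ y ∈ s.ys, ‖y‖ ≤ 1 ∧ ∀ i, |⟪A i, y⟫| ≤ G.η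

lemma Invariant.step (hη : 0 ≤ G.η) (hγ : 0 ≤ G.γ₁) (h : G.Invariant A s) :
    G.Invariant A (G.step A v s) := by
  by_cases hx : G.IsExploratory A v s
  · rw [Invariant, hx.step_ys, hx.step_j]
    obtain ⟨hlen, hrob, hys⟩ := h
    split_ifs with hmod
    · exact ⟨hmod.symm, trivial, by simp⟩
    · refine ⟨?_, ⟨hrob, hx.2⟩, List.forall_mem_cons.2
        ⟨hx.1.norm_query_le_and_abs_inner_row_le hη hγ, hys⟩⟩
      have hdiv := Nat.div_add_mod (s.j + 1) G.k
      rw [Nat.succ_div_of_not_dvd (mt Nat.mod_eq_zero_of_dvd hmod)] at hdiv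
      rw [List.length_cons, hlen]
      linarith [Nat.div_add_mod s.j G.k]
  · rwa [Invariant, step_ys_of_not_isExploratory hx, step_j_of_not_isExploratory hx]

lemma Invariant.run (hη : 0 ≤ G.η) (hγ : 0 ≤ G.γ₁) (h : G.Invariant A s) (t : ℕ) :
    G.Invariant A (G.run A v s t) := by
  induction t with
  | zero => exact h
  | succ t ih => exact ih.step hη hγ

lemma invariant_play (hη : 0 ≤ G.η) (hγ : 0 ≤ G.γ₁) (t : ℕ) :
    G.Invariant A (G.play A v t) :=
  Invariant.run hη hγ (s := GameState.init M E)
    ⟨(Nat.zero_mod _).symm, trivial, fun _ hy => absurd hy List.not_mem_nil⟩ t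

lemma run_ys_subset (htt' : t ≤ t')
    (hperiod : (G.run A v s t).j / G.k = (G.run A v s t').j / G.k) :
    (G.run A v s t).ys ⊆ (G.run A v s t').ys := by
  induction t', htt' using Nat.le_induction with
  | base => exact List.Subset.refl _
  | succ t' htt' ih =>
    have hle : (G.run A v s t).j / G.k ≤ (G.run A v s t').j / G.k :=
      Nat.div_le_div_right (run_j_monotone A v s htt')
    have hle' : (G.run A v s t').j / G.k ≤ (G.run A v s (t' + 1)).j / G.k :=
      Nat.div_le_div_right (run_j_monotone A v s t'.le_succ)
    have hsub := ih (by omega)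
    rw [run] at hle' hperiod ⊢
    by_cases hx : G.IsExploratory A v (G.run A v s t')
    · rw [hx.step_ys]
      split_ifs with hmod
      · rw [hx.step_j, Nat.succ_div_of_dvd (Nat.dvd_of_mod_eq_zero hmod)] at hperiod
        omega
      · exact List.subset_cons_of_subset _ hsub
    · rwa [step_ys_of_not_isExploratory hx]

end AdaptiveGame

lemma abs_inner_le_of_norm_sub_le {E : Type*} [NormedAddCommGroup E] [InnerProductSpace ℝ E]
    {w x u : E} {δ β : ℝ} (hδ : 0 ≤ δ) (hw : ‖w‖ ≤ 1) (hu : ‖u‖ ≤ 1) (hxu : ‖x - u‖ ≤ β)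
    (hwu : |⟪w, u⟫| ≤ δ * ‖u‖) : |⟪w, x⟫| ≤ δ + β := by
  have hcs : |⟪w, x - u⟫| ≤ 1 * β := (abs_real_inner_le_norm _ _).trans (by gcongr)
  calc |⟪w, x⟫| = |⟪w, u⟫ + ⟪w, x - u⟫| := by rw [← inner_add_right, add_sub_cancel]
    _ ≤ |⟪w, u⟫| + |⟪w, x - u⟫| := abs_add_le _ _
    _ ≤ δ * 1 + 1 * β := add_le_add (hwu.trans (by gcongr)) hcs
    _ = δ + β := by ring

namespace AdaptiveGame

variable {M n : ℕ} {E : Type} {G : AdaptiveGame M E}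

section Offsets

/-- The inequalities between the parameters which make the pieces not yet revealed invisible at the
queries already made. Here `δ` bounds the inner products of a piece with the subspace that it has to
avoid, and `κ` those with the past queries. -/
structure IsCalibrated (G : AdaptiveGame M E) (δ κ : ℝ) : Prop where
  η_pos : 0 < G.η
  η_le : G.η ≤ 1 / 2
  δ_nonneg : 0 ≤ δ
  β_nonneg : 0 ≤ G.β
  κ_nonneg : 0 ≤ κ
  four_mul_κ_le : 4 * κ ≤ G.γ₁
  two_mul_add_le : 2 * δ + 2 * G.β ≤ G.γ₂
  add_add_le : κ + δ + G.β ≤ G.γ₁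

variable {δ κ : ℝ} {i j P : ℕ}

namespace IsCalibrated

lemma γ₁_nonneg (hG : G.IsCalibrated δ κ) : 0 ≤ G.γ₁ := by
  linarith [hG.four_mul_κ_le, hG.κ_nonneg]

lemma γ₂_nonneg (hG : G.IsCalibrated δ κ) : 0 ≤ G.γ₂ := by
  linarith [hG.two_mul_add_le, hG.δ_nonneg, hG.β_nonneg]

lemma offset_nonneg (hG : G.IsCalibrated δ κ) (j : ℕ) : 0 ≤ G.offset j := by
  have hγ₁ := hG.γ₁_nonneg
  have hγ₂ := hG.γ₂_nonneg
  rcases j with _ | j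
  · exact le_rfl
  · rw [offset]
    positivity

lemma period_mul_le_offset_succ (hG : G.IsCalibrated δ κ) (hji : j ≤ i) :
    ((j / G.k : ℕ) + 1) * G.γ₁ ≤ G.offset (i + 1) := by
  have hγ₁ := hG.γ₁_nonneg
  have hγ₂ := hG.γ₂_nonneg
  calc ((j / G.k : ℕ) + 1) * G.γ₁ ≤ ((i / G.k : ℕ) + 1) * G.γ₁ := by gcongr
    _ ≤ G.offset (i + 1) := le_add_of_nonneg_right (by positivity)

lemma offset_add_γ₂_le (hG : G.IsCalibrated δ κ) (hji : j ≤ i) :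
    G.offset j + G.γ₂ ≤ G.offset (i + 1) := by
  have hγ₁ := hG.γ₁_nonneg
  have hγ₂ := hG.γ₂_nonneg
  have hmul : j * G.γ₂ ≤ i * G.γ₂ := by gcongr
  rcases j with _ | j
  · have hpos : 0 ≤ (((i / G.k : ℕ) : ℝ) + 1) * G.γ₁ := by positivity
    rw [offset, offset]
    push_cast at hmul
    linarith
  · have hdiv : ((j / G.k : ℕ) : ℝ) * G.γ₁ ≤ (i / G.k : ℕ) * G.γ₁ := by gcongr; omega
    rw [offset, offset]
    push_cast at hmul
    linarith

lemma offset_add_γ₁_le (hG : G.IsCalibrated δ κ) (hji : j ≤ i)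
    (hperiod : (j - 1) / G.k < i / G.k) : G.offset j + G.γ₁ ≤ G.offset (i + 1) := by
  have hγ₁ := hG.γ₁_nonneg
  have hγ₂ := hG.γ₂_nonneg
  rcases j with _ | j
  · simpa [offset] using hG.period_mul_le_offset_succ i.zero_le
  · have hdiv : (((j / G.k : ℕ) : ℝ) + 1) * G.γ₁ ≤ (i / G.k : ℕ) * G.γ₁ := by
      gcongr
      exact_mod_cast hperiod
    have hmul : ((j + 1 : ℕ) : ℝ) * G.γ₂ ≤ i * G.γ₂ := by gcongr
    rw [offset, offset]
    push_cast at hmul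
    linarith

lemma offset_le (hG : G.IsCalibrated δ κ) (hj : j ≤ G.k * P) (hγ : (G.k * P : ℕ) * G.γ₂ ≤ G.γ₁) :
    G.offset j ≤ (P + 1) * G.γ₁ := by
  have hγ₁ := hG.γ₁_nonneg
  have hγ₂ := hG.γ₂_nonneg
  rcases j with _ | j
  · rw [offset]
    positivity
  · have hdiv : j / G.k + 1 ≤ P := Nat.div_lt_of_lt_mul hj
    calc G.offset (j + 1) = ((j / G.k + 1 : ℕ) : ℝ) * G.γ₁ + (j + 1 : ℕ) * G.γ₂ := by
          rw [offset]
          push_cast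
          rfl
      _ ≤ P * G.γ₁ + (G.k * P : ℕ) * G.γ₂ := by gcongr
      _ ≤ (P + 1) * G.γ₁ := by linarith

end IsCalibrated

end Offsets

variable [NormedAddCommGroup E] [InnerProductSpace ℝ E] [FiniteDimensional ℝ E]
  {A : Fin n → E} {v : ℕ → E} {s : GameState M E} {δ κ : ℝ} {N P T i t t₀ t₁ : ℕ}

section Trajectory

lemma exists_isExploratory_of_lt_of_le (h₀ : (G.run A v s t₀).j < i)
    (hT : i ≤ (G.run A v s T).j) :
    ∃ t, t₀ ≤ t ∧ t < T ∧ G.IsExploratory A v (G.run A v s t) ∧ (G.run A v s t).j + 1 = i := by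
  have ht₀ : t₀ ≤ T := by
    by_contra! h
    exact absurd (run_j_monotone (G := G) A v s h.le) (by simpa using h₀.trans_le hT)
  induction T, ht₀ using Nat.le_induction with
  | base => omega
  | succ T ht₀ ih =>
    by_cases hi : i ≤ (G.run A v s T).j
    · obtain ⟨t, ht, htT, h⟩ := ih hi
      exact ⟨t, ht, htT.trans T.lt_succ_self, h⟩
    · have hx : G.IsExploratory A v (G.run A v s T) := by
        by_contra hx
        rw [run, step_j_of_not_isExploratory hx] at hT
        exact hi hT
      rw [run, hx.step_j] at hT
      exact ⟨T, ht₀, T.lt_succ_self, hx, by omega⟩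

lemma run_ys_eq (ht : t₀ ≤ t) (hj : (G.run A v s t₀).j = (G.run A v s t).j) :
    (G.run A v s t).ys = (G.run A v s t₀).ys := by
  induction t, ht using Nat.le_induction with
  | base => rfl
  | succ t ht ih =>
    have hmono : (G.run A v s t₀).j ≤ (G.run A v s t).j := run_j_monotone A v s ht
    have hx : ¬ G.IsExploratory A v (G.run A v s t) := fun hx => by
      rw [run, hx.step_j] at hj
      omega
    rw [run, step_j_of_not_isExploratory hx] at hj
    rw [run, step_ys_of_not_isExploratory hx, ih hj]

lemma IsDeep.exists_mem_span_step_ys (hη : 0 ≤ G.η) (hγ : 0 ≤ G.γ₁) (hβ : 0 ≤ G.β)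
    (hdeep : G.IsDeep A v s) (hperiod : (G.step A v s).j / G.k = s.j / G.k) :
    ∃ u ∈ Submodule.span ℝ {y | y ∈ (G.step A v s).ys}, ‖u‖ ≤ 1 ∧ ‖G.query s - u‖ ≤ G.β := by
  have hnorm := (hdeep.norm_query_le_and_abs_inner_row_le hη hγ).1
  by_cases hx : G.IsExploratory A v s
  · refine ⟨G.query s, Submodule.subset_span ?_, hnorm, by simpa using hβ⟩
    have hmod : (s.j + 1) % G.k ≠ 0 := fun hmod => by
      rw [hx.step_j, Nat.succ_div_of_dvd (Nat.dvd_of_mod_eq_zero hmod)] at hperiod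
      omega
    simp [hx.step_ys, hmod]
  · rw [step_ys_of_not_isExploratory hx]
    exact ⟨_, Submodule.starProjection_apply_mem _ _,
      (Submodule.norm_starProjection_apply_le _ _).trans hnorm,
      (not_le.1 fun hβ => hx ⟨hdeep, hβ⟩).le⟩

end Trajectory

section Admissible

/-- The span of the rows. -/
def rowSpan (A : Fin n → E) : Submodule ℝ E := Submodule.span ℝ (Set.range A)

variable (G) in
/-- The subspace to which the piece revealed in state `s` should be almost orthogonal: it is spanned
by the exploratory queries of the period, the current one included, and by the projections of the
previous pieces to the orthogonal complement of the rows. -/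
noncomputable def avoidedSubspace (A : Fin n → E) (v : ℕ → E) (s : GameState M E) :
    Submodule ℝ E :=
  Submodule.span ℝ {y | y ∈ G.query s :: s.ys} ⊔
    Submodule.span ℝ ((fun i => (rowSpan A)ᗮ.starProjection (v i)) '' Set.Iic s.j)

open Classical in
variable (G) in
/-- The queries made up to time `t`. -/
noncomputable def pastQueries (A : Fin n → E) (v : ℕ → E) (t : ℕ) : Finset E :=
  (Finset.range (t + 1)).image fun t' => G.query (G.play A v t')

variable (G) in
/-- Each of the pieces with index at most `N` revealed before time `T` is a good direction with
respect to what the game knew at the time. -/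
def IsAdmissible (A : Fin n → E) (v : ℕ → E) (δ κ : ℝ) (T N : ℕ) : Prop :=
  1 / 8 ≤ ‖(rowSpan A)ᗮ.starProjection (v 0)‖ ∧
    ∀ t < T, G.IsExploratory A v (G.play A v t) → (G.play A v t).j < N →
      IsGoodDirection (rowSpan A) (G.avoidedSubspace A v (G.play A v t)) (G.pastQueries A v t) δ κ
        (v ((G.play A v t).j + 1))

namespace IsAdmissible

lemma abs_inner_le_of_mem_span_ys (hG : G.IsCalibrated δ κ) (hv : G.IsAdmissible A v δ κ T N)
    (ht : t ≤ T) (hN : (G.play A v t).j ≤ N) {u : E}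
    (hu : u ∈ Submodule.span ℝ {y | y ∈ (G.play A v t).ys}) :
    |⟪v (G.play A v t).j, u⟫| ≤ δ * ‖u‖ := by
  rcases (G.play A v t).j.eq_zero_or_pos with h₀ | hpos
  · have hys : (G.play A v t).ys = [] := by
      rw [← List.length_eq_zero_iff, (invariant_play hG.η_pos.le hG.γ₁_nonneg t).1, h₀,
        Nat.zero_mod]
    obtain rfl : u = 0 := by simpa [hys] using hu
    simp
  · obtain ⟨t₁, -, ht₁, hx, hj⟩ : ∃ t₁, 0 ≤ t₁ ∧ t₁ < t ∧ G.IsExploratory A v (G.play A v t₁) ∧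
        (G.play A v t₁).j + 1 = (G.play A v t).j :=
      exists_isExploratory_of_lt_of_le (t₀ := 0) hpos le_rfl
    have hys : (G.play A v t).ys = (G.step A v (G.play A v t₁)).ys :=
      run_ys_eq (t₀ := t₁ + 1) ht₁ (hx.step_j.trans hj)
    rw [← hj]
    refine (hv.2 t₁ (by omega) hx (by omega)).1 u (Submodule.mem_sup_left ?_)
    refine Submodule.span_mono (fun y hy => ?_) hu
    rw [hys, hx.step_ys] at hy
    split_ifs at hy
    · simp at hy
    · exact hy

lemma abs_inner_current_piece_le (hG : G.IsCalibrated δ κ) (hv₁ : ∀ i, ‖v i‖ ≤ 1)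
    (hv : G.IsAdmissible A v δ κ T N) (ht : t < T) (hN : (G.play A v (t + 1)).j ≤ N)
    (hdeep : G.IsDeep A v (G.play A v t)) :
    |⟪v (G.play A v (t + 1)).j, G.query (G.play A v t)⟫| ≤ δ + G.β := by
  have hnorm := (hdeep.norm_query_le_and_abs_inner_row_le hG.η_pos.le hG.γ₁_nonneg).1
  rw [show G.play A v (t + 1) = G.step A v (G.play A v t) from rfl] at hN ⊢
  by_cases hx : G.IsExploratory A v (G.play A v t)
  · rw [hx.step_j] at hN ⊢
    refine abs_inner_le_of_norm_sub_le hG.δ_nonneg (hv₁ _) hnorm (by simpa using hG.β_nonneg) ?_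
    exact (hv.2 t ht hx hN).1 _ (Submodule.mem_sup_left (Submodule.subset_span (by simp)))
  · rw [step_j_of_not_isExploratory hx] at hN ⊢
    exact abs_inner_le_of_norm_sub_le hG.δ_nonneg (hv₁ _)
      ((Submodule.norm_starProjection_apply_le _ _).trans hnorm)
      (not_le.1 fun hβ => hx ⟨hdeep, hβ⟩).le
      (hv.abs_inner_le_of_mem_span_ys hG ht.le hN (Submodule.starProjection_apply_mem _ _))

lemma abs_inner_le_of_mem_pastQueries (hv : G.IsAdmissible A v δ κ T N)
    (hi : (G.play A v (t + 1)).j < i) (hiT : i ≤ (G.play A v T).j) (hiN : i ≤ N) :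
    |⟪v i, G.query (G.play A v t)⟫| ≤ κ * ‖G.query (G.play A v t)‖ := by
  classical
  obtain ⟨t₁, htt₁, ht₁, hx, rfl⟩ := exists_isExploratory_of_lt_of_le hi hiT
  exact (hv.2 t₁ ht₁ hx hiN).2.1 _ (Finset.mem_image_of_mem _ (Finset.mem_range.2 (by omega)))

lemma abs_inner_future_piece_le (hG : G.IsCalibrated δ κ) (hv₁ : ∀ i, ‖v i‖ ≤ 1)
    (hv : G.IsAdmissible A v δ κ T N) (hi : (G.play A v (t + 1)).j ≤ i)
    (hiT : i < (G.play A v T).j) (hiN : i < N) (hdeep : G.IsDeep A v (G.play A v t))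
    (hperiod : i / G.k = (G.play A v t).j / G.k) :
    |⟪v (i + 1), G.query (G.play A v t)⟫| ≤ δ + G.β := by
  obtain ⟨t₁, htt₁, ht₁, hx, hj⟩ : ∃ t₁, t + 1 ≤ t₁ ∧ t₁ < T ∧
      G.IsExploratory A v (G.play A v t₁) ∧ (G.play A v t₁).j + 1 = i + 1 :=
    exists_isExploratory_of_lt_of_le (t₀ := t + 1) (Nat.lt_succ_of_le hi) hiT
  obtain rfl : (G.play A v t₁).j = i := by omega
  have hstep : (G.play A v (t + 1)).j / G.k = (G.play A v t).j / G.k := by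
    have hle : (G.play A v t).j / G.k ≤ (G.play A v (t + 1)).j / G.k :=
      Nat.div_le_div_right (j_le_step_j _)
    have hle' := Nat.div_le_div_right (c := G.k) hi
    omega
  obtain ⟨u, hu, hu₁, hxu⟩ :=
    hdeep.exists_mem_span_step_ys hG.η_pos.le hG.γ₁_nonneg hG.β_nonneg hstep
  refine abs_inner_le_of_norm_sub_le hG.δ_nonneg (hv₁ _) hu₁ hxu ?_
  refine (hv.2 t₁ ht₁ hx hiN).1 u (Submodule.mem_sup_left (Submodule.span_mono ?_ hu))
  exact fun y hy => List.mem_cons_of_mem _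
    (run_ys_subset htt₁ (hstep.trans hperiod.symm) hy)

lemma inner_future_piece_sub_offset_le (hG : G.IsCalibrated δ κ) (hv₁ : ∀ i, ‖v i‖ ≤ 1)
    (hv : G.IsAdmissible A v δ κ T N) (ht : t < T) (hi : (G.play A v (t + 1)).j ≤ i)
    (hiT : i < (G.play A v T).j) (hiN : i < N) (hdeep : G.IsDeep A v (G.play A v t)) :
    ⟪v (i + 1), G.query (G.play A v t)⟫ - G.offset (i + 1) ≤
      ⟪v (G.play A v (t + 1)).j, G.query (G.play A v t)⟫ - G.offset (G.play A v (t + 1)).j := by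
  have hcur := (abs_le.1 (hv.abs_inner_current_piece_le hG hv₁ ht (by omega) hdeep)).1
  rcases eq_or_ne (i / G.k) ((G.play A v t).j / G.k) with hperiod | hperiod
  · have hfut := hv.abs_inner_future_piece_le hG hv₁ hi hiT hiN hdeep hperiod
    linarith [(abs_le.1 hfut).2, hG.offset_add_γ₂_le hi, hG.two_mul_add_le]
  · have hfut := hv.abs_inner_le_of_mem_pastQueries (Nat.lt_succ_of_le hi) hiT hiN
    have hnorm := (hdeep.norm_query_le_and_abs_inner_row_le hG.η_pos.le hG.γ₁_nonneg).1
    have hκ : κ * ‖G.query (G.play A v t)‖ ≤ κ * 1 := by gcongr; exact hG.κ_nonneg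
    have hlt : ((G.play A v (t + 1)).j - 1) / G.k < i / G.k := by
      have hle : (G.play A v (t + 1)).j ≤ (G.play A v t).j + 1 := step_j_le _
      have hge : (G.play A v t).j ≤ (G.play A v (t + 1)).j := j_le_step_j _
      have hdiv : ((G.play A v (t + 1)).j - 1) / G.k ≤ (G.play A v t).j / G.k :=
        Nat.div_le_div_right (by omega)
      have hdiv' := Nat.div_le_div_right (c := G.k) (hge.trans hi)
      omega
    linarith [(abs_le.1 hfut).2, hG.offset_add_γ₁_le hi hlt, hG.add_add_le]

lemma future_piece_le_threshold (hG : G.IsCalibrated δ κ) (hv : G.IsAdmissible A v δ κ T N)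
    (hi : (G.play A v (t + 1)).j ≤ i) (hiT : i < (G.play A v T).j) (hiN : i < N)
    (hnorm : ‖G.query (G.play A v t)‖ ≤ 2) :
    G.η * (⟪v (i + 1), G.query (G.play A v t)⟫ - G.offset (i + 1)) ≤
      G.threshold (G.play A v t).j := by
  have hη := hG.η_pos
  have hκ : κ * ‖G.query (G.play A v t)‖ ≤ κ * 2 := by gcongr; exact hG.κ_nonneg
  have hfut := hv.abs_inner_le_of_mem_pastQueries (Nat.lt_succ_of_le hi) hiT hiN
  have hoff := hG.period_mul_le_offset_succ ((j_le_step_j (G.play A v t)).trans hi)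
  rw [threshold, ← mul_neg]
  gcongr
  linarith [(abs_le.1 hfut).2, hG.four_mul_κ_le]

omit [FiniteDimensional ℝ E] in
lemma piece_le_of_two_le_norm (hG : G.IsCalibrated δ κ) (hv₁ : ∀ i, ‖v i‖ ≤ 1) {x : E}
    (hx : 2 ≤ ‖x‖) (i j : ℕ) :
    G.η * (⟪v (i + 1), x⟫ - G.offset (i + 1)) ≤ (G.oracle A v j x).1 := by
  have hη := hG.η_pos
  have hγ₁ := hG.γ₁_nonneg
  have hoff : 0 ≤ G.offset (i + 1) :=
    le_trans (by positivity) (hG.period_mul_le_offset_succ i.zero_le)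
  have hcs : ⟪v (i + 1), x⟫ ≤ 1 * ‖x‖ := (real_inner_le_norm _ _).trans (by gcongr; exact hv₁ _)
  calc G.η * (⟪v (i + 1), x⟫ - G.offset (i + 1)) ≤ G.η * ‖x‖ := by gcongr; linarith
    _ ≤ 1 / 2 * ‖x‖ := by gcongr; exact hG.η_le
    _ ≤ ‖x‖ - 1 := by linarith
    _ ≤ (G.oracle A v j x).1 := norm_sub_one_le_oracle j x

lemma future_piece_le (hG : G.IsCalibrated δ κ) (hv₁ : ∀ i, ‖v i‖ ≤ 1)
    (hv : G.IsAdmissible A v δ κ T N) (ht : t < T) (hi : (G.play A v (t + 1)).j < i)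
    (hiT : i ≤ (G.play A v T).j) (hiN : i ≤ N) :
    (G.piece v i (G.query (G.play A v t))).1 ≤
      (G.oracle A v (G.play A v (t + 1)).j (G.query (G.play A v t))).1 := by
  obtain ⟨i, rfl⟩ : ∃ i', i = i' + 1 := ⟨i - 1, by omega⟩
  rw [piece_fst]
  rcases le_total 2 ‖G.query (G.play A v t)‖ with hfar | hnear
  · exact piece_le_of_two_le_norm hG hv₁ hfar _ _
  by_cases hdeep : G.IsDeep A v (G.play A v t)
  · refine le_trans (mul_le_mul_of_nonneg_left ?_ hG.η_pos.le) (piece_le_oracle le_rfl _)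
    exact hv.inner_future_piece_sub_offset_le hG hv₁ ht (Nat.lt_succ_iff.1 hi) hiT hiN hdeep
  · have hj : (G.play A v (t + 1)).j = (G.play A v t).j :=
      step_j_of_not_isExploratory fun hx => hdeep hx.1
    rw [hj]
    exact (hv.future_piece_le_threshold hG (Nat.lt_succ_iff.1 hi) hiT hiN hnear).trans
      (not_lt.1 hdeep)

lemma neg_le_oracle_query (hG : G.IsCalibrated δ κ) (hv₁ : ∀ i, ‖v i‖ ≤ 1)
    (hv : G.IsAdmissible A v δ κ T (G.k * P)) (hγ : (G.k * P : ℕ) * G.γ₂ ≤ G.γ₁) (ht : t < T)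
    (hN : (G.play A v (t + 1)).j ≤ G.k * P) :
    -(G.η * ((P + 1) * G.γ₁ + δ + G.β)) ≤
      (G.oracle A v (G.play A v (t + 1)).j (G.query (G.play A v t))).1 := by
  have hη := hG.η_pos
  have hγ₁ := hG.γ₁_nonneg
  rw [← mul_neg]
  by_cases hdeep : G.IsDeep A v (G.play A v t)
  · refine le_trans ?_ (piece_le_oracle le_rfl _)
    have hcur := hv.abs_inner_current_piece_le hG hv₁ ht hN hdeep
    gcongr
    linarith [(abs_le.1 hcur).1, hG.offset_le hN hγ]
  · have hj : (G.play A v (t + 1)).j = (G.play A v t).j :=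
      step_j_of_not_isExploratory fun hx => hdeep hx.1
    rw [hj] at hN ⊢
    have hdiv : (((G.play A v t).j / G.k : ℕ) : ℝ) * G.γ₁ ≤ P * G.γ₁ := by
      gcongr
      exact Nat.div_le_of_le_mul hN
    refine le_trans ?_ (not_lt.1 hdeep)
    rw [threshold, ← mul_neg]
    gcongr
    linarith [hG.δ_nonneg, hG.β_nonneg]

lemma mem_eq_play_mem (hG : G.IsCalibrated δ κ) (hv₁ : ∀ i, ‖v i‖ ≤ 1)
    (hv : G.IsAdmissible A v δ κ T N) (hN : (G.play A v T).j ≤ N) (ht : t ≤ T) :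
    G.alg.mem (G.oracle A v (G.play A v T).j) t = (G.play A v t).mem := by
  induction t with
  | zero => rfl
  | succ t ih =>
    have hinvisible : G.oracle A v (G.play A v T).j (G.query (G.play A v t)) =
        G.oracle A v (G.play A v (t + 1)).j (G.query (G.play A v t)) :=
      oracle_eq_of_forall_piece_le (run_j_monotone A v _ ht) fun i hi hiT =>
        hv.future_piece_le hG hv₁ ht hi hiT (hiT.trans hN)
    have hquery : G.alg.query (G.play A v t).mem = G.query (G.play A v t) := rfl
    rw [MemAlg.mem, ih (Nat.le_of_succ_le ht), hquery, hinvisible]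
    exact (step_mem _).symm

end IsAdmissible

end Admissible

end AdaptiveGame

section AlmostOrthogonal

variable {E ι : Type*} [NormedAddCommGroup E] [InnerProductSpace ℝ E] {S : Finset ι} {u : ι → E}
  {δ : ℝ}

lemma abs_inner_sum_sub_norm_sq_le
    (hδ : (S : Set ι).Pairwise fun i j => |⟪u i, u j⟫| ≤ δ) {i : ι} (hi : i ∈ S) :
    |⟪u i, ∑ j ∈ S, u j⟫ - ‖u i‖ ^ 2| ≤ (S.card - 1) * δ := by
  classical
  calc |⟪u i, ∑ j ∈ S, u j⟫ - ‖u i‖ ^ 2| = |∑ j ∈ S.erase i, ⟪u i, u j⟫| := by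
        rw [inner_sum, ← Finset.add_sum_erase _ _ hi, real_inner_self_eq_norm_sq,
          add_sub_cancel_left]
    _ ≤ ∑ j ∈ S.erase i, |⟪u i, u j⟫| := Finset.abs_sum_le_sum_abs _ _
    _ ≤ (S.erase i).card • δ := Finset.sum_le_card_nsmul _ _ _ fun j hj =>
        hδ hi (Finset.mem_of_mem_erase hj) (Finset.ne_of_mem_erase hj).symm
    _ = (S.card - 1) * δ := by
        rw [nsmul_eq_mul, Finset.card_erase_of_mem hi,
          Nat.cast_pred (Finset.card_pos.2 ⟨i, hi⟩)]

lemma norm_sum_sq_le_of_pairwise (hu : ∀ i ∈ S, ‖u i‖ ≤ 1)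
    (hδ : (S : Set ι).Pairwise fun i j => |⟪u i, u j⟫| ≤ δ) :
    ‖∑ i ∈ S, u i‖ ^ 2 ≤ S.card * (1 + (S.card - 1) * δ) := by
  rw [← real_inner_self_eq_norm_sq, sum_inner, ← nsmul_eq_mul]
  refine Finset.sum_le_card_nsmul _ _ _ fun i hi => ?_
  have hsq : ‖u i‖ ^ 2 ≤ 1 := pow_le_one₀ (norm_nonneg _) (hu i hi)
  linarith [(abs_le.1 (abs_inner_sum_sub_norm_sq_le hδ hi)).2]

end AlmostOrthogonal

lemma inner_starProjection_right_eq {E : Type*} [NormedAddCommGroup E] [InnerProductSpace ℝ E]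
    {K : Submodule ℝ E} [K.HasOrthogonalProjection] (w u : E) :
    ⟪w, K.starProjection u⟫ = ⟪K.starProjection w, K.starProjection u⟫ := by
  rw [Submodule.inner_starProjection_left_eq_right,
    Submodule.starProjection_eq_self_iff.2 (Submodule.starProjection_apply_mem _ _)]

namespace AdaptiveGame

section Success

variable {M n : ℕ} {E : Type} {G : AdaptiveGame M E} [NormedAddCommGroup E] [InnerProductSpace ℝ E]
  {A : Fin n → E} {v : ℕ → E} {δ κ : ℝ} {N T : ℕ}

lemma IsCalibrated.isUnitSubgradientOracle_oracle (hG : G.IsCalibrated δ κ) (hv₁ : ∀ i, ‖v i‖ ≤ 1)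
    (hA : ∀ i, ‖A i‖ ≤ 1) (j : ℕ) : IsUnitSubgradientOracle (G.oracle A v j) := by
  refine (IsUnitSubgradientOracle.dist 0 1).listMax fun O hO => ?_
  rcases List.mem_append.1 hO with hO | hO
  · obtain ⟨i, rfl⟩ := List.mem_ofFn.1 hO
    exact .abs (hA i) _
  · obtain ⟨i, -, rfl⟩ := List.mem_map.1 hO
    refine .affine ?_ _
    rw [norm_smul, Real.norm_of_nonneg hG.η_pos.le]
    exact mul_le_one₀ (hG.η_le.trans (by norm_num)) (norm_nonneg _) (hv₁ i)

variable [FiniteDimensional ℝ E]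

namespace IsAdmissible

lemma isGoodDirection (hv : G.IsAdmissible A v δ κ T N) (hN : (G.play A v T).j ≤ N) {l : ℕ}
    (hl : l + 1 ≤ (G.play A v T).j) :
    ∃ t, (G.play A v t).j = l ∧ IsGoodDirection (rowSpan A)
      (G.avoidedSubspace A v (G.play A v t)) (G.pastQueries A v t) δ κ (v (l + 1)) := by
  obtain ⟨t, -, ht, hx, hj⟩ : ∃ t, 0 ≤ t ∧ t < T ∧ G.IsExploratory A v (G.play A v t) ∧
      (G.play A v t).j + 1 = l + 1 := exists_isExploratory_of_lt_of_le (t₀ := 0) l.succ_pos hl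
  obtain rfl : (G.play A v t).j = l := by omega
  exact ⟨t, rfl, hv.2 t ht hx (by omega)⟩

lemma eighth_le_norm_starProjection (hv : G.IsAdmissible A v δ κ T N)
    (hN : (G.play A v T).j ≤ N) {l : ℕ} (hl : l ≤ (G.play A v T).j) :
    1 / 8 ≤ ‖(rowSpan A)ᗮ.starProjection (v l)‖ := by
  rcases l with _ | l
  · exact hv.1
  · obtain ⟨_, _, hgood⟩ := hv.isGoodDirection hN hl
    exact hgood.2.2

lemma abs_inner_starProjection_le (hv₁ : ∀ i, ‖v i‖ ≤ 1) (hv : G.IsAdmissible A v δ κ T N)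
    (hδ : 0 ≤ δ) (hN : (G.play A v T).j ≤ N) {i l : ℕ} (hil : i < l)
    (hl : l ≤ (G.play A v T).j) :
    |⟪(rowSpan A)ᗮ.starProjection (v l), (rowSpan A)ᗮ.starProjection (v i)⟫| ≤ δ := by
  obtain ⟨l, rfl⟩ : ∃ l', l = l' + 1 := ⟨l - 1, by omega⟩
  obtain ⟨t, hj, hgood⟩ := hv.isGoodDirection hN hl
  have hmem : (rowSpan A)ᗮ.starProjection (v i) ∈ G.avoidedSubspace A v (G.play A v t) :=
    Submodule.mem_sup_right (Submodule.subset_span ⟨i, by simp [hj]; omega, rfl⟩)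
  have hnorm := (Submodule.norm_starProjection_apply_le (rowSpan A)ᗮ (v i)).trans (hv₁ i)
  rw [← inner_starProjection_right_eq]
  exact (hgood.1 _ hmem).trans (mul_le_of_le_one_right hδ hnorm)

lemma exists_mem_orthogonal_forall_le_inner (hv₁ : ∀ i, ‖v i‖ ≤ 1)
    (hv : G.IsAdmissible A v δ κ T N) (hδ : 0 ≤ δ) (hN : (G.play A v T).j ≤ N)
    (hδN : 128 * (N * δ) ≤ 1) :
    ∃ w ∈ (rowSpan A)ᗮ, ‖w‖ ^ 2 ≤ 2 * (N + 1) ∧ ∀ l ≤ (G.play A v T).j, 1 / 128 ≤ ⟪v l, w⟫ := by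
  set J := (G.play A v T).j
  set u : ℕ → E := fun i => (rowSpan A)ᗮ.starProjection (v i)
  have hu : ∀ i, ‖u i‖ ≤ 1 := fun i =>
    (Submodule.norm_starProjection_apply_le _ _).trans (hv₁ i)
  have hpair : (Finset.range (J + 1) : Set ℕ).Pairwise fun i l => |⟪u i, u l⟫| ≤ δ := by
    intro i hi l hl hne
    simp only [Finset.coe_range, Set.mem_Iio, Nat.lt_succ_iff] at hi hl
    rcases hne.lt_or_gt with h | h
    · rw [real_inner_comm]
      exact hv.abs_inner_starProjection_le hv₁ hδ hN h hl
    · exact hv.abs_inner_starProjection_le hv₁ hδ hN h hi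
  have hJN : (J : ℝ) ≤ N := by exact_mod_cast hN
  have hJδ : (J : ℝ) * δ ≤ 1 / 128 := by linarith [mul_le_mul_of_nonneg_right hJN hδ]
  refine ⟨∑ i ∈ Finset.range (J + 1), u i,
    Submodule.sum_mem _ fun i _ => Submodule.starProjection_apply_mem _ _, ?_, fun l hl => ?_⟩
  · have hsum := norm_sum_sq_le_of_pairwise (fun i _ => hu i) hpair
    rw [Finset.card_range, Nat.cast_add_one, add_sub_cancel_right] at hsum
    nlinarith [J.cast_nonneg (α := ℝ)]
  · have hsum := abs_inner_sum_sub_norm_sq_le hpair (Finset.mem_range_succ_iff.2 hl)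
    rw [Finset.card_range, Nat.cast_add_one, add_sub_cancel_right] at hsum
    have hsq : (1 / 8 : ℝ) ^ 2 ≤ ‖u l‖ ^ 2 := by
      gcongr
      exact hv.eighth_le_norm_starProjection hN hl
    have heq : ⟪v l, ∑ i ∈ Finset.range (J + 1), u i⟫ =
        ⟪u l, ∑ i ∈ Finset.range (J + 1), u i⟫ := by
      simp only [inner_sum, u, inner_starProjection_right_eq (v l)]
    rw [heq]
    linarith [(abs_le.1 hsum).1]

lemma exists_oracle_le (hG : G.IsCalibrated δ κ) (hv₁ : ∀ i, ‖v i‖ ≤ 1)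
    (hv : G.IsAdmissible A v δ κ T N) (hN : (G.play A v T).j ≤ N) (hδN : 128 * (N * δ) ≤ 1) :
    ∃ x, ‖x‖ ≤ 1 ∧ (G.oracle A v (G.play A v T).j x).1 ≤ -(G.η / (400 * √(N + 1))) := by
  obtain ⟨w, hwA, hw, hvw⟩ := hv.exists_mem_orthogonal_forall_le_inner hv₁ hG.δ_nonneg hN hδN
  have hη := hG.η_pos
  set r := √((N : ℝ) + 1)
  have hr₁ : 1 ≤ r := Real.one_le_sqrt.2 (by linarith [N.cast_nonneg (α := ℝ)])
  have hwr : ‖w‖ ≤ 3 / 2 * r := by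
    refine abs_le_of_sq_le_sq' ?_ (by positivity) |>.2
    rw [mul_pow, Real.sq_sqrt (by positivity)]
    linarith
  set x := -((3 * r)⁻¹ • w)
  have hx : ‖x‖ ≤ 1 / 2 := by
    rw [norm_neg, norm_smul, Real.norm_of_nonneg (by positivity), inv_mul_le_iff₀ (by positivity)]
    linarith
  have hle : G.η / (400 * r) ≤ 1 / 2 :=
    (div_le_self hη.le (by linarith)).trans hG.η_le
  refine ⟨x, by linarith, oracle_fst_le_iff.2 ⟨by linarith, fun i => ?_, fun l hl => ?_⟩⟩
  · have hrow : ⟪A i, x⟫ = 0 := Submodule.inner_right_of_mem_orthogonal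
      (K := rowSpan A)
      (Submodule.subset_span (Set.mem_range_self i))
      (Submodule.neg_mem _ (Submodule.smul_mem _ _ hwA))
    rw [hrow, abs_zero, zero_sub, neg_le_neg_iff]
    exact div_le_self hη.le (by linarith)
  · rw [div_eq_mul_inv, ← mul_neg]
    refine mul_le_mul_of_nonneg_left ?_ hη.le
    have hinner : (400 * r)⁻¹ ≤ (3 * r)⁻¹ * ⟪v l, w⟫ := by
      calc (400 * r)⁻¹ ≤ (384 * r)⁻¹ := by gcongr; norm_num
        _ = (3 * r)⁻¹ * (1 / 128) := by rw [mul_inv, mul_inv]; ring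
        _ ≤ (3 * r)⁻¹ * ⟪v l, w⟫ := by gcongr; exact hvw l hl
    rw [inner_neg_right, real_inner_smul_right]
    linarith [hG.offset_nonneg l]

end IsAdmissible

end Success

variable {M n d : ℕ} {G : AdaptiveGame M (EuclideanSpace ℝ (Fin d))}
  {A : Fin n → EuclideanSpace ℝ (Fin d)} {v : ℕ → EuclideanSpace ℝ (Fin d)} {δ κ : ℝ} {P T : ℕ}

lemma IsAdmissible.le_play_j_of_minimizesConvex (hG : G.IsCalibrated δ κ) (hv₁ : ∀ i, ‖v i‖ ≤ 1)
    (hA : ∀ i, ‖A i‖ ≤ 1) (hv : G.IsAdmissible A v δ κ T (G.k * P)) (hT : 1 ≤ T) {ε : ℝ}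
    (hmin : MinimizesConvex d G.alg T ε) (hγ : (G.k * P : ℕ) * G.γ₂ ≤ G.γ₁)
    (hδN : 128 * ((G.k * P : ℕ) * δ) ≤ 1)
    (hgap : G.η * ((P + 1) * G.γ₁ + δ + G.β) + ε < G.η / (400 * √((G.k * P : ℕ) + 1))) :
    G.k * P ≤ (G.play A v T).j := by
  by_contra! hlt
  obtain ⟨T, rfl⟩ : ∃ t, T = t + 1 := ⟨T - 1, by omega⟩
  obtain ⟨x, hx, hlow⟩ := hv.exists_oracle_le hG hv₁ hlt.le hδN
  have hopt := hmin.output_value_le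
    (hG.isUnitSubgradientOracle_oracle (v := v) hv₁ hA (G.play A v (T + 1)).j) hx
  have houtput : G.alg.output (G.oracle A v (G.play A v (T + 1)).j) (T + 1) =
      G.query (G.play A v T) :=
    congrArg G.alg.query (hv.mem_eq_play_mem hG hv₁ hlt.le T.le_succ)
  rw [houtput] at hopt
  linarith [hv.neg_le_oracle_query hG hv₁ hγ T.lt_succ_self hlt.le]

end AdaptiveGame

section Counting

open scoped Finset

open Classical in
lemma card_le_of_forall_notMem_mem {ι α : Type*} [Fintype ι] [DecidableEq ι]
    [Fintype α] {S : Finset (ι → α)} {I : Finset ι} {F : (ι → α) → Finset α} {c : ℝ}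
    (hS : ∀ a ∈ S, ∀ i ∉ I, a i ∈ F a) (hF : ∀ a a', (∀ i ∈ I, a i = a' i) → F a = F a')
    (hc₀ : 0 ≤ c) (hc : ∀ a, (#(F a) : ℝ) ≤ c) :
    (#S : ℝ) ≤ Fintype.card α ^ #I * c ^ #Iᶜ := by
  have hfiber : ∀ b ∈ S.image I.restrict, (#{a ∈ S | I.restrict a = b} : ℝ) ≤ c ^ #Iᶜ := by
    intro b hb
    obtain ⟨a₀, -, rfl⟩ := Finset.mem_image.1 hb
    have hsub : (S.filter fun a => I.restrict a = I.restrict a₀) ⊆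
        Fintype.piFinset fun i => if i ∈ I then {a₀ i} else F a₀ := by
      intro a ha
      obtain ⟨haS, hres⟩ := Finset.mem_filter.1 ha
      have heq : ∀ i ∈ I, a i = a₀ i := fun i hi => congrFun hres ⟨i, hi⟩
      refine Fintype.mem_piFinset.2 fun i => ?_
      split_ifs with hi
      · exact Finset.mem_singleton.2 (heq i hi)
      · exact hF a a₀ heq ▸ hS a haS i hi
    calc _ ≤ ((∏ i, #(if i ∈ I then {a₀ i} else F a₀) : ℕ) : ℝ) := by
          exact_mod_cast (Finset.card_le_card hsub).trans_eq (Fintype.card_piFinset _)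
      _ = (#(F a₀) : ℝ) ^ #Iᶜ := by
          simp only [apply_ite Finset.card, Finset.card_singleton, Finset.prod_ite,
            Finset.prod_const_one, one_mul, Finset.prod_const, Nat.cast_pow,
            Finset.compl_eq_univ_sdiff, Finset.sdiff_eq_filter]
      _ ≤ c ^ #Iᶜ := by gcongr; exact hc a₀
  calc (#S : ℝ) = ∑ b ∈ S.image I.restrict, (#{a ∈ S | I.restrict a = b} : ℝ) := by
        exact_mod_cast Finset.card_eq_sum_card_image _ S
    _ ≤ #(S.image I.restrict) * c ^ #Iᶜ :=
        (Finset.sum_le_card_nsmul _ _ _ hfiber).trans_eq (nsmul_eq_mul _ _)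
    _ ≤ Fintype.card α ^ #I * c ^ #Iᶜ := by
        gcongr
        exact_mod_cast (Finset.card_le_univ _).trans_eq (by simp)

end Counting

namespace AdaptiveGame

variable {M n N : ℕ} {E : Type}

/-- A label for one of the oracles of which the hard function is the maximum: `none` stands for
`‖x‖ - 1`, and the others for a row or for a piece with index at most `N`. Paired with a flag
telling whether the query was exploratory, it determines one step of the game. -/
abbrev ResponseLabel (n N : ℕ) : Type := Option (Fin n ⊕ Fin (N + 1))

/-- The rows which occur in a transcript. -/
def revealedRows (l : List (Bool × ResponseLabel n N)) : Finset (Fin n) :=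
  (l.filterMap fun a => a.2.bind Sum.getLeft?).toFinset

lemma card_revealedRows_le (l : List (Bool × ResponseLabel n N)) :
    (revealedRows l).card ≤ l.length :=
  (List.toFinset_card_le _).trans (List.length_filterMap_le _ _)

lemma mem_revealedRows {l : List (Bool × ResponseLabel n N)} {b : Bool} {i : Fin n}
    (h : (b, some (Sum.inl i)) ∈ l) : i ∈ revealedRows l :=
  List.mem_toFinset.2 (List.mem_filterMap.2 ⟨_, h, rfl⟩)

section Replay

variable [NormedAddCommGroup E] [InnerProductSpace ℝ E] (G : AdaptiveGame M E)

/-- The oracle that a label stands for. -/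
noncomputable def labelOracle (A : Fin n → E) (v : ℕ → E) : ResponseLabel n N → FirstOrderOracle E
  | none => distOracle 0 1
  | some (Sum.inl i) => absOracle G.η (A i)
  | some (Sum.inr i) => G.piece v i

/-- The state reached from `s` when the responses are those recorded in a transcript. -/
noncomputable def replay (A : Fin n → E) (v : ℕ → E) (s : GameState M E)
    (l : List (Bool × ResponseLabel n N)) : GameState M E :=
  l.foldl (fun s a => G.next s a.1 (G.labelOracle A v a.2 (G.query s))) s

variable {G} {A A' : Fin n → E} {v : ℕ → E}

lemma replay_congr {l : List (Bool × ResponseLabel n N)} (h : ∀ i ∈ revealedRows l, A i = A' i)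
    (s : GameState M E) : G.replay A v s l = G.replay A' v s l := by
  refine List.foldl_ext _ _ _ fun s a ha => ?_
  obtain ⟨b, _ | i | i⟩ := a
  · rfl
  · simp only [labelOracle, h i (mem_revealedRows ha)]
  · rfl

lemma exists_oracle_eq_labelOracle {j : ℕ} (hj : j ≤ N) (x : E) :
    ∃ o : ResponseLabel n N, G.oracle A v j x = G.labelOracle A v o x := by
  rcases oracleListMax_eq_base_or_mem (distOracle 0 1) (List.ofFn (fun i => absOracle G.η (A i)) ++
    (List.range (j + 1)).map (G.piece v)) x with h | ⟨O, hO, h⟩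
  · exact ⟨none, h⟩
  rcases List.mem_append.1 hO with hO | hO
  · obtain ⟨i, rfl⟩ := List.mem_ofFn.1 hO
    exact ⟨some (Sum.inl i), h⟩
  · obtain ⟨i, hi, rfl⟩ := List.mem_map.1 hO
    exact ⟨some (Sum.inr ⟨i, (List.mem_range.1 hi).trans_le (by omega)⟩), h⟩

variable [FiniteDimensional ℝ E]

lemma exists_step_eq_next {s : GameState M E} (hj : (G.step A v s).j ≤ N) :
    ∃ a : Bool × ResponseLabel n N,
      G.step A v s = G.next s a.1 (G.labelOracle A v a.2 (G.query s)) := by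
  by_cases hx : G.IsExploratory A v s
  · obtain ⟨o, ho⟩ := exists_oracle_eq_labelOracle (G := G) (A := A) (v := v)
      (hx.step_j ▸ hj) (G.query s)
    exact ⟨(true, o), by rw [hx.step_eq, ho]⟩
  · obtain ⟨o, ho⟩ := exists_oracle_eq_labelOracle (G := G) (A := A) (v := v)
      (step_j_of_not_isExploratory hx ▸ hj) (G.query s)
    exact ⟨(false, o), by rw [step_eq_of_not_isExploratory hx, ho]⟩

lemma exists_replay_eq_run {s : GameState M E} {t : ℕ} (hj : (G.run A v s t).j ≤ N) :
    ∃ l : List (Bool × ResponseLabel n N), l.length = t ∧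
      G.replay A v s l = G.run A v s t := by
  induction t with
  | zero => exact ⟨[], rfl, rfl⟩
  | succ t ih =>
    obtain ⟨l, rfl, hl⟩ := ih ((run_j_monotone A v s t.le_succ).trans hj)
    obtain ⟨a, ha⟩ := exists_step_eq_next hj
    refine ⟨l ++ [a], List.length_append, ?_⟩
    rw [run, ha, ← hl, replay, List.foldl_append]
    rfl

end Replay

section CompletedPeriods

variable [NormedAddCommGroup E] [InnerProductSpace ℝ E] [FiniteDimensional ℝ E]

/-- A list of `k` robustly independent vectors of the unit ball, like the exploratory queries of a
period. -/
def IsRobustFamily (G : AdaptiveGame M E) (l : List E) : Prop :=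
  l.length = G.k ∧ RobustlyIndependent G.β l ∧ ∀ y ∈ l, ‖y‖ ≤ 1

/-- The query made in state `s` completes a period: together with the recorded ones it forms a
robust family of vectors almost orthogonal to all the rows. -/
def CompletesPeriod (G : AdaptiveGame M E) (A : Fin n → E) (s : GameState M E) : Prop :=
  G.IsRobustFamily (G.query s :: s.ys) ∧ ∀ i, ∀ y ∈ G.query s :: s.ys, |⟪A i, y⟫| ≤ G.η

variable {G : AdaptiveGame M E} {A : Fin n → E} {v : ℕ → E}

lemma IsExploratory.completesPeriod {s : GameState M E} (hη : 0 ≤ G.η) (hγ : 0 ≤ G.γ₁)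
    (hs : G.Invariant A s) (hx : G.IsExploratory A v s) {q : ℕ}
    (hj : s.j + 1 = (q + 1) * G.k) (hk : 1 ≤ G.k) : G.CompletesPeriod A s := by
  obtain ⟨hlen, hrob, hys⟩ := hs
  have hall : ∀ y ∈ G.query s :: s.ys, ‖y‖ ≤ 1 ∧ ∀ i, |⟪A i, y⟫| ≤ G.η :=
    List.forall_mem_cons.2 ⟨hx.1.norm_query_le_and_abs_inner_row_le hη hγ, hys⟩
  refine ⟨⟨?_, ⟨hrob, hx.2⟩, fun y hy => (hall y hy).1⟩, fun i y hy => (hall y hy).2 i⟩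
  have hmod : s.j = (G.k - 1) + q * G.k := by
    rw [add_mul, one_mul] at hj
    omega
  rw [List.length_cons, hlen, hmod, Nat.add_mul_mod_self_right, Nat.mod_eq_of_lt (by omega)]
  omega

lemma exists_run_j_eq {s : GameState M E} {t₀ T i : ℕ} (h₀ : (G.run A v s t₀).j ≤ i)
    (hT : i ≤ (G.run A v s T).j) : ∃ t, t₀ ≤ t ∧ (G.run A v s t).j = i := by
  rcases h₀.lt_or_eq with h | h
  · obtain ⟨t, ht, -, hx, hj⟩ := exists_isExploratory_of_lt_of_le h hT
    exact ⟨t + 1, by omega, by rw [run, hx.step_j, hj]⟩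
  · exact ⟨t₀, le_rfl, h⟩

lemma exists_short_period {P m : ℕ} (hP : 1 ≤ P) (hreach : G.k * P ≤ (G.play A v (P * m)).j) :
    ∃ q < P, ∃ t, (G.play A v t).j = q * G.k ∧ (q + 1) * G.k ≤ (G.play A v (t + m)).j := by
  by_contra! hlong
  have hslow : ∀ q < P, (G.play A v ((q + 1) * m)).j < (q + 1) * G.k := by
    intro q
    induction q with
    | zero => exact fun hq => by simpa [play, run, GameState.init] using hlong 0 hq 0
    | succ q ih =>
      intro hq
      by_contra! hfast
      obtain ⟨t, ht, hjt⟩ := exists_run_j_eq (ih (by omega)).le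
        ((Nat.mul_le_mul_right _ (Nat.le_succ _)).trans hfast)
      have hmono : (G.play A v ((q + 1 + 1) * m)).j ≤ (G.play A v (t + m)).j :=
        run_j_monotone A v _ (by rw [add_mul (q + 1), one_mul]; omega)
      exact absurd (hlong (q + 1) hq t hjt) (by omega)
  obtain ⟨q, rfl⟩ : ∃ q, P = q + 1 := ⟨P - 1, by omega⟩
  rw [mul_comm, mul_comm (q + 1) m] at hreach
  exact absurd (hslow q q.lt_succ_self) (by rw [mul_comm _ m]; omega)

variable (G A v) in
/-- One of the first `P` periods can be completed by replaying fewer than `m` responses from some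
memory state: these data determine a robust family of vectors almost orthogonal to all the rows,
although they reveal fewer than `m` rows. -/
def IsCompressible (P m : ℕ) : Prop :=
  ∃ (q : Fin P) (μ : Fin M → Bool) (l : List (Bool × ResponseLabel n (G.k * P))),
    l.length < m ∧ G.CompletesPeriod A (G.replay A v ⟨μ, q * G.k, []⟩ l)

lemma isCompressible_of_le_play_j {P m : ℕ} (hη : 0 ≤ G.η) (hγ : 0 ≤ G.γ₁) (hk : 1 ≤ G.k)
    (hP : 1 ≤ P) (hreach : G.k * P ≤ (G.play A v (P * m)).j) : G.IsCompressible A v P m := by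
  obtain ⟨q, hq, t₀, hstart, hend⟩ := exists_short_period hP hreach
  have hinv := invariant_play (A := A) (v := v) hη hγ t₀
  rw [play, run_add] at hend
  change (q + 1) * G.k ≤ (G.run A v (G.play A v t₀) m).j at hend
  generalize G.play A v t₀ = s at hstart hend hinv
  obtain ⟨mem, j, ys⟩ := s
  obtain rfl : j = q * G.k := hstart
  obtain rfl : ys = [] := List.length_eq_zero_iff.1 (hinv.1.trans (Nat.mul_mod_left _ _))
  have hlt : q * G.k < (q + 1) * G.k := Nat.mul_lt_mul_of_pos_right q.lt_succ_self hk
  obtain ⟨t, -, ht, hx, hj⟩ := exists_isExploratory_of_lt_of_le (t₀ := 0) hlt hend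
  have hle : (q + 1) * G.k ≤ G.k * P := by
    rw [mul_comm]
    exact Nat.mul_le_mul_left _ hq
  obtain ⟨l, rfl, hl⟩ :=
    exists_replay_eq_run (N := G.k * P) ((Nat.le_succ _).trans (hj.trans_le hle))
  exact ⟨⟨q, hq⟩, mem, l, ht, hl ▸ hx.completesPeriod hη hγ (hinv.run hη hγ l.length) hj hk⟩

end CompletedPeriods

section CountingRows

open scoped Finset

variable [NormedAddCommGroup E] [InnerProductSpace ℝ E] [FiniteDimensional ℝ E]
  {G : AdaptiveGame M E} {ι : Type*} [Fintype ι] {g : ι → E} {m : ℕ}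

open Classical in
lemma card_completesPeriod_replay_le
    (hg : ∀ y : List E, G.IsRobustFamily y →
      (#{a | ∀ x ∈ y, |⟪g a, x⟫| ≤ G.η} : ℝ) ≤ Real.exp (-(G.k : ℝ)) * Fintype.card ι)
    (v : ℕ → E) (s : GameState M E) {l : List (Bool × ResponseLabel n N)} (hl : l.length ≤ m)
    (hmn : m ≤ n) :
    (#{a : Fin n → ι | G.CompletesPeriod (g ∘ a) (G.replay (g ∘ a) v s l)} : ℝ) ≤
      Real.exp (-(G.k * (n - m) : ℝ)) * (Fintype.card ι : ℝ) ^ n := by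
  set I := revealedRows l
  set c : ℝ := Real.exp (-(G.k : ℝ))
  let y : (Fin n → ι) → List E := fun a =>
    G.query (G.replay (g ∘ a) v s l) :: (G.replay (g ∘ a) v s l).ys
  let F : List E → Finset ι := fun y =>
    if G.IsRobustFamily y then Finset.univ.filter fun b => ∀ x ∈ y, |⟪g b, x⟫| ≤ G.η else ∅
  have hy : ∀ a a', (∀ i ∈ I, a i = a' i) → y a = y a' := fun a a' h => by
    simp only [y]
    rw [replay_congr (A := g ∘ a) (A' := g ∘ a') fun i hi => congrArg g (h i hi)]
  have hFcard : ∀ y, (#(F y) : ℝ) ≤ c * Fintype.card ι := fun y => by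
    simp only [F]
    split_ifs with hrob
    · exact hg y hrob
    · rw [Finset.card_empty, Nat.cast_zero]
      positivity
  have hmem : ∀ a : Fin n → ι, G.CompletesPeriod (g ∘ a) (G.replay (g ∘ a) v s l) →
      ∀ i ∉ I, a i ∈ F (y a) := fun a ha i _ => by
    simp only [F, if_pos (show G.IsRobustFamily (y a) from ha.1)]
    exact Finset.mem_filter.2 ⟨Finset.mem_univ (a i), ha.2 i⟩
  have hI : #I ≤ m := (card_revealedRows_le l).trans hl
  have hIcompl : #I + #Iᶜ = n := by rw [Finset.card_add_card_compl, Fintype.card_fin]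
  have hnm : (n : ℝ) - m ≤ #Iᶜ := by
    rw [← Nat.cast_sub hmn]
    exact_mod_cast (by omega)
  calc _ ≤ (Fintype.card ι : ℝ) ^ #I * (c * Fintype.card ι) ^ #Iᶜ :=
        card_le_of_forall_notMem_mem (F := fun a => F (y a))
          (fun a ha => hmem a (Finset.mem_filter.1 ha).2)
          (fun a a' h => congrArg F (hy a a' h)) (by positivity) fun a => hFcard (y a)
    _ = c ^ #Iᶜ * (Fintype.card ι : ℝ) ^ n := by
        rw [mul_pow, mul_left_comm, ← pow_add, hIcompl]
    _ ≤ Real.exp (-(G.k * (n - m) : ℝ)) * (Fintype.card ι : ℝ) ^ n := by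
        rw [← Real.exp_nat_mul, mul_neg, mul_comm (#Iᶜ : ℝ)]
        gcongr

open Classical in
lemma card_isCompressible_le (hg : ∀ y : List E, G.IsRobustFamily y →
      (#{a | ∀ x ∈ y, |⟪g a, x⟫| ≤ G.η} : ℝ) ≤ Real.exp (-(G.k : ℝ)) * Fintype.card ι)
    (v : ℕ → E) (P : ℕ) (hmn : m ≤ n) :
    (#{a : Fin n → ι | G.IsCompressible (g ∘ a) v P m} : ℝ) ≤
      P * 2 ^ M * (m * (2 * (n + G.k * P + 2)) ^ m) *
        (Real.exp (-(G.k * (n - m) : ℝ)) * (Fintype.card ι : ℝ) ^ n) := by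
  let τ := Fin P × (Fin M → Bool) ×
    (Σ t : Fin m, List.Vector (Bool × ResponseLabel n (G.k * P)) t)
  have hunion : (Finset.univ.filter fun a : Fin n → ι => G.IsCompressible (g ∘ a) v P m) ⊆
      (Finset.univ : Finset τ).biUnion fun x => Finset.univ.filter fun a : Fin n → ι =>
        G.CompletesPeriod (g ∘ a) (G.replay (g ∘ a) v ⟨x.2.1, x.1 * G.k, []⟩ x.2.2.2.1) := by
    intro a ha
    obtain ⟨q, μ, l, hl, hcomp⟩ := (Finset.mem_filter.1 ha).2
    exact Finset.mem_biUnion.2 ⟨⟨q, μ, ⟨l.length, hl⟩, ⟨l, rfl⟩⟩, Finset.mem_univ _,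
      Finset.mem_filter.2 ⟨Finset.mem_univ _, hcomp⟩⟩
  have hcard : (Fintype.card τ : ℝ) ≤ P * 2 ^ M * (m * (2 * (n + G.k * P + 2)) ^ m) := by
    have hlabel : Fintype.card (Bool × ResponseLabel n (G.k * P)) = 2 * (n + G.k * P + 2) := by
      simp [add_assoc]
    have hlists : ∑ t : Fin m, (2 * (n + G.k * P + 2)) ^ (t : ℕ) ≤
        m * (2 * (n + G.k * P + 2)) ^ m := by
      simpa using Finset.sum_le_card_nsmul Finset.univ
        (fun t : Fin m => (2 * (n + G.k * P + 2)) ^ (t : ℕ)) ((2 * (n + G.k * P + 2)) ^ m)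
        fun t _ => Nat.pow_le_pow_right (by omega) t.2.le
    simp only [τ, Fintype.card_prod, Fintype.card_sigma, card_vector, hlabel, Fintype.card_fun,
      Fintype.card_fin, Fintype.card_bool]
    rw [← mul_assoc]
    exact_mod_cast Nat.mul_le_mul_left _ hlists
  calc _ ≤ ∑ x : τ, (#{a : Fin n → ι | G.CompletesPeriod (g ∘ a)
          (G.replay (g ∘ a) v ⟨x.2.1, x.1 * G.k, []⟩ x.2.2.2.1)} : ℝ) := by
        exact_mod_cast (Finset.card_le_card hunion).trans Finset.card_biUnion_le
    _ ≤ Fintype.card τ * (Real.exp (-(G.k * (n - m) : ℝ)) * (Fintype.card ι : ℝ) ^ n) :=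
        (Finset.sum_le_card_nsmul _ _ _ fun x _ => card_completesPeriod_replay_le hg v _
          (x.2.2.2.2.trans_le x.2.2.1.2.le) hmn).trans_eq (nsmul_eq_mul _ _)
    _ ≤ _ := by gcongr

end CountingRows

end AdaptiveGame

section Trees

open scoped Finset

open Classical in
lemma pow_le_card_forall_take {U α : Type*} [Fintype U] (f : U → α) {c : ℝ} (hc : 0 ≤ c) {N : ℕ}
    {Q : List α → α → Prop} (h : ∀ l, l.length < N → c ≤ #{u | Q l (f u)}) :
    c ^ N ≤ #{w : Fin N → U | ∀ i : Fin N, Q ((List.ofFn (f ∘ w)).take i) (f (w i))} := by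
  induction N generalizing Q with
  | zero => simp
  | succ N ih =>
    let S : U → Finset (Fin N → U) := fun u =>
      Finset.univ.filter fun w => ∀ i : Fin N, Q (f u :: (List.ofFn (f ∘ w)).take i) (f (w i))
    have hS : ∀ u, c ^ N ≤ #(S u) := fun u =>
      ih (Q := fun l => Q (f u :: l)) fun l hl => h _ (Nat.succ_lt_succ hl)
    have hcons : #((Finset.univ.filter fun u => Q [] (f u)).sigma S) ≤
        #{w : Fin (N + 1) → U | ∀ i : Fin (N + 1), Q ((List.ofFn (f ∘ w)).take i) (f (w i))} := by
      refine Finset.card_le_card_of_injOn (fun x => Fin.cons (α := fun _ => U) x.1 x.2) ?_ ?_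
      · rintro ⟨u, w⟩ hx
        obtain ⟨hu, hw⟩ := Finset.mem_sigma.1 hx
        refine Finset.mem_filter.2 ⟨Finset.mem_univ _, ?_⟩
        rw [Fin.forall_fin_succ]
        simpa [List.ofFn_succ, Function.comp_def, S] using
          And.intro (Finset.mem_filter.1 hu).2 (Finset.mem_filter.1 hw).2
      · rintro ⟨u, w⟩ - ⟨u', w'⟩ - hx
        obtain ⟨rfl, rfl⟩ := Fin.cons_inj.1 hx
        rfl
    calc c ^ (N + 1) = c * c ^ N := pow_succ' c N
      _ ≤ #{u | Q [] (f u)} * c ^ N := by gcongr; exact h [] N.succ_pos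
      _ ≤ ∑ u ∈ Finset.univ.filter fun u => Q [] (f u), (#(S u) : ℝ) := by
          rw [← nsmul_eq_mul]
          exact Finset.card_nsmul_le_sum _ _ _ fun u _ => hS u
      _ ≤ _ := by
          rw [← Nat.cast_sum, ← Finset.card_sigma]
          exact_mod_cast hcons

end Trees

namespace AdaptiveGame

variable {M n : ℕ} {E : Type} [NormedAddCommGroup E] [InnerProductSpace ℝ E]
  [FiniteDimensional ℝ E] {G : AdaptiveGame M E} {A : Fin n → E} {v v' : ℕ → E}
  {s : GameState M E} {δ κ : ℝ} {N T t t' : ℕ} {l : List E} {u : E}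

section Extensions

lemma avoidedSubspace_congr (h : ∀ i ≤ s.j, v i = v' i) :
    G.avoidedSubspace A v s = G.avoidedSubspace A v' s := by
  rw [avoidedSubspace, avoidedSubspace, Set.image_congr fun i hi => ?_]
  rw [h i hi]

lemma play_congr (h : ∀ i ≤ (G.play A v t).j, v i = v' i) (htt' : t' ≤ t) :
    G.play A v' t' = G.play A v t' :=
  run_congr (run_j_monotone A v _ htt') h

lemma pastQueries_congr (h : ∀ i ≤ (G.play A v t).j, v i = v' i) :
    G.pastQueries A v' t = G.pastQueries A v t := by
  classical
  refine Finset.image_congr fun t' ht' => ?_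
  simp only [play_congr h (Nat.lt_succ_iff.1 (Finset.mem_range.1 ht'))]

lemma card_pastQueries_le (t : ℕ) : (G.pastQueries A v t).card ≤ t + 1 := by
  classical
  exact Finset.card_image_le.trans_eq (Finset.card_range _)

/-- The sequence of pieces which starts with a list, continued by zero vectors. -/
def piecesOfList (l : List E) : ℕ → E := fun i => l.getD i 0

variable (G A) in
/-- The vector `u` is a good choice for the piece following the pieces in `l`, at the time when the
game against `l` calls for it. -/
def IsAdmissibleExtension (δ κ : ℝ) (T : ℕ) (l : List E) (u : E) : Prop :=
  (l = [] → 1 / 8 ≤ ‖(rowSpan A)ᗮ.starProjection u‖) ∧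
    ∀ t < T, G.IsExploratory A (piecesOfList l) (G.play A (piecesOfList l) t) →
      (G.play A (piecesOfList l) t).j + 1 = l.length →
        IsGoodDirection (rowSpan A)
          (G.avoidedSubspace A (piecesOfList l) (G.play A (piecesOfList l) t))
          (G.pastQueries A (piecesOfList l) t) δ κ u

lemma isAdmissible_piecesOfList (hl : l.length = N + 1)
    (h : ∀ i (hi : i < l.length), G.IsAdmissibleExtension A δ κ T (l.take i) l[i]) :
    G.IsAdmissible A (piecesOfList l) δ κ T N := by
  have hget : ∀ i (hi : i < l.length), piecesOfList l i = l[i] := fun i hi =>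
    List.getD_eq_getElem _ _ hi
  refine ⟨?_, fun t ht hx hj => ?_⟩
  · rw [hget 0 (by omega)]
    exact (h 0 (by omega)).1 List.take_zero
  set i := (G.play A (piecesOfList l) t).j + 1
  have hil : i < l.length := by omega
  have hprefix : ∀ i' ≤ (G.play A (piecesOfList l) t).j,
      piecesOfList l i' = piecesOfList (l.take i) i' := fun i' hi' => by
    simp only [piecesOfList, List.getD_eq_getElem?_getD,
      List.getElem?_take_of_lt (show i' < i by omega)]
  have hplay := play_congr hprefix le_rfl
  rw [hget i hil, avoidedSubspace_congr hprefix, ← pastQueries_congr hprefix, ← hplay]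
  refine (h i hil).2 t ht (hplay ▸ (isExploratory_congr hprefix).2 hx) ?_
  rw [hplay, List.length_take_of_le hil.le]

lemma IsExploratory.j_lt (hx : G.IsExploratory A v (G.play A v t)) (htt' : t < t') :
    (G.play A v t).j < (G.play A v t').j :=
  hx.step_j.symm.trans_le (run_j_monotone A v (GameState.init M E) htt')

lemma eq_of_isExploratory_of_j_eq (hx : G.IsExploratory A v (G.play A v t))
    (hx' : G.IsExploratory A v (G.play A v t'))
    (hj : (G.play A v t).j = (G.play A v t').j) : t = t' := by
  rcases Nat.lt_trichotomy t t' with h | h | h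
  · exact absurd (hx.j_lt h) hj.not_lt
  · exact h
  · exact absurd (hx'.j_lt h) hj.not_gt

end Extensions

section Dimensions

omit [FiniteDimensional ℝ E] in
lemma finrank_rowSpan_le (A : Fin n → E) : Module.finrank ℝ (rowSpan A) ≤ n :=
  (finrank_range_le_card A).trans_eq (Fintype.card_fin n)

lemma finrank_avoidedSubspace_le (hs : G.Invariant A s) (hk : 1 ≤ G.k) (hj : s.j ≤ N) :
    Module.finrank ℝ (G.avoidedSubspace A v s) ≤ G.k + N + 1 := by
  classical
  have hqueries : Module.finrank ℝ (Submodule.span ℝ {y | y ∈ G.query s :: s.ys}) ≤ G.k := by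
    rw [← List.coe_toFinset]
    refine (finrank_span_finset_le_card _).trans ((List.toFinset_card_le _).trans ?_)
    rw [List.length_cons, hs.1]
    exact Nat.mod_lt _ hk
  have hpieces : Module.finrank ℝ (Submodule.span ℝ
      ((fun i => (rowSpan A)ᗮ.starProjection (v i)) '' Set.Iic s.j)) ≤ N + 1 := by
    rw [← Finset.coe_Iic, ← Finset.coe_image]
    refine (finrank_span_finset_le_card _).trans (Finset.card_image_le.trans ?_)
    rw [Nat.card_Iic]
    omega
  rw [avoidedSubspace]
  linarith [Submodule.finrank_add_le_finrank_add_finrank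
    (Submodule.span ℝ {y | y ∈ G.query s :: s.ys})
    (Submodule.span ℝ ((fun i => (rowSpan A)ᗮ.starProjection (v i)) '' Set.Iic s.j))]

end Dimensions

section CountingPieces

open scoped Finset

variable {d B P : ℕ} {G : AdaptiveGame M (EuclideanSpace ℝ (Fin d))}
  {A : Fin n → EuclideanSpace ℝ (Fin d)}

open Classical in
lemma card_isAdmissibleExtension_ge (hG : G.IsCalibrated δ κ) (hk : 1 ≤ G.k) (hd : 1 ≤ d)
    (hX : 4 * (T : ℝ) ≤ Real.exp (κ ^ 2 * d / 2)) (hδ : 0 < δ) (hB : √d ≤ 2 * δ * B)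
    (hbig : 8 * ((2 * (B : ℝ) + 1) ^ (G.k + N + 1)) ^ 2 * 5 ^ n ≤ Real.exp (d / 4))
    {l : List (EuclideanSpace ℝ (Fin d))} (hl : l.length < N + 1) :
    (2 ^ d * 2 ^ d : ℝ) / (8 * ((2 * (B : ℝ) + 1) ^ (G.k + N + 1)) ^ 2) ≤
      #{p | G.IsAdmissibleExtension A δ κ T l (signDiff p)} := by
  have hgood : ∀ (W : Submodule ℝ (EuclideanSpace ℝ (Fin d)))
      (X : Finset (EuclideanSpace ℝ (Fin d))), Module.finrank ℝ W ≤ G.k + N + 1 → #X ≤ T →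
      (∀ u, IsGoodDirection (rowSpan A) W X δ κ u → G.IsAdmissibleExtension A δ κ T l u) →
      (2 ^ d * 2 ^ d : ℝ) / (8 * ((2 * (B : ℝ) + 1) ^ (G.k + N + 1)) ^ 2) ≤
        #{p | G.IsAdmissibleExtension A δ κ T l (signDiff p)} := fun W X hW hXT h => by
    have hXT' : (#X : ℝ) ≤ T := by exact_mod_cast hXT
    refine (card_isGoodDirection_signDiff_ge hd (rowSpan A) W X (finrank_rowSpan_le A) hW
      hG.κ_nonneg (by linarith) hδ hB hbig).trans ?_
    exact_mod_cast Finset.card_le_card (Finset.monotone_filter_right _ fun p _ => h (signDiff p))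
  by_cases hex : ∃ t < T, G.IsExploratory A (piecesOfList l) (G.play A (piecesOfList l) t) ∧
      (G.play A (piecesOfList l) t).j + 1 = l.length
  · obtain ⟨t, ht, hx, hj⟩ := hex
    have hjN : (G.play A (piecesOfList l) t).j ≤ N := by omega
    refine hgood (G.avoidedSubspace A (piecesOfList l) (G.play A (piecesOfList l) t))
      (G.pastQueries A (piecesOfList l) t)
      (finrank_avoidedSubspace_le (invariant_play hG.η_pos.le hG.γ₁_nonneg t) hk hjN)
      ((card_pastQueries_le t).trans ht) fun u hu => ⟨?_, fun t' _ hx' hj' => ?_⟩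
    · rintro rfl
      simp at hj
    · obtain rfl := eq_of_isExploratory_of_j_eq hx hx' (by omega)
      exact hu
  · refine hgood ⊥ ∅ (by simp) (by simp) fun u hu =>
      ⟨fun _ => hu.2.2, fun t ht hx hj => absurd ⟨t, ht, hx, hj⟩ hex⟩

open Classical in
lemma card_isAdmissible_ge (hG : G.IsCalibrated δ κ) (hk : 1 ≤ G.k) (hd : 1 ≤ d)
    (hX : 4 * (T : ℝ) ≤ Real.exp (κ ^ 2 * d / 2)) (hδ : 0 < δ) (hB : √d ≤ 2 * δ * B)
    (hbig : 8 * ((2 * (B : ℝ) + 1) ^ (G.k + N + 1)) ^ 2 * 5 ^ n ≤ Real.exp (d / 4)) :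
    ((2 ^ d * 2 ^ d : ℝ) / (8 * ((2 * (B : ℝ) + 1) ^ (G.k + N + 1)) ^ 2)) ^ (N + 1) ≤
      #{w : Fin (N + 1) → (Fin d → Bool) × (Fin d → Bool) |
        G.IsAdmissible A (piecesOfList (List.ofFn (signDiff ∘ w))) δ κ T N} := by
  refine (pow_le_card_forall_take signDiff (by positivity) fun l hl =>
    card_isAdmissibleExtension_ge (A := A) hG hk hd hX hδ hB hbig hl).trans ?_
  refine Nat.cast_le.2 (Finset.card_le_card (Finset.monotone_filter_right _ fun w _ hw => ?_))
  refine isAdmissible_piecesOfList (List.length_ofFn) fun i hi => ?_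
  rw [List.getElem_ofFn]
  exact hw ⟨i, by simpa using hi⟩

lemma norm_piecesOfList_ofFn_signDiff_le (hd : 1 ≤ d) {N : ℕ}
    (w : Fin N → (Fin d → Bool) × (Fin d → Bool)) (i : ℕ) :
    ‖piecesOfList (List.ofFn (signDiff ∘ w)) i‖ ≤ 1 := by
  rcases lt_or_ge i N with hi | hi
  · simpa [piecesOfList, hi] using norm_signDiff_le hd (w ⟨i, hi⟩)
  · simp [piecesOfList, hi]

end CountingPieces

end AdaptiveGame

section Scales

open Real

/-- Parameters for the game in dimension `d` against a memory of `M` bits: `P` periods with `k`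
exploratory queries each, hence `N` exploratory queries in total. -/
structure IsScale (d M k P N : ℕ) : Prop where
  log_ge : 1000 ≤ log d
  le_memory : d ≤ M
  N_eq : N = k * P
  one_le_P : 1 ≤ P
  memory_mul_log_le : 100 * (M * log d) ≤ k * d
  N_mul_sq_mul_log_le : 10 ^ 9 * (N * P ^ 2 * log d) ≤ d

namespace IsScale

variable {d M k P N : ℕ}

lemma one_lt_d (h : IsScale d M k P N) : (1 : ℝ) < d := by
  by_contra! hd
  linarith [log_nonpos d.cast_nonneg hd, h.log_ge]

lemma one_le_d (h : IsScale d M k P N) : 1 ≤ d := by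
  exact_mod_cast h.one_lt_d.le

lemma exp_log_d (h : IsScale d M k P N) : exp (log d) = d :=
  exp_log (by linarith [h.one_lt_d])

lemma log_le_k (h : IsScale d M k P N) : 100 * log d ≤ k := by
  have hd := h.one_lt_d
  have hMd : (d : ℝ) * log d ≤ M * log d :=
    mul_le_mul_of_nonneg_right (by exact_mod_cast h.le_memory) (by linarith [h.log_ge])
  refine le_of_mul_le_mul_right ?_ (zero_lt_one.trans hd)
  linarith [h.memory_mul_log_le]

lemma one_le_k (h : IsScale d M k P N) : 1 ≤ k := by
  have hk : (1 : ℝ) ≤ k := by linarith [h.log_le_k, h.log_ge]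
  exact_mod_cast hk

lemma k_le_N (h : IsScale d M k P N) : (k : ℝ) ≤ N := by
  exact_mod_cast h.N_eq ▸ Nat.le_mul_of_pos_right k h.one_le_P

lemma P_le_N (h : IsScale d M k P N) : (P : ℝ) ≤ N := by
  exact_mod_cast h.N_eq ▸ Nat.le_mul_of_pos_left P h.one_le_k

lemma N_ge (h : IsScale d M k P N) : 100000 ≤ (N : ℝ) := by
  linarith [h.k_le_N, h.log_le_k, h.log_ge]

lemma N_mul_log_le (h : IsScale d M k P N) : 10 ^ 9 * (N * log d) ≤ d := by
  have hP : (1 : ℝ) ≤ P ^ 2 := one_le_pow₀ (by exact_mod_cast h.one_le_P)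
  have hNL : 0 ≤ N * log d := mul_nonneg N.cast_nonneg (by linarith [h.log_ge])
  nlinarith [h.N_mul_sq_mul_log_le]

lemma N_mul_le (h : IsScale d M k P N) : 10 ^ 12 * (N : ℝ) ≤ d := by
  nlinarith [h.N_mul_log_le, h.log_ge, h.N_ge]

lemma N_sq_mul_log_le (h : IsScale d M k P N) : 10 ^ 9 * ((N : ℝ) ^ 2 * log d) ≤ k * d := by
  have hP : (P : ℝ) ≤ P ^ 2 := le_self_pow₀ (by exact_mod_cast h.one_le_P) two_ne_zero
  have : 0 ≤ log d := by linarith [h.log_ge]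
  have hN : (N : ℝ) = k * P := by exact_mod_cast h.N_eq
  calc 10 ^ 9 * ((N : ℝ) ^ 2 * log d) = k * (10 ^ 9 * (N * P * log d)) := by rw [hN]; ring
    _ ≤ k * (10 ^ 9 * (N * P ^ 2 * log d)) := by gcongr
    _ ≤ k * d := by gcongr; exact h.N_mul_sq_mul_log_le

lemma pieceLoss_le (h : IsScale d M k P N) :
    8 * ((2 * ((d * N : ℕ) : ℝ) + 1) ^ (k + N + 1)) ^ 2 ≤ exp (13 * (N * log d)) := by
  have hL := h.log_ge
  have hN := h.N_ge
  have hdN := h.N_mul_le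
  have hbase : 2 * ((d * N : ℕ) : ℝ) + 1 ≤ exp (2 * log d) := by
    rw [two_mul (log d), exp_add, h.exp_log_d]
    push_cast
    nlinarith
  have height : 8 ≤ exp (log d) := by
    rw [h.exp_log_d]
    linarith
  calc 8 * ((2 * ((d * N : ℕ) : ℝ) + 1) ^ (k + N + 1)) ^ 2
      ≤ exp (log d) * (exp (2 * log d) ^ (k + N + 1)) ^ 2 := by gcongr
    _ = exp (log d + 4 * (k + N + 1) * log d) := by
      rw [← exp_nat_mul, ← exp_nat_mul, ← exp_add]
      push_cast
      ring_nf
    _ ≤ exp (13 * (N * log d)) := by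
      rw [exp_le_exp]
      nlinarith [h.k_le_N]

lemma pieceLoss_mul_pow_le (h : IsScale d M k P N) :
    8 * ((2 * ((d * N : ℕ) : ℝ) + 1) ^ (k + N + 1)) ^ 2 * 5 ^ (d / 16) ≤ exp (d / 4) := by
  have hfive : (5 : ℝ) ≤ exp 2 := by
    rw [show (2 : ℝ) = 1 + 1 by norm_num, exp_add]
    nlinarith [exp_one_gt_d9]
  have hn : ((d / 16 : ℕ) : ℝ) ≤ d / 16 := Nat.cast_div_le
  calc 8 * ((2 * ((d * N : ℕ) : ℝ) + 1) ^ (k + N + 1)) ^ 2 * 5 ^ (d / 16)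
      ≤ exp (13 * (N * log d)) * exp 2 ^ (d / 16) := by gcongr; exact h.pieceLoss_le
    _ = exp (13 * (N * log d) + (d / 16 : ℕ) * 2) := by rw [← exp_nat_mul, exp_add]
    _ ≤ exp (d / 4) := by
      rw [exp_le_exp]
      linarith [h.N_mul_log_le, h.one_lt_d]

lemma div_sixteen_sub_div_thirty_two_ge (h : IsScale d M k P N) :
    (d : ℝ) / 40 ≤ (d / 16 : ℕ) - (d / 32 : ℕ) := by
  have hn : (d : ℝ) ≤ 16 * (d / 16 : ℕ) + 16 := by exact_mod_cast (by omega)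
  have hm : ((d / 32 : ℕ) : ℝ) ≤ d / 32 := Nat.cast_div_le
  linarith [h.N_mul_le, h.N_ge]

lemma div_thirty_two_ge (h : IsScale d M k P N) : (d : ℝ) / 40 ≤ (d / 32 : ℕ) := by
  have hm : (d : ℝ) ≤ 32 * (d / 32 : ℕ) + 32 := by exact_mod_cast (by omega)
  linarith [h.N_mul_le, h.N_ge]

lemma exponent_lt (h : IsScale d M k P N) :
    log d + M + (log d + (d / 32 : ℕ) * log d) + 13 * (N * log d) * (N + 1) <
      k * ((d / 16 : ℕ) - (d / 32 : ℕ) : ℝ) := by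
  have := h.one_lt_d
  have hL := h.log_ge
  have hk := h.log_le_k
  have hN := h.N_ge
  have hrows : (k : ℝ) * (d / 40) ≤ k * ((d / 16 : ℕ) - (d / 32 : ℕ) : ℝ) :=
    mul_le_mul_of_nonneg_left h.div_sixteen_sub_div_thirty_two_ge k.cast_nonneg
  have hpieces : 13 * (N * log d) * (N + 1) ≤ 26 * ((N : ℝ) ^ 2 * log d) := by
    have hNL : 0 ≤ N * log d := by positivity
    nlinarith
  have hmemory : 100000 * (M : ℝ) ≤ k * d := by
    nlinarith [h.memory_mul_log_le, M.cast_nonneg (α := ℝ)]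
  have hkd : 100 * log d * d ≤ k * d := mul_le_mul_of_nonneg_right hk d.cast_nonneg
  have hresponses : 3200 * ((d / 32 : ℕ) * log d) ≤ k * d := by
    have hm : ((d / 32 : ℕ) : ℝ) ≤ d / 32 := Nat.cast_div_le
    nlinarith
  have hlog : 1000 * log d ≤ k * d := by nlinarith [h.N_mul_le]
  linarith [h.N_sq_mul_log_le]

lemma compressible_proportion_lt (h : IsScale d M k P N) :
    P * 2 ^ M * ((d / 32 : ℕ) * (2 * ((d / 16 : ℕ) + N + 2)) ^ (d / 32)) *
        exp (-(k * ((d / 16 : ℕ) - (d / 32 : ℕ)) : ℝ)) <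
      1 / (8 * ((2 * ((d * N : ℕ) : ℝ) + 1) ^ (k + N + 1)) ^ 2) ^ (N + 1) := by
  have := h.one_lt_d
  have hN := h.N_ge
  have hdN := h.N_mul_le
  have hn : ((d / 16 : ℕ) : ℝ) ≤ d / 16 := Nat.cast_div_le
  have hm : ((d / 32 : ℕ) : ℝ) ≤ d / 32 := Nat.cast_div_le
  have hperiods : (P : ℝ) ≤ exp (log d) := by
    rw [h.exp_log_d]
    linarith [h.P_le_N]
  have hmemory : (2 : ℝ) ^ M ≤ exp M := by
    rw [← exp_one_pow]
    gcongr
    linarith [exp_one_gt_d9]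
  have htimes : ((d / 32 : ℕ) : ℝ) ≤ exp (log d) := by
    rw [h.exp_log_d]
    linarith
  have hresponses : (2 * (((d / 16 : ℕ) : ℝ) + N + 2)) ^ (d / 32) ≤
      exp ((d / 32 : ℕ) * log d) := by
    rw [exp_nat_mul, h.exp_log_d]
    gcongr
    linarith
  calc _ ≤ exp (log d) * exp M * (exp (log d) * exp ((d / 32 : ℕ) * log d)) *
        exp (-(k * ((d / 16 : ℕ) - (d / 32 : ℕ)) : ℝ)) := by gcongr
    _ < exp (-(13 * (N * log d) * (N + 1))) := by
      rw [← exp_add, ← exp_add, ← exp_add, ← exp_add, exp_lt_exp]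
      linarith [h.exponent_lt]
    _ = 1 / exp (13 * (N * log d)) ^ (N + 1) := by
      rw [← exp_nat_mul, exp_neg, one_div]
      push_cast
      ring_nf
    _ ≤ _ := by
      gcongr
      exact h.pieceLoss_le

end IsScale

end Scales

section HardGame

open Real

/-- The bound on the inner products of a piece with the past queries which a random piece satisfies
against polynomially many queries in dimension `d`. -/
noncomputable def correlationScale (d : ℕ) : ℝ := √(6 * log d / d)

namespace IsScale

variable {d M k P N : ℕ}

lemma correlationScale_pos (h : IsScale d M k P N) : 0 < correlationScale d :=
  sqrt_pos.2 (div_pos (by linarith [h.log_ge]) (by linarith [h.one_lt_d]))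

lemma correlationScale_sq_mul_d (h : IsScale d M k P N) :
    correlationScale d ^ 2 * d = 6 * log d := by
  have hd := h.one_lt_d
  rw [correlationScale, sq_sqrt (div_nonneg (by linarith [h.log_ge]) d.cast_nonneg)]
  field_simp

lemma inv_sqrt_le_correlationScale (h : IsScale d M k P N) :
    1 / √(d : ℝ) ≤ correlationScale d := by
  rw [correlationScale, ← sqrt_one, ← sqrt_div one_pos.le]
  gcongr
  linarith [h.log_ge]

lemma sqrt_le_correlationScale_mul (h : IsScale d M k P N) :
    √(d : ℝ) ≤ correlationScale d * d := by
  have hd : 0 < √(d : ℝ) := sqrt_pos.2 (by linarith [h.one_lt_d])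
  calc √(d : ℝ) = 1 / √d * (√d * √d) := by field_simp
    _ = 1 / √d * d := by rw [mul_self_sqrt d.cast_nonneg]
    _ ≤ correlationScale d * d := by gcongr; exact h.inv_sqrt_le_correlationScale

lemma correlationScale_mul_sqrt_lt (h : IsScale d M k P N) :
    4400 * (P * correlationScale d) * √((N : ℝ) + 1) < 1 := by
  have hd := h.one_lt_d
  have : (0 : ℝ) ≤ P ^ 2 * log d := mul_nonneg (by positivity) (by linarith [h.log_ge])
  refine lt_of_pow_lt_pow_left₀ 2 one_pos.le (lt_of_mul_lt_mul_right ?_ d.cast_nonneg)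
  calc (4400 * (P * correlationScale d) * √((N : ℝ) + 1)) ^ 2 * d
      = 4400 ^ 2 * P ^ 2 * (√((N : ℝ) + 1)) ^ 2 * (correlationScale d ^ 2 * d) := by ring
    _ = 4400 ^ 2 * 6 * ((N + 1) * (P ^ 2 * log d)) := by
      rw [sq_sqrt (by positivity), h.correlationScale_sq_mul_d]
      ring
    _ ≤ 4400 ^ 2 * 6 * (2 * N * (P ^ 2 * log d)) := by
      gcongr
      linarith [h.N_ge]
    _ < 1 ^ 2 * d := by linarith [h.N_mul_sq_mul_log_le]

lemma correlationScale_lt (h : IsScale d M k P N) : 4400 * correlationScale d < 1 := by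
  have hκ := h.correlationScale_pos
  have hP : (1 : ℝ) ≤ P := by exact_mod_cast h.one_le_P
  have hN : 1 ≤ √((N : ℝ) + 1) := one_le_sqrt.2 (by linarith [h.N_ge])
  calc 4400 * correlationScale d ≤ 4400 * (P * correlationScale d) := by
        gcongr
        exact le_mul_of_one_le_left hκ.le hP
    _ ≤ 4400 * (P * correlationScale d) * √((N : ℝ) + 1) :=
        le_mul_of_one_le_right (by positivity) hN
    _ < 1 := h.correlationScale_mul_sqrt_lt

end IsScale

/-- The game of the lower bound. The scale `η` of the pieces exceeds the target accuracy `1 / d ^ 4`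
by a factor `√d`. -/
noncomputable def hardGame {d M : ℕ}
    (alg : MemAlg M (EuclideanSpace ℝ (Fin d)) (ℝ × EuclideanSpace ℝ (Fin d))) (k N : ℕ) :
    AdaptiveGame M (EuclideanSpace ℝ (Fin d)) where
  alg := alg
  η := 1 / (d ^ 3 * √d)
  γ₁ := 4 * correlationScale d
  γ₂ := 4 * correlationScale d / N
  β := correlationScale d / N
  k := k

namespace IsScale

variable {d M k P N : ℕ} {T : ℕ}
  {alg : MemAlg M (EuclideanSpace ℝ (Fin d)) (ℝ × EuclideanSpace ℝ (Fin d))}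

lemma isCalibrated_hardGame (h : IsScale d M k P N) :
    (hardGame alg k N).IsCalibrated (correlationScale d / N) (correlationScale d) := by
  have hd := h.one_lt_d
  have hκ := h.correlationScale_pos
  have hκN : correlationScale d / N ≤ correlationScale d :=
    div_le_self hκ.le (by linarith [h.N_ge])
  have hd3 : (2 : ℝ) ≤ d ^ 3 * √d := by
    have h2 : (2 : ℝ) ≤ d := by linarith [h.N_mul_le, h.N_ge]
    have hd' : (d : ℝ) ≤ d ^ 3 := le_self_pow₀ hd.le three_ne_zero
    nlinarith [one_le_sqrt.2 hd.le]
  exact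
    { η_pos := by simp only [hardGame]; positivity
      η_le := one_div_le_one_div_of_le two_pos hd3
      δ_nonneg := by positivity
      β_nonneg := by simp only [hardGame]; positivity
      κ_nonneg := hκ.le
      four_mul_κ_le := le_rfl
      two_mul_add_le := by simp only [hardGame]; apply le_of_eq; ring
      add_add_le := by simp only [hardGame]; linarith }

lemma hardGame_gap (h : IsScale d M k P N) :
    (hardGame alg k N).η * ((P + 1) * (hardGame alg k N).γ₁ + correlationScale d / N +
        (hardGame alg k N).β) + 1 / (d : ℝ) ^ 4 <
      (hardGame alg k N).η / (400 * √((N : ℝ) + 1)) := by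
  have hd := h.one_lt_d
  have hκ := h.correlationScale_pos
  have hκN : correlationScale d / N ≤ correlationScale d :=
    div_le_self hκ.le (by linarith [h.N_ge])
  have hκP : correlationScale d ≤ P * correlationScale d :=
    le_mul_of_one_le_left hκ.le (by exact_mod_cast h.one_le_P)
  have hε : 1 / (d : ℝ) ^ 4 = 1 / (d ^ 3 * √d) * (1 / √d) := by
    rw [one_div_mul_one_div, mul_assoc, mul_self_sqrt d.cast_nonneg, pow_succ]
  simp only [hardGame]
  rw [hε, ← mul_add, div_eq_mul_one_div (1 / _)]
  refine mul_lt_mul_of_pos_left ?_ (by positivity)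
  calc _ ≤ 11 * (P * correlationScale d) := by linarith [h.inv_sqrt_le_correlationScale]
    _ < 1 / (400 * √((N : ℝ) + 1)) := by
      rw [lt_div_iff₀ (by positivity)]
      linarith [h.correlationScale_mul_sqrt_lt]

lemma four_mul_le_exp (h : IsScale d M k P N) (hT : T ≤ P * (d / 32)) :
    4 * (T : ℝ) ≤ exp (correlationScale d ^ 2 * d / 2) := by
  have hd := h.one_lt_d
  have hP : (P : ℝ) ≤ d := by linarith [h.P_le_N, h.N_mul_le]
  have hm : ((d / 32 : ℕ) : ℝ) ≤ d / 32 := Nat.cast_div_le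
  calc 4 * (T : ℝ) ≤ 4 * (P * (d / 32 : ℕ)) := by gcongr; exact_mod_cast hT
    _ ≤ 4 * (d * (d / 32)) := by gcongr
    _ ≤ d ^ 3 := by nlinarith
    _ = exp (correlationScale d ^ 2 * d / 2) := by
      rw [h.correlationScale_sq_mul_d, show 6 * log d / 2 = (3 : ℕ) * log d by push_cast; ring,
        exp_nat_mul, h.exp_log_d]

open scoped Classical Finset in
lemma card_gridVec_almost_orthogonal_le_exp_mul (h : IsScale d M k P N)
    {y : List (EuclideanSpace ℝ (Fin d))} (hy : (hardGame alg k N).IsRobustFamily y) :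
    (#{a : Fin d → Fin (2 * d ^ 5 + 1) |
        ∀ x ∈ y, |⟪gridVec (d ^ 5) a, x⟫| ≤ (hardGame alg k N).η} : ℝ) ≤
      exp (-(k : ℝ)) * Fintype.card (Fin d → Fin (2 * d ^ 5 + 1)) := by
  have hd := h.one_lt_d
  have hκ := h.correlationScale_pos
  have hN := h.N_ge
  have hsqrt : √(d : ℝ) ≤ d := sqrt_le_iff.2 ⟨d.cast_nonneg, le_self_pow₀ hd.le two_ne_zero⟩
  have hL : 4 * d ≤ d ^ 5 := by
    have hd4 : (4 : ℝ) ≤ d ^ 4 := by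
      linarith [le_self_pow₀ hd.le four_ne_zero, h.N_mul_le]
    rw [pow_succ]
    exact Nat.mul_le_mul_right _ (by exact_mod_cast hd4)
  have hLη : 1 < (hardGame alg k N).η * (d ^ 5 : ℕ) := by
    simp only [hardGame]
    rw [one_div_mul_eq_div, lt_div_iff₀ (by positivity), one_mul, Nat.cast_pow,
      show (d : ℝ) ^ 5 = d ^ 3 * (d * d) by ring]
    gcongr
    nlinarith
  have hηβ : 42 * (hardGame alg k N).η * (d * √d) ≤ (hardGame alg k N).β := by
    simp only [hardGame]
    rw [show 42 * (1 / ((d : ℝ) ^ 3 * √d)) * (d * √d) = 42 / (d * d) by field_simp,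
      div_le_div_iff₀ (by positivity) (by positivity)]
    nlinarith [h.sqrt_le_correlationScale_mul, one_le_sqrt.2 hd.le, h.N_mul_le]
  obtain ⟨hlen, hrob, hnorm⟩ := hy
  have hne : y ≠ [] := by
    rintro rfl
    exact absurd h.one_le_k (by simp [← show _ = k from hlen])
  simpa [← show _ = k from hlen] using hrob.card_gridVec_almost_orthogonal_le
    h.isCalibrated_hardGame.η_pos (by simp only [hardGame]; positivity) hL hLη hηβ hnorm hne

open AdaptiveGame

lemma isCompressible_of_isAdmissible (h : IsScale d M k P N)
    {A : Fin (d / 16) → EuclideanSpace ℝ (Fin d)} (hA : ∀ i, ‖A i‖ ≤ 1)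
    {v : ℕ → EuclideanSpace ℝ (Fin d)} (hv : ∀ i, ‖v i‖ ≤ 1)
    (hadm : (hardGame alg k N).IsAdmissible A v (correlationScale d / N) (correlationScale d) T N)
    (hmin : MinimizesConvex d alg T (1 / (d : ℝ) ^ 4)) (hT : 1 ≤ T) (hTm : T ≤ P * (d / 32)) :
    (hardGame alg k N).IsCompressible A v P (d / 32) := by
  have hκ := h.correlationScale_pos
  have hN := h.N_ge
  have hG := h.isCalibrated_hardGame (alg := alg)
  obtain rfl := h.N_eq
  have hreach := hadm.le_play_j_of_minimizesConvex hG hv hA hT hmin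
    (by simp only [hardGame]; apply le_of_eq; field_simp)
    (by
      simp only [hardGame]
      rw [mul_div_cancel₀ _ (by positivity)]
      linarith [h.correlationScale_lt])
    h.hardGame_gap
  exact isCompressible_of_le_play_j hG.η_pos.le hG.γ₁_nonneg h.one_le_k h.one_le_P
    (hreach.trans (run_j_monotone A v _ hTm))

open scoped Classical Finset in
lemma card_isCompressible_pieces_ge (h : IsScale d M k P N)
    {A : Fin (d / 16) → EuclideanSpace ℝ (Fin d)} (hA : ∀ i, ‖A i‖ ≤ 1)
    (hmin : MinimizesConvex d alg T (1 / (d : ℝ) ^ 4)) (hT : 1 ≤ T) (hTm : T ≤ P * (d / 32)) :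
    ((2 ^ d * 2 ^ d : ℝ) /
        (8 * ((2 * ((d * N : ℕ) : ℝ) + 1) ^ (k + N + 1)) ^ 2)) ^ (N + 1) ≤
      #{w : Fin (N + 1) → (Fin d → Bool) × (Fin d → Bool) |
        (hardGame alg k N).IsCompressible A (piecesOfList (List.ofFn (signDiff ∘ w))) P
          (d / 32)} := by
  have hκ := h.correlationScale_pos
  have hN := h.N_ge
  have hδB : √(d : ℝ) ≤ 2 * (correlationScale d / N) * (d * N : ℕ) := by
    rw [show 2 * (correlationScale d / N) * ((d * N : ℕ) : ℝ) = 2 * (correlationScale d * d) by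
      push_cast; field_simp]
    linarith [h.sqrt_le_correlationScale_mul, sqrt_nonneg (d : ℝ)]
  refine (card_isAdmissible_ge (G := hardGame alg k N) (A := A) h.isCalibrated_hardGame h.one_le_k
    h.one_le_d (h.four_mul_le_exp hTm) (by positivity) hδB h.pieceLoss_mul_pow_le).trans ?_
  exact_mod_cast Finset.card_le_card (Finset.monotone_filter_right _ fun w _ hw =>
    h.isCompressible_of_isAdmissible hA (norm_piecesOfList_ofFn_signDiff_le h.one_le_d w) hw
      hmin hT hTm)

open scoped Classical Finset in
lemma card_isCompressible_rows_le (h : IsScale d M k P N) (v : ℕ → EuclideanSpace ℝ (Fin d)) :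
    (#{a : Fin (d / 16) → Fin d → Fin (2 * d ^ 5 + 1) |
        (hardGame alg k N).IsCompressible (gridVec (d ^ 5) ∘ a) v P (d / 32)} : ℝ) ≤
      P * 2 ^ M * ((d / 32 : ℕ) * (2 * ((d / 16 : ℕ) + N + 2)) ^ (d / 32)) *
        (exp (-(k * ((d / 16 : ℕ) - (d / 32 : ℕ)) : ℝ)) *
          (Fintype.card (Fin d → Fin (2 * d ^ 5 + 1)) : ℝ) ^ (d / 16)) := by
  have hN : (N : ℝ) = k * P := by exact_mod_cast h.N_eq
  rw [hN]
  exact card_isCompressible_le (fun y hy => h.card_gridVec_almost_orthogonal_le_exp_mul hy) v P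
    (by omega)

/-- Double counting of the pairs of rows and pieces for which the game is compressible. -/
lemma periods_mul_lt (h : IsScale d M k P N)
    (hmin : MinimizesConvex d alg T (1 / (d : ℝ) ^ 4)) (hT : 1 ≤ T) : P * (d / 32) < T := by
  classical
  by_contra! hTm
  have hcount := Finset.card_nsmul_le_card_nsmul
    (s := (Finset.univ : Finset (Fin (d / 16) → Fin d → Fin (2 * d ^ 5 + 1))))
    (t := (Finset.univ : Finset (Fin (N + 1) → (Fin d → Bool) × (Fin d → Bool))))
    (fun a w => (hardGame alg k N).IsCompressible (gridVec (d ^ 5) ∘ a)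
      (piecesOfList (List.ofFn (signDiff ∘ w))) P (d / 32))
    (fun a _ => h.card_isCompressible_pieces_ge
      (fun i => norm_gridVec_le (d ^ 5) (a i)) hmin hT hTm)
    (fun w _ => h.card_isCompressible_rows_le (piecesOfList (List.ofFn (signDiff ∘ w))))
  simp only [nsmul_eq_mul, Finset.card_univ, Fintype.card_fun, Fintype.card_prod, Fintype.card_fin,
    Fintype.card_bool, Nat.cast_pow, Nat.cast_mul, Nat.cast_ofNat, div_pow] at hcount
  refine hcount.not_gt ?_
  calc _ = ((2 * (d : ℝ) ^ 5 + 1) ^ d) ^ (d / 16) * (2 ^ d * 2 ^ d) ^ (N + 1) *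
        (P * 2 ^ M * ((d / 32 : ℕ) * (2 * ((d / 16 : ℕ) + N + 2)) ^ (d / 32)) *
          exp (-(k * ((d / 16 : ℕ) - (d / 32 : ℕ)) : ℝ))) := by push_cast; ring
    _ < ((2 * (d : ℝ) ^ 5 + 1) ^ d) ^ (d / 16) * (2 ^ d * 2 ^ d) ^ (N + 1) *
        (1 / (8 * ((2 * ((d * N : ℕ) : ℝ) + 1) ^ (k + N + 1)) ^ 2) ^ (N + 1)) :=
      mul_lt_mul_of_pos_left h.compressible_proportion_lt (by positivity)
    _ = _ := by push_cast; ring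

end IsScale

end HardGame

section Tradeoff

open Real

lemma exists_nat_mul_between {a x : ℝ} (ha : 0 < a) (hx : 0 ≤ x) :
    ∃ k : ℕ, x ≤ k * a ∧ k * a ≤ x + a := by
  refine ⟨⌈x / a⌉₊, (div_le_iff₀ ha).1 (Nat.le_ceil _), ?_⟩
  calc ⌈x / a⌉₊ * a ≤ (x / a + 1) * a := by gcongr; exact (Nat.ceil_lt_add_one (by positivity)).le
    _ = x + a := by field_simp

lemma exists_nat_pow_three_between {x : ℝ} (hx : 0 ≤ x) :
    ∃ P : ℕ, (P : ℝ) ^ 3 ≤ x ∧ x < (P + 1) ^ 3 := by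
  have hcbrt : (x ^ (3⁻¹ : ℝ)) ^ 3 = x := rpow_inv_natCast_pow hx three_ne_zero
  refine ⟨⌊x ^ (3⁻¹ : ℝ)⌋₊, ?_, ?_⟩
  · calc _ ≤ (x ^ (3⁻¹ : ℝ)) ^ 3 := by gcongr; exact Nat.floor_le (by positivity)
      _ = x := hcbrt
  · calc x = (x ^ (3⁻¹ : ℝ)) ^ 3 := hcbrt.symm
      _ < _ := by gcongr; exact Nat.lt_floor_add_one _

lemma pos_of_log_pos {d : ℕ} (h : 0 < log d) : (0 : ℝ) < d := by
  refine Nat.cast_pos.2 (Nat.pos_of_ne_zero ?_)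
  rintro rfl
  simp at h

variable {d M T : ℕ}
  {alg : MemAlg M (EuclideanSpace ℝ (Fin d)) (ℝ × EuclideanSpace ℝ (Fin d))}

namespace MinimizesConvex

lemma dim_pow_four_le {k : ℕ} (hL : 1000 ≤ log d) (hdM : d ≤ M)
    (hk : 100 * (M * log d) ≤ k * d) (hdT : d < 2 * T)
    (hmin : MinimizesConvex d alg T (1 / (d : ℝ) ^ 4)) :
    (d : ℝ) ^ 4 ≤ 512000 * (T ^ 3 * (10 ^ 9 * (k * log d))) := by
  have hL₀ : 0 < log d := by linarith
  have hd : (0 : ℝ) < d := pos_of_log_pos hL₀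
  have hM : (0 : ℝ) < M := hd.trans_le (by exact_mod_cast hdM)
  have hk₀ : (0 : ℝ) < k :=
    pos_of_mul_pos_left (lt_of_lt_of_le (by positivity) hk) hd.le
  set D := 10 ^ 9 * (k * log d)
  have hD₀ : 0 < D := by positivity
  obtain ⟨P, hPle, hPlt⟩ := exists_nat_pow_three_between (div_nonneg hd.le hD₀.le)
  rw [le_div_iff₀ hD₀] at hPle
  rw [div_lt_iff₀ hD₀] at hPlt
  rcases Nat.eq_zero_or_pos P with rfl | hP
  · have hdT' : (d : ℝ) ≤ 2 * T := by exact_mod_cast hdT.le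
    calc (d : ℝ) ^ 4 = d ^ 3 * d := by ring
      _ ≤ (2 * T) ^ 3 * D := by gcongr; simpa using hPlt.le
      _ ≤ 512000 * (T ^ 3 * D) := by
        have : 0 ≤ T ^ 3 * D := by positivity
        linarith
  · have hscale : IsScale d M k P (k * P) :=
      { log_ge := hL
        le_memory := hdM
        N_eq := rfl
        one_le_P := hP
        memory_mul_log_le := hk
        N_mul_sq_mul_log_le := by push_cast; linarith }
    have hT : P * ((d : ℝ) / 40) ≤ T := by
      calc P * ((d : ℝ) / 40) ≤ P * (d / 32 : ℕ) := by
            gcongr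
            exact hscale.div_thirty_two_ge
        _ ≤ T := by exact_mod_cast (hscale.periods_mul_lt hmin (by omega)).le
    have hP₁ : (1 : ℝ) ≤ P := by exact_mod_cast hP
    calc (d : ℝ) ^ 4 = d ^ 3 * d := by ring
      _ ≤ d ^ 3 * ((P + P) ^ 3 * D) := by gcongr; exact hPlt.le.trans (by gcongr)
      _ = 512000 * ((P * (d / 40)) ^ 3 * D) := by ring
      _ ≤ 512000 * (T ^ 3 * D) := by gcongr

lemma dim_pow_five_le (hL : 1000 ≤ log d) (hmin : MinimizesConvex d alg T (1 / (d : ℝ) ^ 4)) :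
    (d : ℝ) ^ 5 ≤ (10 ^ 6) ^ 3 * (T ^ 3 * (M * log d ^ 2)) := by
  have hd : (1000 : ℝ) ≤ d := by
    linarith [log_le_sub_one_of_pos (pos_of_log_pos (show 0 < log d by linarith))]
  have hd₂ : 2 ≤ d := by
    have : (2 : ℝ) ≤ d := by linarith
    exact_mod_cast this
  have hsqrt : 2 * √(d : ℝ) < d ^ 4 := by
    have : √(d : ℝ) ≤ d := sqrt_le_iff.2 ⟨d.cast_nonneg, le_self_pow₀ (by linarith) two_ne_zero⟩
    nlinarith [le_self_pow₀ (show 1 ≤ (d : ℝ) by linarith) (three_ne_zero), pow_succ (d : ℝ) 3]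
  have hsqrt₀ : 0 < √(d : ℝ) := sqrt_pos.2 (by linarith)
  have hdM := hmin.dim_le_memory (one_div_lt_one_div_of_lt hsqrt₀ (by linarith))
  have hdT := hmin.dim_lt_two_mul hd₂ (one_div_lt_one_div_of_lt (by positivity) hsqrt)
  have hdM' : (d : ℝ) ≤ M := by exact_mod_cast hdM
  obtain ⟨k, hk, hk'⟩ := exists_nat_mul_between (a := (d : ℝ)) (x := 100 * (M * log d))
    (by linarith) (by positivity)
  have hkd : k * d ≤ 101 * (M * log d) := by nlinarith
  calc (d : ℝ) ^ 5 = d ^ 4 * d := by ring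
    _ ≤ 512000 * (T ^ 3 * (10 ^ 9 * (k * log d))) * d := by
      gcongr
      exact hmin.dim_pow_four_le hL hdM hk hdT
    _ = 512000 * 10 ^ 9 * (T ^ 3 * log d * (k * d)) := by ring
    _ ≤ 512000 * 10 ^ 9 * (T ^ 3 * log d * (101 * (M * log d))) := by
      gcongr ?_ * (_ * ?_)
    _ = 512000 * 10 ^ 9 * 101 * (T ^ 3 * (M * log d ^ 2)) := by ring
    _ ≤ (10 ^ 6) ^ 3 * (T ^ 3 * (M * log d ^ 2)) := by
      gcongr
      norm_num

end MinimizesConvex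

lemma rpow_div_three_pow_three {x : ℝ} (hx : 0 ≤ x) (n : ℕ) :
    (x ^ ((n : ℝ) / 3)) ^ 3 = x ^ n := by
  rw [← rpow_mul_natCast hx, Nat.cast_ofNat, div_mul_cancel₀ _ three_ne_zero, rpow_natCast]

theorem convex_optimization_query_lower_bound_general (hd : exp 1000 ≤ d)
    (hmin : MinimizesConvex d alg T (1 / (d : ℝ) ^ 4)) :
    1 / 10 ^ 6 * (d : ℝ) ^ ((5 : ℝ) / 3) ≤
      T * ((M : ℝ) ^ ((1 : ℝ) / 3) * log d ^ ((2 : ℝ) / 3)) := by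
  have hL : 1000 ≤ log d := (le_log_iff_exp_le ((exp_pos _).trans_le hd)).2 hd
  refine le_of_pow_le_pow_left₀ three_ne_zero (by positivity) ?_
  have h5 := rpow_div_three_pow_three d.cast_nonneg 5
  have h1 := rpow_div_three_pow_three M.cast_nonneg 1
  have h2 := rpow_div_three_pow_three (zero_le_one.trans (by linarith) : 0 ≤ log d) 2
  push_cast at h5 h1 h2
  rw [mul_pow, mul_pow, mul_pow, h5, h1, h2, pow_one]
  linarith [hmin.dim_pow_five_le hL]

end Tradeoff

/-- To minimize `1`-Lipschitz convex functions over the unit ball to accuracy `1/d⁴`,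
any `M`-bit deterministic first-order algorithm (with `M ≥ 1`) must make at least
`Ω(d^{5/3} / ((M + log d)^{1/3} (log d)^{5/3}))` queries. -/
theorem convex_optimization_query_lower_bound :
    ∃ c : ℝ, 0 < c ∧ ∃ d₀ : ℕ, ∀ d : ℕ, d₀ ≤ d →
      ∀ M T : ℕ, 1 ≤ M →
        ∀ alg : MemAlg M (EuclideanSpace ℝ (Fin d)) (ℝ × EuclideanSpace ℝ (Fin d)),
          MinimizesConvex d alg T (1 / (d : ℝ) ^ 4) →
            c * (d : ℝ) ^ ((5 : ℝ) / 3) /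
                (((M : ℝ) + Real.log d) ^ ((1 : ℝ) / 3) * Real.log d ^ ((5 : ℝ) / 3))
              ≤ (T : ℝ) := by
  refine ⟨1 / 10 ^ 6, by norm_num, ⌈Real.exp 1000⌉₊, fun d hd M T _ alg hmin => ?_⟩
  have hd₀ : Real.exp 1000 ≤ d := Nat.ceil_le.1 hd
  have hL : 1000 ≤ Real.log d := (Real.le_log_iff_exp_le ((Real.exp_pos _).trans_le hd₀)).2 hd₀
  refine div_le_of_le_mul₀ (by positivity) T.cast_nonneg
    ((convex_optimization_query_lower_bound_general hd₀ hmin).trans ?_)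
  gcongr <;> linarith
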